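/- Let N and s be integers with 1 ≤ s ≤ N - 2 and set n = N - s. For a subset S ⊆ {0,...,N} with |S| = n + 1, let x_0^S > x_1^S > ... > x_n^S denote the points cos(kπ/N), k ∈ S, in decreasing order, and let Λ(S) = sup { (Σ_{i=0}^n 1/|x - x_i^S|) / |Σ_{j=0}^n (-1)^j/(x - x_j^S)| : x_n^S < x < x_0^S, x ≠ x_i^S for all i }. Then for every such subset S there exists an integer k̄ with 0 ≤ k̄ ≤ N - s - 1 such that Λ(S) ≤ Λ(S_{k̄}), where S_{k̄} = {0,...,k̄} ∪ {k̄+s+1,...,N}; that is, the Lebesgue constant of Berrut's interpolant over (n+1)-element subsets of the Chebyshev points of the second kind is maximized when the s removed points are consecutive. -/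

import Mathlib

open Finset Real

/-- The `i`-th node (in decreasing order) among the Chebyshev points of the second
kind `cos(kπ/N)` with indices in `S`: sorting the indices of `S` increasingly gives
the points in decreasing order since `cos` is decreasing on `[0, π]`. -/
noncomputable def chebNode (N : ℕ) (S : Finset ℕ) (i : ℕ) : ℝ :=
  Real.cos (((S.sort (· ≤ ·)).getD i 0 : ℕ) * Real.pi / N)

/-- The Lebesgue constant of Berrut's rational interpolant at the nodes
`cos(kπ/N), k ∈ S`, taken as the supremum of the Lebesgue function over the
open interval between the extreme nodes. -/
noncomputable def berrutLebesgueConst (N n : ℕ) (S : Finset ℕ) : ℝ :=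
  sSup {L : ℝ | ∃ x : ℝ, chebNode N S n < x ∧ x < chebNode N S 0 ∧
    (∀ i ≤ n, x ≠ chebNode N S i) ∧
    L = (∑ i ∈ Finset.range (n + 1), 1 / |x - chebNode N S i|) /
        |∑ j ∈ Finset.range (n + 1), (-1 : ℝ) ^ j / (x - chebNode N S j)|}

/-!
At a point `x` between two nodes the summands `(-1) ^ j / (x - x_j)` on each side of `x` alternate
in sign, and the node nearest to `x` on the left has the same sign as the nearest one on the right.
Pair the nodes of each side, starting next to `x`, into an inner and an outer node; a node without
partner, farthest from `x`, counts as inner. With `I` and `O` the sums of `1 / |x - x_j|` over the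
inner and the outer nodes, the Lebesgue function is `(I + O) / (I - O)`, so it is maximized by
maximizing `O / I`.

Moving each outer node as close to its inner node as the grid allows, and lone nodes to the
endpoints, raises `O / I`. Now let the angles of the pairs, and `x`, vary continuously, keeping
distance at least `h = π / N` between consecutive angles. By compactness there is a configuration
with the largest possible ratio `ρ`; it maximizes `O - ρ * I`, with value `0`. The log-convexity of
`α ↦ 1 / (cos α - x)` gives the terms of `O - ρ * I` on one side at most one change of sign, which
makes it possible to compare the first-order conditions for shifting a tail of pairs with the one
for moving `x`. They are compatible only if no pair can be shifted towards its endpoint: all pairs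
are flush, so the removed nodes are consecutive. When both sides have a lone node, a hole next to
the flush part of a side can instead be filled by rearranging the grid nodes, which reduces the
number of lone nodes.
-/

namespace Berrut

/-! ### Sums with one change of sign -/

lemma exists_pos_of_lt_of_nonpos_of_le {m : ℕ} {ρ : ℝ} {f g : ℕ → ℝ} (hf : ∀ i < m, 0 < f i)
    (hρ : 0 ≤ ρ) (hratio : ∀ i j, i < j → j < m → g i * f j ≤ g j * f i) (hm : 0 < m)
    (hsum : ∑ i ∈ range m, (f i - ρ * g i) ≤ 0) :
    ∃ t < m, (∀ i < t, 0 ≤ f i - ρ * g i) ∧ ∀ i, t ≤ i → i < m → f i - ρ * g i ≤ 0 := by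
  classical
  have hex : ∃ t, t < m ∧ f t - ρ * g t ≤ 0 := by
    by_contra! h
    exact hsum.not_gt (sum_pos (fun i hi => h i (mem_range.1 hi)) ⟨0, mem_range.2 hm⟩)
  obtain ⟨htm, htle⟩ := Nat.find_spec hex
  refine ⟨Nat.find hex, htm, fun i hi => ?_, fun i hti him => ?_⟩
  · by_contra! h
    exact Nat.find_min hex hi ⟨hi.trans htm, h.le⟩
  · rcases hti.eq_or_lt with rfl | hti
    · exact htle
    set t := Nat.find hex
    have hprod : f t * f i ≤ f t * (ρ * g i) := calc
      f t * f i ≤ ρ * g t * f i :=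
        mul_le_mul_of_nonneg_right (by linarith) (hf i him).le
      _ = ρ * (g t * f i) := by ring
      _ ≤ ρ * (g i * f t) := mul_le_mul_of_nonneg_left (hratio t i hti him) hρ
      _ = f t * (ρ * g i) := by ring
    linarith [le_of_mul_le_mul_left hprod (hf t htm)]

lemma sum_Ico_nonpos_of_sum_range_nonpos {m t j : ℕ} {e : ℕ → ℝ} (hpos : ∀ i < t, 0 ≤ e i)
    (hneg : ∀ i, t ≤ i → i < m → e i ≤ 0) (hsum : ∑ i ∈ range m, e i ≤ 0) (hj : j ≤ m) :
    ∑ i ∈ Ico j m, e i ≤ 0 := by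
  rcases le_total t j with htj | hjt
  · exact sum_nonpos fun i hi => hneg i (htj.trans (mem_Ico.1 hi).1) (mem_Ico.1 hi).2
  · have hhead : 0 ≤ ∑ i ∈ range j, e i :=
      sum_nonneg fun i hi => hpos i ((mem_range.1 hi).trans_le hjt)
    linarith [sum_range_add_sum_Ico e hj]

lemma sum_Ico_mul_sub_mul_neg {m : ℕ} {ρ : ℝ} (hρ : 0 < ρ) {f g l k : ℕ → ℝ}
    (hf : ∀ i < m, 0 < f i) (hg : ∀ i < m, 0 < g i)
    (hratio : ∀ i j, i < j → j < m → g i * f j ≤ g j * f i)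
    (hl : ∀ i < m, 0 ≤ l i) (hlk : ∀ i < m, l i < k i) (hkl : ∀ i j, i < j → j < m → k i ≤ l j)
    (hsum : ∑ i ∈ range m, (f i - ρ * g i) ≤ 0) {j : ℕ} (hj : j < m) :
    ∑ i ∈ Ico j m, (l i * f i - ρ * (k i * g i)) < 0 := by
  obtain ⟨t, htm, hpos, hneg⟩ :=
    exists_pos_of_lt_of_nonpos_of_le hf hρ.le hratio (j.zero_le.trans_lt hj) hsum
  have hterm : ∀ i < m, l i * f i - ρ * (k i * g i) < l t * (f i - ρ * g i) := by
    intro i him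
    have hρg : 0 < ρ * g i := mul_pos hρ (hg i him)
    have hlki := hlk i him
    rcases lt_or_ge i t with hit | hti
    · nlinarith [hkl i t hit htm, hpos i hit]
    · have hlt : l t ≤ l i := by
        rcases hti.eq_or_lt with rfl | hti
        · exact le_rfl
        · exact (hlk t htm).le.trans (hkl t i hti him)
      nlinarith [hneg i hti him]
  calc ∑ i ∈ Ico j m, (l i * f i - ρ * (k i * g i))
      < ∑ i ∈ Ico j m, l t * (f i - ρ * g i) :=
        sum_lt_sum_of_nonempty (nonempty_Ico.2 hj) fun i hi => hterm i (mem_Ico.1 hi).2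
    _ = l t * ∑ i ∈ Ico j m, (f i - ρ * g i) := (mul_sum _ _ _).symm
    _ ≤ 0 := mul_nonpos_of_nonneg_of_nonpos (hl t htm)
        (sum_Ico_nonpos_of_sum_range_nonpos hpos hneg hsum hj.le)

lemma sum_mul_nonpos_of_sum_Ico_nonpos {m : ℕ} {e l : ℕ → ℝ}
    (hl : ∀ i < m, 0 ≤ l i) (hmono : ∀ i, i + 1 < m → l i ≤ l (i + 1))
    (htail : ∀ j < m, ∑ i ∈ Ico j m, e i ≤ 0) : ∑ i ∈ range m, l i * e i ≤ 0 := by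
  have htails : ∀ d j, j + d + 1 = m → ∑ i ∈ Ico j m, l i * e i ≤ l j * ∑ i ∈ Ico j m, e i := by
    intro d
    induction d with
    | zero => rintro j rfl; simp
    | succ d ih =>
      intro j hj
      rw [sum_eq_sum_Ico_succ_bot (by omega : j < m), sum_eq_sum_Ico_succ_bot (by omega : j < m)]
      nlinarith [ih (j + 1) (by omega), hmono j (by omega), htail (j + 1) (by omega)]
  rcases Nat.eq_zero_or_pos m with rfl | hm
  · simp
  · rw [range_eq_Ico]
    exact (htails (m - 1) 0 (by omega)).trans
      (mul_nonpos_of_nonneg_of_nonpos (hl 0 hm) (htail 0 hm))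

/-! ### Monotonicity and convexity from derivatives -/

lemma monotoneOn_of_hasDerivAt_nonneg {D : Set ℝ} (hD : Convex ℝ D) {f f' : ℝ → ℝ}
    (hf : ∀ t ∈ D, HasDerivAt f (f' t) t) (hf' : ∀ t ∈ D, 0 ≤ f' t) : MonotoneOn f D :=
  monotoneOn_of_hasDerivWithinAt_nonneg hD
    (fun t ht => (hf t ht).continuousAt.continuousWithinAt)
    (fun t ht => (hf t (interior_subset ht)).hasDerivWithinAt)
    fun t ht => hf' t (interior_subset ht)

lemma antitoneOn_of_hasDerivAt_nonpos {D : Set ℝ} (hD : Convex ℝ D) {f f' : ℝ → ℝ}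
    (hf : ∀ t ∈ D, HasDerivAt f (f' t) t) (hf' : ∀ t ∈ D, f' t ≤ 0) : AntitoneOn f D :=
  antitoneOn_of_hasDerivWithinAt_nonpos hD
    (fun t ht => (hf t ht).continuousAt.continuousWithinAt)
    (fun t ht => (hf t (interior_subset ht)).hasDerivWithinAt)
    fun t ht => hf' t (interior_subset ht)

lemma strictMonoOn_of_hasDerivAt_pos {D : Set ℝ} (hD : Convex ℝ D) {f f' : ℝ → ℝ}
    (hf : ∀ t ∈ D, HasDerivAt f (f' t) t) (hf' : ∀ t ∈ D, 0 < f' t) : StrictMonoOn f D :=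
  strictMonoOn_of_hasDerivWithinAt_pos hD
    (fun t ht => (hf t ht).continuousAt.continuousWithinAt)
    (fun t ht => (hf t (interior_subset ht)).hasDerivWithinAt)
    fun t ht => hf' t (interior_subset ht)

lemma convexOn_log_of_logDeriv {D : Set ℝ} (hD : Convex ℝ D) {w g g' : ℝ → ℝ}
    (hpos : ∀ t ∈ D, 0 < w t) (hw : ∀ t ∈ D, HasDerivAt w (g t * w t) t)
    (hg : ∀ t ∈ D, HasDerivAt g (g' t) t) (hg' : ∀ t ∈ D, 0 ≤ g' t) :
    ConvexOn ℝ D fun t => log (w t) := by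
  have hlog : ∀ t ∈ D, HasDerivAt (fun t => log (w t)) (g t) t := fun t ht => by
    simpa [mul_div_cancel_right₀ _ (hpos t ht).ne'] using (hw t ht).log (hpos t ht).ne'
  exact convexOn_of_hasDerivWithinAt2_nonneg hD
    (fun t ht => (hlog t ht).continuousAt.continuousWithinAt)
    (fun t ht => (hlog t (interior_subset ht)).hasDerivWithinAt)
    (fun t ht => (hg t (interior_subset ht)).hasDerivWithinAt)
    fun t ht => hg' t (interior_subset ht)

lemma add_le_add_of_convexOn {D : Set ℝ} {f : ℝ → ℝ} (hf : ConvexOn ℝ D f) {s t h : ℝ}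
    (hs : s ∈ D) (hth : t + h ∈ D) (hst : s ≤ t) (hh : 0 ≤ h) :
    f (s + h) + f t ≤ f (t + h) + f s := by
  rcases hst.eq_or_lt with rfl | hst
  · exact le_rfl
  have hpos : 0 < t + h - s := by linarith
  have hle₁ := hf.2 hs hth (div_nonneg (sub_nonneg.2 hst.le) hpos.le) (div_nonneg hh hpos.le)
    (by field_simp; ring)
  have hle₂ := hf.2 hs hth (div_nonneg hh hpos.le) (div_nonneg (sub_nonneg.2 hst.le) hpos.le)
    (by field_simp; ring)
  have hsh : (t - s) / (t + h - s) * s + h / (t + h - s) * (t + h) = s + h := by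
    field_simp; ring
  have ht : h / (t + h - s) * s + (t - s) / (t + h - s) * (t + h) = t := by
    field_simp; ring
  have hsum : (t - s) / (t + h - s) + h / (t + h - s) = 1 := by field_simp; ring
  simp only [smul_eq_mul, hsh, ht] at hle₁ hle₂
  linear_combination hle₁ + hle₂ + (f s + f (t + h)) * hsum

lemma mul_le_mul_of_convexOn_log {D : Set ℝ} {w : ℝ → ℝ} (hw : ConvexOn ℝ D fun t => log (w t))
    (hpos : ∀ t ∈ D, 0 < w t) {s t h : ℝ} (hs : s ∈ D) (hth : t + h ∈ D) (hst : s ≤ t)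
    (hh : 0 ≤ h) : w (s + h) * w t ≤ w (t + h) * w s := by
  have hsh : s + h ∈ D := hw.1.ordConnected.out hs hth ⟨by linarith, by linarith⟩
  have ht : t ∈ D := hw.1.ordConnected.out hs hth ⟨hst, by linarith⟩
  have hlog := add_le_add_of_convexOn hw hs hth hst hh
  rw [← log_mul (hpos _ hsh).ne' (hpos _ ht).ne',
    ← log_mul (hpos _ hth).ne' (hpos _ hs).ne'] at hlog
  exact (log_le_log_iff (mul_pos (hpos _ hsh) (hpos _ ht))
    (mul_pos (hpos _ hth) (hpos _ hs))).1 hlog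

/-! ### Weights of a node seen from a point -/

/-- The angles in `[0, π]` whose cosine lies to the right of `x`. -/
def visibleArc (x : ℝ) : Set ℝ := {t | t ∈ Set.Icc 0 π ∧ x < cos t}

/-- The modulus of the term of Berrut's denominator at `x` coming from a node at angle `α`. -/
noncomputable def nodeWeight (x α : ℝ) : ℝ := (cos α - x)⁻¹

/-- The derivative of `nodeWeight x` in the angle. -/
noncomputable def nodeWeightDeriv (x α : ℝ) : ℝ := sin α / (cos α - x) ^ 2

/-- The derivative of `√(1 - x²) * nodeWeight x α` in `x`, multiplied by `√(1 - x²)`. -/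
noncomputable def sqrtWeightDeriv (x α : ℝ) : ℝ := (1 - x * cos α) / (cos α - x) ^ 2

/-- The derivative of `(1 + x) * nodeWeight x α` in `x`. -/
noncomputable def linWeightDeriv (x α : ℝ) : ℝ := (1 + cos α) / (cos α - x) ^ 2

lemma mem_visibleArc {x t : ℝ} (h0 : 0 ≤ t) (hπ : t ≤ π) (hx : x < cos t) : t ∈ visibleArc x :=
  ⟨⟨h0, hπ⟩, hx⟩

lemma mem_visibleArc_of_le {x s t : ℝ} (ht : t ∈ visibleArc x) (h0 : 0 ≤ s) (hst : s ≤ t) :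
    s ∈ visibleArc x :=
  ⟨⟨h0, hst.trans ht.1.2⟩, ht.2.trans_le (cos_le_cos_of_nonneg_of_le_pi h0 ht.1.2 hst)⟩

lemma convex_visibleArc (x : ℝ) : Convex ℝ (visibleArc x) :=
  Set.OrdConnected.convex
    ⟨fun _ hs _ ht _ hr => mem_visibleArc_of_le ht (hs.1.1.trans hr.1) hr.2⟩

section VisibleArc

variable {x t : ℝ}

lemma one_sub_mul_cos_pos (hx : -1 < x) (ht : t ∈ visibleArc x) : 0 < 1 - x * cos t := by
  nlinarith [cos_le_one t, ht.2]

lemma nodeWeight_pos (ht : t ∈ visibleArc x) : 0 < nodeWeight x t :=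
  inv_pos.2 (sub_pos.2 ht.2)

lemma sqrtWeightDeriv_pos (hx : -1 < x) (ht : t ∈ visibleArc x) : 0 < sqrtWeightDeriv x t :=
  div_pos (one_sub_mul_cos_pos hx ht) (pow_pos (sub_pos.2 ht.2) 2)

lemma linWeightDeriv_pos (hx : -1 < x) (ht : t ∈ visibleArc x) : 0 < linWeightDeriv x t :=
  div_pos (by linarith [ht.2]) (pow_pos (sub_pos.2 ht.2) 2)

lemma hasDerivAt_cos_sub (x t : ℝ) : HasDerivAt (fun t => cos t - x) (-sin t) t :=
  (hasDerivAt_cos t).sub_const x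

lemma hasDerivAt_one_sub_mul_cos (x t : ℝ) :
    HasDerivAt (fun t => 1 - x * cos t) (x * sin t) t :=
  (((hasDerivAt_cos t).const_mul x).const_sub 1).congr_deriv (by ring)

lemma hasDerivAt_nodeWeight (ht : cos t ≠ x) : HasDerivAt (nodeWeight x) (nodeWeightDeriv x t) t :=
  ((hasDerivAt_cos_sub x t).inv (sub_ne_zero.2 ht)).congr_deriv (by rw [neg_neg, nodeWeightDeriv])

lemma hasDerivAt_sin_div_cos_sub (ht : cos t ≠ x) :
    HasDerivAt (fun t => sin t / (cos t - x)) (sqrtWeightDeriv x t) t := by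
  refine ((hasDerivAt_sin t).div (hasDerivAt_cos_sub x t) (sub_ne_zero.2 ht)).congr_deriv ?_
  rw [sqrtWeightDeriv]
  congr 1
  linear_combination sin_sq_add_cos_sq t

lemma hasDerivAt_sin_div_one_sub_mul_cos (ht : 1 - x * cos t ≠ 0) :
    HasDerivAt (fun t => sin t / (1 - x * cos t)) ((cos t - x) / (1 - x * cos t) ^ 2) t := by
  refine ((hasDerivAt_sin t).div (hasDerivAt_one_sub_mul_cos x t) ht).congr_deriv ?_
  congr 1
  linear_combination -x * sin_sq_add_cos_sq t

lemma hasDerivAt_sin_div_one_add_cos (ht : 1 + cos t ≠ 0) :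
    HasDerivAt (fun t => sin t / (1 + cos t)) ((1 + cos t)⁻¹) t := by
  refine ((hasDerivAt_sin t).div ((hasDerivAt_cos t).const_add 1) ht).congr_deriv ?_
  field_simp
  linear_combination sin_sq_add_cos_sq t

lemma convexOn_log_nodeWeight (hx : -1 < x) :
    ConvexOn ℝ (visibleArc x) fun t => log (nodeWeight x t) := by
  refine convexOn_log_of_logDeriv (convex_visibleArc x) (fun t => nodeWeight_pos)
    (g := fun t => sin t / (cos t - x)) (fun t ht => ?_)
    (fun t ht => hasDerivAt_sin_div_cos_sub ht.2.ne') fun t ht => (sqrtWeightDeriv_pos hx ht).le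
  refine (hasDerivAt_nodeWeight ht.2.ne').congr_deriv ?_
  rw [nodeWeight, nodeWeightDeriv, pow_two, ← div_div, div_eq_mul_inv _ (cos t - x)]

lemma cos_sub_le_one_sub_mul_cos (hx : -1 ≤ x) : cos t - x ≤ 1 - x * cos t := by
  nlinarith [cos_le_one t]

lemma convexOn_log_sqrtWeightDeriv (hx : -1 < x) :
    ConvexOn ℝ (visibleArc x) fun t => log (sqrtWeightDeriv x t) := by
  refine convexOn_log_of_logDeriv (convex_visibleArc x) (fun t => sqrtWeightDeriv_pos hx)
    (g := fun t => x * (sin t / (1 - x * cos t)) + 2 * (sin t / (cos t - x)))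
    (fun t ht => ?_) (fun t ht => ((hasDerivAt_sin_div_one_sub_mul_cos
        (one_sub_mul_cos_pos hx ht).ne').const_mul x).add
      ((hasDerivAt_sin_div_cos_sub ht.2.ne').const_mul 2)) fun t ht => ?_
  · have hnum := (one_sub_mul_cos_pos hx ht).ne'
    have hden := (sub_pos.2 ht.2).ne'
    refine ((hasDerivAt_one_sub_mul_cos x t).div ((hasDerivAt_cos_sub x t).pow 2)
      (pow_ne_zero 2 hden)).congr_deriv ?_
    simp only [sqrtWeightDeriv, Pi.pow_apply]
    field_simp
    push_cast
    ring
  · have hnum := one_sub_mul_cos_pos hx ht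
    have hden := sub_pos.2 ht.2
    have hle := cos_sub_le_one_sub_mul_cos hx.le (t := t)
    have hcmp : (cos t - x) / (1 - x * cos t) ^ 2 ≤ sqrtWeightDeriv x t := by
      unfold sqrtWeightDeriv
      gcongr
    have hnonneg : 0 ≤ (cos t - x) / (1 - x * cos t) ^ 2 := by positivity
    nlinarith

lemma convexOn_log_linWeightDeriv (hx : -1 < x) :
    ConvexOn ℝ (visibleArc x) fun t => log (linWeightDeriv x t) := by
  have hone : ∀ t ∈ visibleArc x, 0 < 1 + cos t := fun t ht => by linarith [ht.2]
  refine convexOn_log_of_logDeriv (convex_visibleArc x) (fun t => linWeightDeriv_pos hx)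
    (g := fun t => 2 * (sin t / (cos t - x)) - sin t / (1 + cos t))
    (fun t ht => ?_) (fun t ht => ((hasDerivAt_sin_div_cos_sub ht.2.ne').const_mul 2).sub
      (hasDerivAt_sin_div_one_add_cos (hone t ht).ne')) fun t ht => ?_
  · have hnum := (hone t ht).ne'
    have hden := (sub_pos.2 ht.2).ne'
    refine (((hasDerivAt_cos t).const_add 1).div ((hasDerivAt_cos_sub x t).pow 2)
      (pow_ne_zero 2 hden)).congr_deriv ?_
    simp only [linWeightDeriv, Pi.pow_apply]
    field_simp
    ring
  · have hden := sub_pos.2 ht.2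
    have hsq : (cos t - x) ^ 2 ≤ (1 - x * cos t) * (1 + cos t) := by
      nlinarith [cos_sub_le_one_sub_mul_cos hx.le (t := t), one_sub_mul_cos_pos hx ht]
    have hcmp : (1 + cos t)⁻¹ ≤ sqrtWeightDeriv x t := by
      rw [sqrtWeightDeriv, ← one_div, div_le_div_iff₀ (hone t ht) (pow_pos hden 2), one_mul]
      exact hsq
    linarith [sqrtWeightDeriv_pos hx ht]

end VisibleArc

/-! ### Paired configurations on one side of the evaluation point -/

/-- The sum `∑ (w (a i) - ρ w (a i + h))` over the pairs with indices in `[j, m)`. -/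
noncomputable def pairSum (ρ h : ℝ) (w : ℝ → ℝ) (a : ℕ → ℝ) (j m : ℕ) : ℝ :=
  ∑ i ∈ Ico j m, (w (a i) - ρ * w (a i + h))

/-- A continuous relaxation of the nodes on the right of `x`: `m` pairs consisting of an outer
node at angle `a i` and an inner node at angle `a i + h`, preceded by `σ` lone nodes that occupy
the first `σ` multiples of `h`. Consecutive angles are at least `h` apart. -/
structure PairConfig (h x : ℝ) (σ m : ℕ) (a : ℕ → ℝ) : Prop where
  start : ∀ i < m, σ * h ≤ a i
  gap : ∀ i, i + 1 < m → a i + 2 * h ≤ a (i + 1)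
  le_pi : ∀ i < m, a i + h ≤ π
  lt_cos : ∀ i < m, x < cos (a i + h)
  lt_one : x < 1

/-- The sum of the outer weights minus `ρ` times the sum of the inner weights of a configuration,
where the lone nodes, sitting at angle `0`, count as inner. -/
noncomputable def sideValue (ρ h x : ℝ) (σ m : ℕ) (a : ℕ → ℝ) : ℝ :=
  pairSum ρ h (nodeWeight x) a 0 m - σ * (ρ * nodeWeight x 0)

lemma pairSum_congr_angle {a a' : ℕ → ℝ} {m : ℕ} (haa' : ∀ i < m, a i = a' i) (ρ h : ℝ)
    (w : ℝ → ℝ) (j : ℕ) : pairSum ρ h w a j m = pairSum ρ h w a' j m :=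
  sum_congr rfl fun i hi => by rw [haa' i (mem_Ico.1 hi).2]

lemma sideValue_congr_angle {a a' : ℕ → ℝ} {m : ℕ} (haa' : ∀ i < m, a i = a' i) (ρ h x : ℝ)
    (σ : ℕ) : sideValue ρ h x σ m a = sideValue ρ h x σ m a' := by
  rw [sideValue, sideValue, pairSum_congr_angle haa']

lemma pairSum_const_mul (ρ h c : ℝ) (w : ℝ → ℝ) (a : ℕ → ℝ) (j m : ℕ) :
    pairSum ρ h (fun t => c * w t) a j m = c * pairSum ρ h w a j m := by
  simp only [pairSum, mul_sum]
  exact sum_congr rfl fun i _ => by ring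

lemma pairSum_add_mul (ρ h c d : ℝ) (v w : ℝ → ℝ) (a : ℕ → ℝ) (j m : ℕ) :
    pairSum ρ h (fun t => c * v t + d * w t) a j m =
      c * pairSum ρ h v a j m + d * pairSum ρ h w a j m := by
  simp only [pairSum, mul_sum, ← sum_add_distrib]
  exact sum_congr rfl fun i _ => by ring

namespace PairConfig

variable {h x ρ : ℝ} {σ m : ℕ} {a : ℕ → ℝ}

lemma congr_angle {a' : ℕ → ℝ} (A : PairConfig h x σ m a) (haa' : ∀ i < m, a i = a' i) :
    PairConfig h x σ m a' where
  start i hi := haa' i hi ▸ A.start i hi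
  gap i hi := haa' i (by omega) ▸ haa' (i + 1) hi ▸ A.gap i hi
  le_pi i hi := haa' i hi ▸ A.le_pi i hi
  lt_cos i hi := haa' i hi ▸ A.lt_cos i hi
  lt_one := A.lt_one

lemma add_two_mul_le (A : PairConfig h x σ m a) (hh : 0 < h) :
    ∀ i j, i < j → j < m → a i + 2 * h ≤ a j := by
  intro i j hij
  induction j, hij using Nat.le_induction with
  | base => exact A.gap i
  | succ j _ ih => exact fun hj => by linarith [A.gap j hj, ih (by omega)]

lemma index_mul_le (A : PairConfig h x σ m a) : ∀ i < m, ((σ : ℝ) + 2 * i) * h ≤ a i := by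
  intro i
  induction i with
  | zero => simpa using A.start 0
  | succ i ih =>
    intro hi
    push_cast
    linarith [A.gap i hi, ih (by omega)]

lemma nonneg (A : PairConfig h x σ m a) (hh : 0 < h) {i : ℕ} (hi : i < m) : 0 ≤ a i :=
  le_trans (by positivity) (A.index_mul_le i hi)

lemma inner_mem (A : PairConfig h x σ m a) (hh : 0 < h) {i : ℕ} (hi : i < m) :
    a i + h ∈ visibleArc x :=
  mem_visibleArc (by linarith [A.nonneg hh hi]) (A.le_pi i hi) (A.lt_cos i hi)

lemma outer_mem (A : PairConfig h x σ m a) (hh : 0 < h) {i : ℕ} (hi : i < m) :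
    a i ∈ visibleArc x :=
  mem_visibleArc_of_le (A.inner_mem hh hi) (A.nonneg hh hi) (by linarith)

lemma lt_pi (A : PairConfig h x σ m a) (hx : -1 < x) {i : ℕ} (hi : i < m) : a i + h < π := by
  refine lt_of_le_of_ne (A.le_pi i hi) fun heq => ?_
  have hcos := A.lt_cos i hi
  rw [heq, cos_pi] at hcos
  linarith

lemma pairSum_congr (A : PairConfig h x σ m a) (hh : 0 < h) {v w : ℝ → ℝ}
    (hvw : ∀ t ∈ visibleArc x, v t = w t) (j : ℕ) :
    pairSum ρ h v a j m = pairSum ρ h w a j m :=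
  sum_congr rfl fun i hi => by
    rw [hvw _ (A.outer_mem hh (mem_Ico.1 hi).2), hvw _ (A.inner_mem hh (mem_Ico.1 hi).2)]

lemma pairSum_neg_of_mul_eq (A : PairConfig h x σ m a) (hh : 0 < h) (hρ : 0 < ρ)
    {w l v : ℝ → ℝ} (hlw : ∀ t ∈ visibleArc x, l t * w t = v t)
    (hw : ∀ t ∈ visibleArc x, 0 < w t) (hlog : ConvexOn ℝ (visibleArc x) fun t => log (w t))
    (hl : ∀ t ∈ visibleArc x, 0 ≤ l t) (hmono : StrictMonoOn l (visibleArc x))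
    (hsum : pairSum ρ h w a 0 m ≤ 0) {j : ℕ} (hj : j < m) :
    pairSum ρ h v a j m < 0 := by
  rw [← A.pairSum_congr hh hlw]
  rw [pairSum, ← range_eq_Ico] at hsum
  refine sum_Ico_mul_sub_mul_neg hρ (f := fun i => w (a i)) (g := fun i => w (a i + h))
    (l := fun i => l (a i)) (k := fun i => l (a i + h)) (fun i hi => hw _ (A.outer_mem hh hi))
    (fun i hi => hw _ (A.inner_mem hh hi)) (fun i j hij hj => ?_)
    (fun i hi => hl _ (A.outer_mem hh hi)) (fun i hi => ?_) (fun i j hij hj => ?_) hsum hj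
  · exact mul_le_mul_of_convexOn_log hlog hw (A.outer_mem hh (hij.trans hj)) (A.inner_mem hh hj)
      (by linarith [A.add_two_mul_le hh i j hij hj]) hh.le
  · exact hmono (A.outer_mem hh hi) (A.inner_mem hh hi) (by linarith)
  · exact hmono.monotoneOn (A.inner_mem hh (hij.trans hj)) (A.outer_mem hh hj)
      (by linarith [A.add_two_mul_le hh i j hij hj])

lemma sqrtWeightDeriv_tail_neg (A : PairConfig h x σ m a) (hh : 0 < h) (hx : -1 < x)
    (hρ : 0 < ρ) (hsum : pairSum ρ h (nodeWeight x) a 0 m ≤ 0) {j : ℕ} (hj : j < m) :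
    pairSum ρ h (sqrtWeightDeriv x) a j m < 0 := by
  have hx1 := A.lt_one
  refine A.pairSum_neg_of_mul_eq hh hρ (l := fun t => (1 - x * cos t) / (cos t - x))
    (fun t _ => ?_) (fun t => nodeWeight_pos) (convexOn_log_nodeWeight hx)
    (fun t ht => (div_pos (one_sub_mul_cos_pos hx ht) (sub_pos.2 ht.2)).le)
    (fun s hs t ht hst => ?_) hsum hj
  · rw [nodeWeight, sqrtWeightDeriv, pow_two, ← div_div, ← div_eq_mul_inv]
  · have hcos := cos_lt_cos_of_nonneg_of_le_pi hs.1.1 ht.1.2 hst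
    have hsq : 0 < 1 - x ^ 2 := by nlinarith
    change (1 - x * cos s) / (cos s - x) < (1 - x * cos t) / (cos t - x)
    rw [div_lt_div_iff₀ (sub_pos.2 hs.2) (sub_pos.2 ht.2)]
    nlinarith

lemma nodeWeightDeriv_tail_neg_of_sqrt (A : PairConfig h x σ m a) (hh : 0 < h) (hx : -1 < x)
    (hρ : 0 < ρ) (hsum : pairSum ρ h (sqrtWeightDeriv x) a 0 m ≤ 0) {j : ℕ} (hj : j < m) :
    pairSum ρ h (nodeWeightDeriv x) a j m < 0 := by
  refine A.pairSum_neg_of_mul_eq hh hρ (l := fun t => sin t / (1 - x * cos t)) (fun t ht => ?_)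
    (fun t => sqrtWeightDeriv_pos hx) (convexOn_log_sqrtWeightDeriv hx)
    (fun t ht => div_nonneg (sin_nonneg_of_nonneg_of_le_pi ht.1.1 ht.1.2)
      (one_sub_mul_cos_pos hx ht).le)
    (strictMonoOn_of_hasDerivAt_pos (convex_visibleArc x)
      (fun t ht => hasDerivAt_sin_div_one_sub_mul_cos (one_sub_mul_cos_pos hx ht).ne')
      fun t ht => div_pos (sub_pos.2 ht.2) (pow_pos (one_sub_mul_cos_pos hx ht) 2)) hsum hj
  have hnum := (one_sub_mul_cos_pos hx ht).ne'
  rw [sqrtWeightDeriv, nodeWeightDeriv, div_mul_div_cancel₀ hnum]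

lemma nodeWeightDeriv_tail_neg_of_lin (A : PairConfig h x σ m a) (hh : 0 < h) (hx : -1 < x)
    (hρ : 0 < ρ) (hsum : pairSum ρ h (linWeightDeriv x) a 0 m ≤ 0) {j : ℕ} (hj : j < m) :
    pairSum ρ h (nodeWeightDeriv x) a j m < 0 := by
  have hone : ∀ t ∈ visibleArc x, 0 < 1 + cos t := fun t ht => by linarith [ht.2]
  refine A.pairSum_neg_of_mul_eq hh hρ (l := fun t => sin t / (1 + cos t)) (fun t ht => ?_)
    (fun t => linWeightDeriv_pos hx) (convexOn_log_linWeightDeriv hx)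
    (fun t ht => div_nonneg (sin_nonneg_of_nonneg_of_le_pi ht.1.1 ht.1.2) (hone t ht).le)
    (strictMonoOn_of_hasDerivAt_pos (convex_visibleArc x)
      (fun t ht => hasDerivAt_sin_div_one_add_cos (hone t ht).ne')
      fun t ht => inv_pos.2 (hone t ht)) hsum hj
  rw [linWeightDeriv, nodeWeightDeriv, div_mul_div_cancel₀ (hone t ht).ne']

end PairConfig

/-- The angle of the `i`-th outer node when all nodes are pushed against the lone nodes. -/
noncomputable def flushAngle (h : ℝ) (σ i : ℕ) : ℝ := (σ + 2 * i) * h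

lemma flushAngle_add_one (h : ℝ) (σ i : ℕ) :
    flushAngle h σ (i + 1) = flushAngle h σ i + 2 * h := by
  simp only [flushAngle, Nat.cast_add, Nat.cast_one]
  ring

@[simp] lemma flushAngle_zero_zero (h : ℝ) : flushAngle h 0 0 = 0 := by simp [flushAngle]

lemma flushAngle_nonneg {h : ℝ} (hh : 0 ≤ h) (σ i : ℕ) : 0 ≤ flushAngle h σ i := by
  unfold flushAngle
  positivity

lemma flushAngle_mono {h : ℝ} (hh : 0 ≤ h) (σ : ℕ) : Monotone (flushAngle h σ) :=
  monotone_nat_of_le_succ fun i => by linarith [flushAngle_add_one h σ i]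

lemma pairSum_add_one (ρ h : ℝ) (w : ℝ → ℝ) (a : ℕ → ℝ) (m : ℕ) :
    pairSum ρ h w a 0 (m + 1) = pairSum ρ h w a 0 m + (w (a m) - ρ * w (a m + h)) :=
  sum_Ico_succ_top m.zero_le _

/-! ### Differential inequalities and sums along a grid -/

lemma hasDerivAt_exp_mul (κ t : ℝ) : HasDerivAt (fun t => exp (κ * t)) (exp (κ * t) * κ) t := by
  simpa using ((hasDerivAt_id t).const_mul κ).exp

lemma le_exp_mul_of_hasDerivAt_le {D : Set ℝ} (hD : Convex ℝ D) {κ : ℝ} {f f' : ℝ → ℝ}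
    (hf : ∀ t ∈ D, HasDerivAt f (f' t) t) (hle : ∀ t ∈ D, f' t ≤ κ * f t) {s t : ℝ}
    (hs : s ∈ D) (ht : t ∈ D) (hst : s ≤ t) : f t ≤ exp (κ * (t - s)) * f s := by
  have hanti : AntitoneOn (fun t => exp (-κ * t) * f t) D :=
    antitoneOn_of_hasDerivAt_nonpos hD
      (fun t ht => (hasDerivAt_exp_mul (-κ) t).mul (hf t ht)) fun t ht => by
        linarith [mul_le_mul_of_nonneg_left (hle t ht) (exp_pos (-κ * t)).le]
  calc f t = exp (κ * t) * (exp (-κ * t) * f t) := by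
        rw [← mul_assoc, ← exp_add, neg_mul, add_neg_cancel, exp_zero, one_mul]
    _ ≤ exp (κ * t) * (exp (-κ * s) * f s) :=
        mul_le_mul_of_nonneg_left (hanti hs ht hst) (exp_pos _).le
    _ = exp (κ * (t - s)) * f s := by
        rw [← mul_assoc, ← exp_add]
        ring_nf

lemma convexOn_of_hasDerivAt_of_monotoneOn {D : Set ℝ} (hD : Convex ℝ D) {f f' : ℝ → ℝ}
    (hf : ∀ t ∈ D, HasDerivAt f (f' t) t) (hf' : MonotoneOn f' D) : ConvexOn ℝ D f :=
  MonotoneOn.convexOn_of_deriv hD (fun t ht => (hf t ht).continuousAt.continuousWithinAt)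
    (fun t ht => (hf t (interior_subset ht)).differentiableAt.differentiableWithinAt)
    fun s hs t ht hst => by
      rw [(hf s (interior_subset hs)).deriv, (hf t (interior_subset ht)).deriv]
      exact hf' (interior_subset hs) (interior_subset ht) hst

lemma mul_add_le_exp_mul_of_deriv2_le {κ s : ℝ} {g f f₁ f₂ : ℝ → ℝ} (hs : 0 ≤ s)
    (hg : ∀ t ∈ Set.Icc 0 s, HasDerivAt g (f t) t)
    (hf : ∀ t ∈ Set.Icc 0 s, HasDerivAt f (f₁ t) t)
    (hf₁ : ∀ t ∈ Set.Icc 0 s, HasDerivAt f₁ (f₂ t) t)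
    (hle : ∀ t ∈ Set.Icc 0 s, f₂ t ≤ κ ^ 2 * f t) (hg0 : g 0 = 0) (hf₁0 : f₁ 0 = 0) :
    κ * g s + f s ≤ exp (κ * s) * f 0 := by
  have hD : Convex ℝ (Set.Icc 0 s) := convex_Icc 0 s
  have h0 : (0 : ℝ) ∈ Set.Icc 0 s := Set.left_mem_Icc.2 hs
  have hf₁_le : ∀ t ∈ Set.Icc 0 s, f₁ t - κ ^ 2 * g t ≤ 0 := fun t ht => by
    simpa [hg0, hf₁0] using antitoneOn_of_hasDerivAt_nonpos hD
      (fun t ht => (hf₁ t ht).sub ((hg t ht).const_mul (κ ^ 2)))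
      (fun t ht => sub_nonpos.2 (hle t ht)) h0 ht ht.1
  simpa [hg0] using le_exp_mul_of_hasDerivAt_le hD (κ := κ)
    (fun t ht => ((hg t ht).const_mul κ).add (hf t ht))
    (fun t ht => show _ ≤ κ * (κ * g t + f t) by linarith [hf₁_le t ht]) h0
    (Set.right_mem_Icc.2 hs) hs

section Grid

variable {F F₁ F₂ G : ℝ → ℝ} {κ B : ℝ}

lemma mul_sub_add_add_le_of_deriv2_le
    (hG : ∀ t ∈ Set.Icc 0 B, HasDerivAt G (F t) t)
    (hF : ∀ t ∈ Set.Icc 0 B, HasDerivAt F (F₁ t) t)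
    (hF₁ : ∀ t ∈ Set.Icc 0 B, HasDerivAt F₁ (F₂ t) t)
    (hle : ∀ t ∈ Set.Icc 0 B, F₂ t ≤ κ ^ 2 * F t) {M s : ℝ} (hs : 0 ≤ s) (hsM : s ≤ M)
    (hMB : M + s ≤ B) :
    κ * (G (M + s) - G (M - s)) + (F (M + s) + F (M - s)) ≤ 2 * (exp (κ * s) * F M) := by
  have hadd : ∀ t ∈ Set.Icc 0 s, M + t ∈ Set.Icc 0 B := fun t ht =>
    ⟨by linarith [ht.1], by linarith [ht.2]⟩
  have hsub : ∀ t ∈ Set.Icc 0 s, M - t ∈ Set.Icc 0 B := fun t ht =>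
    ⟨by linarith [ht.2], by linarith [ht.1]⟩
  have hsym := mul_add_le_exp_mul_of_deriv2_le (κ := κ)
    (g := fun t => G (M + t) - G (M - t)) (f := fun t => F (M + t) + F (M - t))
    (f₁ := fun t => F₁ (M + t) - F₁ (M - t)) (f₂ := fun t => F₂ (M + t) + F₂ (M - t)) hs
    (fun t ht => (((hG _ (hadd t ht)).comp_const_add M t).sub
      ((hG _ (hsub t ht)).comp_const_sub M t)).congr_deriv (by ring))
    (fun t ht => (((hF _ (hadd t ht)).comp_const_add M t).add
      ((hF _ (hsub t ht)).comp_const_sub M t)).congr_deriv (by ring))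
    (fun t ht => (((hF₁ _ (hadd t ht)).comp_const_add M t).sub
      ((hF₁ _ (hsub t ht)).comp_const_sub M t)).congr_deriv (by ring))
    (fun t ht => by linarith [hle _ (hadd t ht), hle _ (hsub t ht)]) (by simp) (by simp)
  simp only [add_zero, sub_zero] at hsym
  linarith

lemma deriv_le_mul_of_deriv2_le (hκ : 0 ≤ κ)
    (hF : ∀ t ∈ Set.Icc 0 B, HasDerivAt F (F₁ t) t)
    (hF₁ : ∀ t ∈ Set.Icc 0 B, HasDerivAt F₁ (F₂ t) t)
    (hle : ∀ t ∈ Set.Icc 0 B, F₂ t ≤ κ ^ 2 * F t) (hF0 : 0 ≤ F 0) (hF₁0 : F₁ 0 = 0) :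
    ∀ t ∈ Set.Icc 0 B, F₁ t ≤ κ * F t := by
  intro t ht
  have hexp := le_exp_mul_of_hasDerivAt_le (convex_Icc 0 B) (κ := -κ)
    (fun t ht => (hF₁ t ht).sub ((hF t ht).const_mul κ))
    (fun t ht => show _ ≤ -κ * (F₁ t - κ * F t) by linarith [hle t ht])
    (Set.left_mem_Icc.2 (ht.1.trans ht.2)) ht ht.1
  refine sub_nonpos.1 (hexp.trans (mul_nonpos_of_nonneg_of_nonpos (exp_pos _).le ?_))
  simp only [Pi.sub_apply, hF₁0, zero_sub]
  exact neg_nonpos.2 (mul_nonneg hκ hF0)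

variable {h ρ : ℝ}

lemma mul_le_two_mul_pairSum_of_deriv2_le (hκ : 0 ≤ κ) (hρ : 0 ≤ ρ) (hh : 0 ≤ h)
    (hρκ : ρ * exp (κ * h) ≤ 1)
    (hG : ∀ t ∈ Set.Icc 0 B, HasDerivAt G (F t) t)
    (hF : ∀ t ∈ Set.Icc 0 B, HasDerivAt F (F₁ t) t)
    (hF₁ : ∀ t ∈ Set.Icc 0 B, HasDerivAt F₁ (F₂ t) t)
    (hle : ∀ t ∈ Set.Icc 0 B, F₂ t ≤ κ ^ 2 * F t) (hF_nonneg : ∀ t ∈ Set.Icc 0 B, 0 ≤ F t)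
    (hG0 : G 0 = 0) (hF₁0 : F₁ 0 = 0) (k : ℕ) (hB : flushAngle h 0 k + h ≤ B) :
    ρ * (κ * G (flushAngle h 0 k + h) + F 0 - F (flushAngle h 0 k + h)) ≤
      2 * pairSum ρ h F (flushAngle h 0) 0 (k + 1) := by
  have hρF : ∀ M ∈ Set.Icc 0 B, ρ * (exp (κ * h) * F M) ≤ F M := fun M hM => by
    rw [← mul_assoc]
    exact mul_le_of_le_one_left (hF_nonneg M hM) hρκ
  induction k with
  | zero =>
    rw [pairSum_add_one]
    simp only [flushAngle_zero_zero, zero_add] at hB ⊢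
    have hsub : Set.Icc 0 h ⊆ Set.Icc 0 B := Set.Icc_subset_Icc_right hB
    have hstep := mul_le_mul_of_nonneg_left (mul_add_le_exp_mul_of_deriv2_le hh
      (fun t ht => hG t (hsub ht)) (fun t ht => hF t (hsub ht)) (fun t ht => hF₁ t (hsub ht))
      (fun t ht => hle t (hsub ht)) hG0 hF₁0) hρ
    have h0 : (0 : ℝ) ∈ Set.Icc 0 B := hsub (Set.left_mem_Icc.2 hh)
    have hρ1 : ρ * F 0 ≤ F 0 := mul_le_of_le_one_left (hF_nonneg 0 h0)
      ((le_mul_of_one_le_right hρ (one_le_exp (mul_nonneg hκ hh))).trans hρκ)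
    simp only [pairSum, Ico_self, sum_empty]
    linarith [hρF 0 h0]
  | succ k ih =>
    rw [pairSum_add_one]
    have hnext := flushAngle_add_one h 0 k
    have hk := flushAngle_nonneg hh 0 k
    have hstep := mul_le_mul_of_nonneg_left (mul_sub_add_add_le_of_deriv2_le hG hF hF₁ hle
      (M := flushAngle h 0 (k + 1)) hh (by linarith) hB) hρ
    rw [show flushAngle h 0 (k + 1) - h = flushAngle h 0 k + h by linarith] at hstep
    linarith [ih (by linarith), hρF (flushAngle h 0 (k + 1)) ⟨by linarith, by linarith⟩]

lemma mul_sub_le_sub_of_deriv_le {H : ℝ → ℝ} (hκ : 0 ≤ κ) (hρ : 0 ≤ ρ) (hh : 0 ≤ h)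
    (hρκ : ρ * exp (κ * h) ≤ 1) (hH : ∀ t, H t = κ * G t + F 0 - F t)
    (hG : ∀ t ∈ Set.Icc 0 B, HasDerivAt G (F t) t)
    (hF : ∀ t ∈ Set.Icc 0 B, HasDerivAt F (F₁ t) t)
    (hle : ∀ t ∈ Set.Icc 0 B, F₁ t ≤ κ * F t) {M : ℝ} (hM : 0 ≤ M) (hMB : M + h ≤ B)
    (hFM : 0 ≤ F M) : ρ * (H (M + h) - H M) ≤ F M - ρ * F (M + h) := by
  have hadd : ∀ t ∈ Set.Icc 0 h, M + t ∈ Set.Icc 0 B := fun t ht =>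
    ⟨by linarith [ht.1], by linarith [ht.2]⟩
  have hgrowth : MonotoneOn (fun t => exp (κ * t) * F M - κ * G (M + t)) (Set.Icc 0 h) := by
    refine monotoneOn_of_hasDerivAt_nonneg (convex_Icc 0 h)
      (f' := fun t => κ * (exp (κ * t) * F M - F (M + t)))
      (fun t ht => (((hasDerivAt_exp_mul κ t).mul_const _).sub
        (((hG _ (hadd t ht)).comp_const_add M t).const_mul κ)).congr_deriv (by ring))
      fun t ht => mul_nonneg hκ (sub_nonneg.2 ?_)
    simpa using le_exp_mul_of_hasDerivAt_le (convex_Icc 0 B) hF hle ⟨hM, by linarith⟩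
      (hadd t ht) (le_add_of_nonneg_right ht.1)
  have hends := hgrowth (Set.left_mem_Icc.2 hh) (Set.right_mem_Icc.2 hh) hh
  simp only [mul_zero, exp_zero, one_mul, add_zero] at hends
  rw [hH, hH]
  linarith [mul_le_mul_of_nonneg_left hends hρ, mul_le_mul_of_nonneg_right hρκ hFM]

lemma mul_le_two_mul_pairSum_of_convexOn_neg {H : ℝ → ℝ} (hρ : 0 ≤ ρ) (hh : 0 ≤ h)
    (hconv : ConvexOn ℝ (Set.Icc 0 B) fun t => -H t) (hH0 : H 0 = 0)
    (hpair : ∀ M, 0 ≤ M → M + h ≤ B → ρ * (H (M + h) - H M) ≤ F M - ρ * F (M + h))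
    (k : ℕ) (hB : flushAngle h 0 k + h ≤ B) :
    ρ * (H (flushAngle h 0 k + h) + (H (flushAngle h 0 k + h) - H (flushAngle h 0 k))) ≤
      2 * pairSum ρ h F (flushAngle h 0) 0 (k + 1) := by
  induction k with
  | zero =>
    have hstep := hpair 0 le_rfl (by simpa using hB)
    simp only [zero_add, pairSum, Nat.Ico_succ_singleton, sum_singleton, flushAngle_zero_zero,
      hH0] at hstep ⊢
    linarith
  | succ k ih =>
    have hnext := flushAngle_add_one h 0 k
    have hk := flushAngle_nonneg hh 0 k
    have hstep := hpair (flushAngle h 0 (k + 1)) (by linarith) hB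
    have hmid := mul_le_mul_of_nonneg_left (add_le_add_of_convexOn hconv (h := h)
      (s := flushAngle h 0 k) (t := flushAngle h 0 k + h) ⟨hk, by linarith⟩
      ⟨by linarith, by linarith⟩ (by linarith) hh) hρ
    rw [show flushAngle h 0 k + h + h = flushAngle h 0 (k + 1) by linarith] at hmid
    rw [pairSum_add_one]
    linarith [ih (by linarith)]

lemma mul_le_two_mul_pairSum_of_le_deriv2 (hκ : 0 ≤ κ) (hρ : 0 ≤ ρ) (hh : 0 ≤ h)
    (hρκ : ρ * exp (κ * h) ≤ 1)
    (hG : ∀ t ∈ Set.Icc 0 B, HasDerivAt G (F t) t)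
    (hF : ∀ t ∈ Set.Icc 0 B, HasDerivAt F (F₁ t) t)
    (hF₁ : ∀ t ∈ Set.Icc 0 B, HasDerivAt F₁ (F₂ t) t)
    (hle₁ : ∀ t ∈ Set.Icc 0 B, F₁ t ≤ κ * F t) (hle₂ : ∀ t ∈ Set.Icc 0 B, κ * F₁ t ≤ F₂ t)
    (hF_nonneg : ∀ t ∈ Set.Icc 0 B, 0 ≤ F t)
    (hG0 : G 0 = 0) (k : ℕ) (hB : flushAngle h 0 k + h ≤ B) :
    ρ * (κ * G (flushAngle h 0 k + h) + F 0 - F (flushAngle h 0 k + h)) ≤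
      2 * pairSum ρ h F (flushAngle h 0) 0 (k + 1) := by
  have hD : Convex ℝ (Set.Icc 0 B) := convex_Icc 0 B
  set H : ℝ → ℝ := fun t => κ * G t + F 0 - F t with hH
  have hdH : ∀ t ∈ Set.Icc 0 B, HasDerivAt H (κ * F t - F₁ t) t := fun t ht =>
    (((hG t ht).const_mul κ).add_const _).sub (hF t ht)
  have hmono : MonotoneOn H (Set.Icc 0 B) :=
    monotoneOn_of_hasDerivAt_nonneg hD hdH fun t ht => sub_nonneg.2 (hle₁ t ht)
  have hconv : ConvexOn ℝ (Set.Icc 0 B) fun t => -H t :=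
    convexOn_of_hasDerivAt_of_monotoneOn hD (fun t ht => (hdH t ht).neg)
      (monotoneOn_of_hasDerivAt_nonneg hD
        (fun t ht => (((hF t ht).const_mul κ).sub (hF₁ t ht)).neg)
        fun t ht => by linarith [hle₂ t ht])
  have hpair : ∀ M, 0 ≤ M → M + h ≤ B → ρ * (H (M + h) - H M) ≤ F M - ρ * F (M + h) :=
    fun M hM hMB => mul_sub_le_sub_of_deriv_le hκ hρ hh hρκ (fun _ => rfl) hG hF hle₁ hM hMB
      (hF_nonneg M ⟨hM, by linarith⟩)
  have hsum := mul_le_two_mul_pairSum_of_convexOn_neg hρ hh hconv (by simp [hH, hG0]) hpair k hB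
  have hk := flushAngle_nonneg hh 0 k
  have hlast := mul_le_mul_of_nonneg_left (hmono (a := flushAngle h 0 k) ⟨hk, by linarith⟩
    ⟨by linarith, hB⟩ (le_add_of_nonneg_right hh)) hρ
  linarith

end Grid

/-! ### Polynomial inequalities -/

lemma artanh_taylor_le {y : ℝ} (hy₀ : 0 ≤ y) (hy₁ : y < 1) :
    y + y ^ 3 / 3 + y ^ 5 / 5 ≤ (log (1 + y) - log (1 - y)) / 2 := by
  have hmono : MonotoneOn
      (fun t => (log (1 + t) - log (1 - t)) / 2 - (t + t ^ 3 / 3 + t ^ 5 / 5)) (Set.Ico 0 1) := by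
    refine monotoneOn_of_hasDerivAt_nonneg (convex_Ico 0 1)
      (f' := fun t => t ^ 6 / ((1 + t) * (1 - t))) (fun t ht => ?_) fun t ht => ?_
    · have hadd : 1 + t ≠ 0 := by linarith [ht.1]
      have hsub : 1 - t ≠ 0 := by linarith [ht.2]
      have hid := hasDerivAt_id t
      refine (((((hid.const_add 1).log hadd).sub ((hid.const_sub 1).log hsub)).div_const 2).sub
        ((hid.add ((hid.pow 3).div_const 3)).add ((hid.pow 5).div_const 5))).congr_deriv ?_
      simp only [id_eq]
      field_simp
      ring
    · have hadd : 0 < 1 + t := by linarith [ht.1]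
      have hsub : 0 < 1 - t := by linarith [ht.2]
      positivity
  have hends := hmono ⟨le_rfl, one_pos⟩ ⟨hy₀, hy₁⟩ hy₀
  norm_num at hends
  linarith

lemma neg_log_le_inv_sub_self_div_two {u : ℝ} (hu₀ : 0 < u) (hu₁ : u ≤ 1) :
    -log u ≤ (u⁻¹ - u) / 2 := by
  have hanti : AntitoneOn (fun t => (t⁻¹ - t) / 2 + log t) (Set.Ioi 0) := by
    refine antitoneOn_of_hasDerivAt_nonpos (convex_Ioi 0)
      (f' := fun t => -((t⁻¹ - 1) ^ 2 / 2)) (fun t ht => ?_) fun t _ => by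
        simpa using by positivity
    have ht₀ : t ≠ 0 := (Set.mem_Ioi.1 ht).ne'
    refine ((((hasDerivAt_inv ht₀).sub (hasDerivAt_id t)).div_const 2).add
      (hasDerivAt_log ht₀)).congr_deriv ?_
    field_simp
    ring
  have hends := hanti hu₀ (Set.mem_Ioi.2 one_pos) hu₁
  norm_num at hends
  linarith

-- `a C² + b B C - 4 z B²` vanishes at `C = c B`, but it is positive for all `C < -A`, being
-- nonnegative and decreasing at `C = -A`.
lemma add_mul_nonneg_of_quadratic {A B a b c z : ℝ} (hA : 0 < A) (hc : 0 < c) (hz : 0 < z)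
    (ha : 0 < a) (hroot : c ^ 2 * a + c * b = 4 * z)
    (hQ : 0 ≤ A ^ 2 * a - A * B * b - 4 * z * B ^ 2) : 0 ≤ A + c * B := by
  by_contra! hneg
  have hB : B < 0 := by
    by_contra! hB
    linarith [mul_nonneg hc.le hB]
  have hsum : 0 < A * a - B * b := by
    have hB2 : 0 < 4 * z * B ^ 2 := mul_pos (by positivity) (sq_pos_of_neg hB)
    exact (mul_pos_iff_of_pos_left hA).1 (by linarith)
  have hX : 0 < -A - c * B := by linarith
  have hpos : 0 < (-A - c * B) * (A * a + a * (-A - c * B) + (A * a - B * b)) := by positivity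
  have hzero : A ^ 2 * a - A * B * b - 4 * z * B ^ 2 +
      (-A - c * B) * (A * a + a * (-A - c * B) + (A * a - B * b)) = 0 := by
    linear_combination B ^ 2 * hroot
  linarith

section Curve

variable {c z : ℝ}

lemma four_mul_one_sub_sq_pos_of_curve (hc : 0 < c) (hz₁ : z < 1)
    (hcurve : z * (2 + c + c * z) ^ 2 = c * (3 + 4 * c) * (1 - z) ^ 2) :
    0 < 4 * (1 - z) ^ 2 - z * (1 + z) ^ 2 := by
  by_contra! ha
  have hz : 48 / 100 < z := by nlinarith
  have hb : 3 * (1 - z) ^ 2 - 4 * z * (1 + z) < 0 := by nlinarith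
  linarith [mul_neg_of_pos_of_neg hc hb, mul_nonpos_of_nonneg_of_nonpos (sq_nonneg c) ha]

lemma curve_resultant_nonneg_large (hz₀ : 0 ≤ z) (hz : z ≤ 97 / 200) :
    0 ≤ 2 / 25 + 497 / 125 * z - 37847 / 1875 * z ^ 2 + 7846 / 225 * z ^ 3
      - 157246 / 5625 * z ^ 4 + 175831 / 9375 * z ^ 5 - 2765569 / 140625 * z ^ 6
      + 1889956 / 140625 * z ^ 7 - 206218 / 46875 * z ^ 8 + 29624 / 15625 * z ^ 9
      - 12696 / 15625 * z ^ 10 := by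
  nlinarith [mul_nonneg hz₀ (sub_nonneg.2 hz), mul_nonneg hz₀ (sq_nonneg (z - 97 / 200)),
    mul_nonneg hz₀ (sq_nonneg (z ^ 2 - 97 / 200 * z)), pow_nonneg hz₀ 3, pow_nonneg hz₀ 5,
    pow_nonneg hz₀ 7]

lemma curve_resultant_nonneg_small (hz₀ : 0 ≤ z) (hz : z ≤ 97 / 200) :
    0 ≤ 11 / 25 + 3379 / 1000 * z - 624353 / 30000 * z ^ 2 + 165347 / 4500 * z ^ 3
      - 331163 / 11250 * z ^ 4 + 2958979 / 150000 * z ^ 5 - 11553799 / 562500 * z ^ 6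
      + 31288279 / 2250000 * z ^ 7 - 3394237 / 750000 * z ^ 8 + 244783 / 125000 * z ^ 9
      - 104907 / 125000 * z ^ 10 := by
  nlinarith [mul_nonneg hz₀ (sub_nonneg.2 hz), mul_nonneg hz₀ (sq_nonneg (z - 97 / 200)),
    mul_nonneg hz₀ (sq_nonneg (z ^ 2 - 97 / 200 * z)), pow_nonneg hz₀ 3, pow_nonneg hz₀ 5,
    pow_nonneg hz₀ 7]

lemma two_mul_mul_one_sub_sq_le_of_curve {Z : ℝ} (hZ : Z = 21 / 25 ∨ Z = 87 / 100) (hc : 0 < c)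
    (hz₀ : 0 ≤ z) (hz₁ : z < 1)
    (hcurve : z * (2 + c + c * z) ^ 2 = c * (3 + 4 * c) * (1 - z) ^ 2) :
    2 * c * (1 - z) ^ 2 ≤
      (2 + c + c * z) * ((Z - 1) * z + (Z + 1) * (1 - z) * (z + z ^ 2 / 3 + z ^ 3 / 5))
        + Z * (1 - z) ^ 2 - (Z - z) * (1 + c * z) := by
  have hz : 0 < z := by
    refine hz₀.lt_of_ne fun hz => ?_
    rw [← hz] at hcurve
    nlinarith
  have hroot : c ^ 2 * (4 * (1 - z) ^ 2 - z * (1 + z) ^ 2) +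
      c * (3 * (1 - z) ^ 2 - 4 * z * (1 + z)) = 4 * z := by linear_combination -hcurve
  have ha := four_mul_one_sub_sq_pos_of_curve hc hz₁ hcurve
  have hz_le : z ≤ 97 / 200 := by
    by_contra! h
    nlinarith
  set E : ℝ := (Z - 1) * z + (Z + 1) * (1 - z) * (z + z ^ 2 / 3 + z ^ 3 / 5) with hE
  have hlin : 0 ≤ (2 * E + Z * (1 - z) ^ 2 - (Z - z)) +
      c * ((1 + z) * E - (Z - z) * z - 2 * (1 - z) ^ 2) := by
    refine add_mul_nonneg_of_quadratic ?_ hc hz ha hroot ?_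
    · rcases hZ with rfl | rfl
      · have hfactor : 0 < 67 / 25 - 121 / 75 * z - 184 / 375 * z ^ 2 - 92 / 125 * z ^ 3 := by
          nlinarith [mul_nonneg hz₀ (sub_nonneg.2 hz_le), pow_nonneg hz₀ 3, pow_nonneg hz₀ 2]
        linear_combination mul_pos hz hfactor
      · have hfactor : 0 < 137 / 50 - 487 / 300 * z - 187 / 375 * z ^ 2 - 187 / 250 * z ^ 3 := by
          nlinarith [mul_nonneg hz₀ (sub_nonneg.2 hz_le), pow_nonneg hz₀ 3, pow_nonneg hz₀ 2]
        linear_combination mul_pos hz hfactor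
    · rcases hZ with rfl | rfl
      · linear_combination mul_nonneg hz₀ (curve_resultant_nonneg_large hz₀ hz_le)
      · linear_combination mul_nonneg hz₀ (curve_resultant_nonneg_small hz₀ hz_le)
  linarith

end Curve

section Region

variable {c z : ℝ}

lemma le_of_region_large (hc : 7 / 10 ≤ c)
    (h : z * (2 + c * z) ≤ 4 * c * (1 - z)) : z ≤ 83 / 100 := by
  by_contra! hz
  nlinarith [mul_pos (show 0 < c by linarith) (sub_pos.2 hz)]

lemma le_of_region_small (hc₀ : 0 ≤ c) (hc : c ≤ 7 / 10)
    (h : z * (2 + c * z) ≤ 4 * c * (1 - z)) : z ≤ 542 / 1000 := by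
  by_contra! hz
  rcases le_or_gt 0 (4 - 4 * z - z ^ 2) with hsign | hsign
  · nlinarith [mul_nonneg (sub_nonneg.2 hc) hsign]
  · nlinarith [mul_nonneg hc₀ (neg_nonneg.2 hsign.le)]

lemma deriv2_poly_le_large (hc : 7 / 10 ≤ c) (hz₀ : 0 ≤ z) (hz : z ≤ 83 / 100) :
    ((17 / 25 + 21 / 25 * c) - (1 + 29 / 25 * c) * z) * (1 + c * z) * (1 + 5 * z) +
      2 * z * (1 - z) * (-(1 + 29 / 25 * c) * (1 + c * z) +
        c * ((17 / 25 + 21 / 25 * c) - (1 + 29 / 25 * c) * z)) ≤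
      2 * c * (3 + 4 * c) * (21 / 25 - z) * (1 - z) ^ 2 := by
  obtain ⟨u, rfl⟩ : ∃ u, c = 7 / 10 + u := ⟨c - 7 / 10, by ring⟩
  have hu : 0 ≤ u := by linarith
  nlinarith [mul_nonneg hu hz₀, mul_nonneg hu (sub_nonneg.2 hz),
    mul_nonneg (mul_nonneg hu hu) (sub_nonneg.2 hz), mul_nonneg hz₀ (sub_nonneg.2 hz),
    sq_nonneg (z - 46 / 100), mul_nonneg hz₀ (sq_nonneg (z - 46 / 100)),
    mul_nonneg hu (sq_nonneg (z - 46 / 100)),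
    mul_nonneg (mul_nonneg hu hz₀) (sq_nonneg (z - 46 / 100)),
    mul_nonneg (mul_nonneg hu hu) (mul_nonneg hz₀ (sq_nonneg (z - 46 / 100))),
    mul_nonneg (mul_nonneg hu hu) (sq_nonneg (z - 46 / 100))]

lemma deriv_poly_le_deriv2_poly_small (hc₀ : 0 ≤ c) (hc : c ≤ 7 / 10) (hz₀ : 0 ≤ z)
    (hz : z ≤ 542 / 1000) :
    (1 - z) * ((74 / 100 + 87 / 100 * c) - (1 + 113 / 100 * c) * z) * (2 * c + 3 / 4) *
        (20 / 7 * z + 7 / 20) ≤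
      ((74 / 100 + 87 / 100 * c) - (1 + 113 / 100 * c) * z) * (1 + c * z) * (1 + 5 * z) +
        2 * z * (1 - z) * (-(1 + 113 / 100 * c) * (1 + c * z) +
          c * ((74 / 100 + 87 / 100 * c) - (1 + 113 / 100 * c) * z)) := by
  -- The difference is quadratic in `c`: check the value at `0`, the leading coefficient, and the
  -- value at `7 / 10`.
  have hconst : 0 ≤ 2183 / 4000 - 12011 / 28000 * z + 261 / 560 * z ^ 2 - 15 / 7 * z ^ 3 := by
    nlinarith [mul_nonneg hz₀ (sub_nonneg.2 hz), mul_nonneg hz₀ (sq_nonneg z),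
      sq_nonneg (z - 1 / 2), mul_nonneg (mul_nonneg hz₀ hz₀) (sub_nonneg.2 hz)]
  have hlead : -609 / 1000 - 673 / 700 * z + 53183 / 7000 * z ^ 2 - 5311 / 700 * z ^ 3 ≤ 0 := by
    nlinarith [mul_nonneg hz₀ (sub_nonneg.2 hz), mul_nonneg hz₀ (sq_nonneg (z - 1 / 2)),
      sq_nonneg (z - 1 / 2), mul_nonneg (mul_nonneg hz₀ hz₀) (sub_nonneg.2 hz)]
  have hend : 0 ≤ (2183 / 4000 - 12011 / 28000 * z + 261 / 560 * z ^ 2 - 15 / 7 * z ^ 3) +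
      7 / 10 * (989 / 8000 - 8189 / 7000 * z + 395469 / 56000 * z ^ 2 - 1279 / 140 * z ^ 3) +
      49 / 100 * (-609 / 1000 - 673 / 700 * z + 53183 / 7000 * z ^ 2 - 5311 / 700 * z ^ 3) := by
    nlinarith [mul_nonneg hz₀ (sub_nonneg.2 hz), mul_nonneg hz₀ (sq_nonneg (z - 1 / 2)),
      sq_nonneg (z - 13 / 100), mul_nonneg hz₀ (sq_nonneg (z - 13 / 100)),
      mul_nonneg (mul_nonneg hz₀ hz₀) (sub_nonneg.2 hz)]
  have hc' : 0 ≤ 7 / 10 - c := by linarith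
  linear_combination 10 / 7 * mul_nonneg hc' hconst + 10 / 7 * mul_nonneg hc₀ hend +
    mul_nonneg (mul_nonneg hc₀ hc') (neg_nonneg.2 hlead)

lemma region_coeff_sq_nonneg (hz₀ : 0 ≤ z) (hz : z ≤ 542 / 1000) :
    0 ≤ 4 * ((87 / 100 - z) ^ 2 * (1 - z) ^ 2) - z * (87 / 100 - 113 / 100 * z) ^ 2 := by
  nlinarith [mul_nonneg hz₀ (sub_nonneg.2 hz), mul_nonneg hz₀ (sq_nonneg (z - 1 / 2)),
    sq_nonneg (z - 1 / 2), sq_nonneg (z ^ 2 - 1 / 2 * z),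
    mul_nonneg (mul_nonneg hz₀ hz₀) (sub_nonneg.2 hz)]

lemma region_coeff_nonneg (hz₀ : 0 ≤ z) (hz : z ≤ 542 / 1000) :
    0 ≤ 3 * ((87 / 100 - z) ^ 2 * (1 - z) ^ 2)
      - 2 * z * (74 / 100 - z) * (87 / 100 - 113 / 100 * z) := by
  nlinarith [mul_nonneg hz₀ (sub_nonneg.2 hz), mul_nonneg hz₀ (sq_nonneg (z - 1 / 2)),
    sq_nonneg (z - 1 / 2), sq_nonneg (z ^ 2 - 1 / 2 * z),
    mul_nonneg (mul_nonneg hz₀ hz₀) (sub_nonneg.2 hz)]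

lemma region_boundary_nonneg (hz₀ : 0 ≤ z) (hz : z ≤ 542 / 1000) :
    0 ≤ 2351 / 250 - 13311 / 250 * z + 570031 / 5000 * z ^ 2 - 269031 / 2500 * z ^ 3
      + 159693 / 5000 * z ^ 4 + 311 / 25 * z ^ 5 - 7 * z ^ 6 := by
  nlinarith [mul_nonneg hz₀ (sub_nonneg.2 hz), mul_nonneg hz₀ (sq_nonneg (z - 1 / 2)),
    sq_nonneg (z - 1 / 2), sq_nonneg (z ^ 2 - 1 / 2 * z),
    mul_nonneg (mul_nonneg hz₀ hz₀) (sub_nonneg.2 hz),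
    mul_nonneg hz₀ (sq_nonneg (z ^ 2 - 1 / 2 * z)), pow_nonneg hz₀ 5]

lemma deriv_poly_sq_le_small (hz₀ : 0 ≤ z) (hz : z ≤ 542 / 1000)
    (h : z * (2 + c * z) ≤ 4 * c * (1 - z)) :
    z * ((74 / 100 + 87 / 100 * c) - (1 + 113 / 100 * c) * z) ^ 2 ≤
      c * (3 + 4 * c) * (87 / 100 - z) ^ 2 * (1 - z) ^ 2 := by
  -- The difference is `c² A + c B - z (74/100 - z)²`, increasing in `c`, so the worst case is the
  -- boundary `c = 2 z / (4 - 4 z - z²)` of the region `h`.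
  have hA := region_coeff_sq_nonneg hz₀ hz
  have hB := region_coeff_nonneg hz₀ hz
  set A := 4 * ((87 / 100 - z) ^ 2 * (1 - z) ^ 2) - z * (87 / 100 - 113 / 100 * z) ^ 2 with hA_def
  set B := 3 * ((87 / 100 - z) ^ 2 * (1 - z) ^ 2)
    - 2 * z * (74 / 100 - z) * (87 / 100 - 113 / 100 * z) with hB_def
  set e := 4 - 4 * z - z ^ 2 with he_def
  have he : 0 < e := by nlinarith
  have hce : 2 * z ≤ c * e := by linarith
  have hsq : (2 * z) ^ 2 * A ≤ (c * e) ^ 2 * A := by gcongr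
  have hlin : 2 * z * (e * B) ≤ c * e * (e * B) := by gcongr
  have hboundary : 0 ≤ (2 * z) ^ 2 * A + 2 * z * (e * B) - z * (74 / 100 - z) ^ 2 * e ^ 2 := by
    rw [hA_def, hB_def, he_def]
    linear_combination mul_nonneg hz₀ (region_boundary_nonneg hz₀ hz)
  have hscaled : 0 ≤ e ^ 2 * (c ^ 2 * A + c * B - z * (74 / 100 - z) ^ 2) := by linarith
  have hdiff := nonneg_of_mul_nonneg_right hscaled (by positivity)
  rw [hA_def, hB_def] at hdiff
  linarith

end Region

/-! ### Sums along the half-angle flow -/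

/-- `linWeightDeriv` up to a constant factor, as a function of `y = tan (t / 2) / q` with
`q² = (1 - x) / (1 + x)`. -/
noncomputable def flowWeight (q y : ℝ) : ℝ := (1 + q ^ 2 * y ^ 2) / (1 - y ^ 2) ^ 2

/-- The logarithmic derivative of `flowWeight` along a half-angle flow. -/
noncomputable def flowLogDeriv (q y : ℝ) : ℝ :=
  y * (2 + q ^ 2 + q ^ 2 * y ^ 2) / (q * (1 - y ^ 2))

/-- The antiderivative of `flowWeight` with respect to `y²`. -/
noncomputable def flowWeightPrimitive (q y : ℝ) : ℝ :=
  (1 + q ^ 2) * y ^ 2 / (1 - y ^ 2) + q ^ 2 * log (1 - y ^ 2)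

/-- A multiple of `flowWeight` minus the weight `(1 + y²) * flowWeight`, normalized to have the
value `Z` at `0`. -/
noncomputable def flowComparison (Z q y : ℝ) : ℝ := (Z - y ^ 2) * flowWeight q y

/-- The antiderivative of `flowComparison` along a half-angle flow. -/
noncomputable def flowPrimitive (Z q y : ℝ) : ℝ :=
  q * ((Z - 1) * y / (1 - y ^ 2) + (Z + 1) / 2 * (log (1 + y) - log (1 - y)))

/-- The factor of `flowComparisonDeriv` that may change sign. -/
noncomputable def flowFactor (Z q y : ℝ) : ℝ :=
  2 * Z - 1 + q ^ 2 * Z - (1 + q ^ 2 * (2 - Z)) * y ^ 2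

/-- The derivative of `flowComparison` along a half-angle flow. -/
noncomputable def flowComparisonDeriv (Z q y : ℝ) : ℝ :=
  y * flowFactor Z q y * (1 + q ^ 2 * y ^ 2) / (q * (1 - y ^ 2) ^ 3)

/-- The second derivative of `flowComparison` along a half-angle flow. -/
noncomputable def flowComparisonDeriv₂ (Z q y : ℝ) : ℝ :=
  (1 + q ^ 2 * y ^ 2) * (flowFactor Z q y * (1 + q ^ 2 * y ^ 2) * (1 + 5 * y ^ 2) +
    2 * y ^ 2 * (1 - y ^ 2) * (-(1 + q ^ 2 * (2 - Z)) * (1 + q ^ 2 * y ^ 2) +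
      q ^ 2 * flowFactor Z q y)) / (2 * q ^ 2 * (1 - y ^ 2) ^ 4)

section Values

variable {q y : ℝ}

lemma flowWeight_pos (hy : 0 < 1 - y ^ 2) : 0 < flowWeight q y := by
  unfold flowWeight
  positivity

lemma region_of_flowWeightPrimitive_le (hy : 0 < 1 - y ^ 2)
    (hJ : flowWeightPrimitive q y ≤ 2 * q ^ 2) :
    y ^ 2 * (2 + q ^ 2 * y ^ 2) ≤ 4 * q ^ 2 * (1 - y ^ 2) := by
  have hlog := mul_le_mul_of_nonneg_left
    (neg_log_le_inv_sub_self_div_two hy (by linarith [sq_nonneg y])) (sq_nonneg q)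
  unfold flowWeightPrimitive at hJ
  have hrat : (1 + q ^ 2) * y ^ 2 / (1 - y ^ 2) -
      q ^ 2 * (((1 - y ^ 2)⁻¹ - (1 - y ^ 2)) / 2) ≤ 2 * q ^ 2 := by linarith
  have hclear := mul_le_mul_of_nonneg_right hrat hy.le
  field_simp at hclear
  linarith

lemma two_mul_sq_le_of_flowLogDeriv_eq {Z : ℝ} (hZ : Z = 21 / 25 ∨ Z = 87 / 100) (hq : 0 < q)
    (hy₀ : 0 ≤ y) (hy₁ : y < 1) (hL : flowLogDeriv q y = √(3 + 4 * q ^ 2)) :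
    2 * q ^ 2 ≤ √(3 + 4 * q ^ 2) * flowPrimitive Z q y + Z - flowComparison Z q y := by
  have hy : 0 < 1 - y ^ 2 := by nlinarith
  have hcurve : y ^ 2 * (2 + q ^ 2 + q ^ 2 * y ^ 2) ^ 2 =
      q ^ 2 * (3 + 4 * q ^ 2) * (1 - y ^ 2) ^ 2 := by
    have hsq : flowLogDeriv q y ^ 2 = 3 + 4 * q ^ 2 := by rw [hL, sq_sqrt (by positivity)]
    rw [flowLogDeriv] at hsq
    field_simp at hsq
    linarith
  have hbound :=
    two_mul_mul_one_sub_sq_le_of_curve hZ (pow_pos hq 2) (sq_nonneg y) (by linarith) hcurve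
  have hZ1 : 0 < Z + 1 := by rcases hZ with rfl | rfl <;> norm_num
  have hartanh : y ^ 2 + (y ^ 2) ^ 2 / 3 + (y ^ 2) ^ 3 / 5 ≤
      y * ((log (1 + y) - log (1 - y)) / 2) := by
    linarith [mul_le_mul_of_nonneg_left (artanh_taylor_le hy₀ hy₁) hy₀]
  have hvalue : √(3 + 4 * q ^ 2) * flowPrimitive Z q y + Z - flowComparison Z q y =
      ((2 + q ^ 2 + q ^ 2 * y ^ 2) * ((Z - 1) * y ^ 2 + (Z + 1) * (1 - y ^ 2) *
        (y * ((log (1 + y) - log (1 - y)) / 2))) + Z * (1 - y ^ 2) ^ 2 -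
        (Z - y ^ 2) * (1 + q ^ 2 * y ^ 2)) / (1 - y ^ 2) ^ 2 := by
    rw [← hL, flowLogDeriv, flowPrimitive, flowComparison, flowWeight]
    field_simp
  rw [hvalue, le_div_iff₀ (by positivity)]
  refine hbound.trans ?_
  gcongr

lemma flowComparisonDeriv₂_le_large (hq : 0 < q) (hc : 7 / 10 ≤ q ^ 2)
    (hz : y ^ 2 ≤ 83 / 100) :
    flowComparisonDeriv₂ (21 / 25) q y ≤ √(3 + 4 * q ^ 2) ^ 2 * flowComparison (21 / 25) q y := by
  have hy : 0 < 1 - y ^ 2 := by linarith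
  have hpoly := mul_le_mul_of_nonneg_left (deriv2_poly_le_large hc (sq_nonneg y) hz)
    (show 0 ≤ 1 + q ^ 2 * y ^ 2 by positivity)
  rw [sq_sqrt (by positivity), flowComparisonDeriv₂, flowComparison, flowWeight, flowFactor,
    div_le_iff₀ (by positivity)]
  have hclear : (3 + 4 * q ^ 2) * ((21 / 25 - y ^ 2) * ((1 + q ^ 2 * y ^ 2) / (1 - y ^ 2) ^ 2)) *
      (2 * q ^ 2 * (1 - y ^ 2) ^ 4) = (1 + q ^ 2 * y ^ 2) *
        (2 * q ^ 2 * (3 + 4 * q ^ 2) * (21 / 25 - y ^ 2) * (1 - y ^ 2) ^ 2) := by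
    field_simp
  rw [hclear]
  refine le_trans (le_of_eq ?_) (hpoly.trans (le_of_eq ?_)) <;> ring

lemma sqrt_mul_le_two_mul_sq_add (hq : 0 < q) : √(3 + 4 * q ^ 2) * q ≤ 2 * q ^ 2 + 3 / 4 := by
  refine le_of_sq_le_sq ?_ (by positivity)
  rw [mul_pow, sq_sqrt (by positivity)]
  nlinarith

lemma sqrt_mul_flowComparisonDeriv_le_small (hq : 0 < q) (hy₀ : 0 ≤ y) (hc : q ^ 2 ≤ 7 / 10)
    (hz : y ^ 2 ≤ 542 / 1000) :
    √(3 + 4 * q ^ 2) * flowComparisonDeriv (87 / 100) q y ≤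
      flowComparisonDeriv₂ (87 / 100) q y := by
  have hy : 0 < 1 - y ^ 2 := by linarith
  have hfactor : 0 ≤ flowFactor (87 / 100) q y := by
    unfold flowFactor
    nlinarith [mul_nonneg (sq_nonneg q) (sub_nonneg.2 hz)]
  have hy2 : 2 * y ≤ 20 / 7 * y ^ 2 + 7 / 20 := by nlinarith [sq_nonneg (y - 7 / 20)]
  have hκ : √(3 + 4 * q ^ 2) * flowComparisonDeriv (87 / 100) q y *
      (2 * q ^ 2 * (1 - y ^ 2) ^ 4) = (1 + q ^ 2 * y ^ 2) * ((1 - y ^ 2) *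
        flowFactor (87 / 100) q y * (√(3 + 4 * q ^ 2) * q) * (2 * y)) := by
    unfold flowComparisonDeriv
    field_simp
  rw [flowComparisonDeriv₂, le_div_iff₀ (by positivity), hκ]
  refine mul_le_mul_of_nonneg_left ?_ (by positivity)
  calc (1 - y ^ 2) * flowFactor (87 / 100) q y * (√(3 + 4 * q ^ 2) * q) * (2 * y) ≤
      (1 - y ^ 2) * flowFactor (87 / 100) q y * (2 * q ^ 2 + 3 / 4) *
        (20 / 7 * y ^ 2 + 7 / 20) := by
        gcongr
        exact sqrt_mul_le_two_mul_sq_add hq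
    _ ≤ _ := by
      unfold flowFactor
      linarith [deriv_poly_le_deriv2_poly_small (sq_nonneg q) hc (sq_nonneg y) hz]

lemma flowComparisonDeriv_le_small (hq : 0 < q) (hz : y ^ 2 ≤ 542 / 1000)
    (hregion : y ^ 2 * (2 + q ^ 2 * y ^ 2) ≤ 4 * q ^ 2 * (1 - y ^ 2)) :
    flowComparisonDeriv (87 / 100) q y ≤ √(3 + 4 * q ^ 2) * flowComparison (87 / 100) q y := by
  have hy : 0 < 1 - y ^ 2 := by linarith
  have hZ : 0 ≤ 87 / 100 - y ^ 2 := by linarith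
  have hfactor : y * flowFactor (87 / 100) q y ≤
      √(3 + 4 * q ^ 2) * q * ((87 / 100 - y ^ 2) * (1 - y ^ 2)) := by
    refine (le_abs_self _).trans (abs_le_of_sq_le_sq ?_ (by positivity))
    rw [mul_pow, mul_pow, mul_pow _ q, sq_sqrt (by positivity), flowFactor]
    linarith [deriv_poly_sq_le_small (sq_nonneg y) hz hregion]
  have hκ : √(3 + 4 * q ^ 2) * flowComparison (87 / 100) q y * (q * (1 - y ^ 2) ^ 3) =
      √(3 + 4 * q ^ 2) * q * ((87 / 100 - y ^ 2) * (1 - y ^ 2)) * (1 + q ^ 2 * y ^ 2) := by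
    rw [flowComparison, flowWeight]
    field_simp
  rw [flowComparisonDeriv, div_le_iff₀ (by positivity), hκ]
  gcongr

end Values

/-- The function `y` solves on `[0, B]` the differential equation of `tan (t / 2) / q` and stays
below `1`, the value that it takes at the angle `t` with `cos t = (1 - q²) / (1 + q²)`. -/
structure HalfAngleFlow (q B : ℝ) (y : ℝ → ℝ) : Prop where
  pos : 0 < q
  zero : y 0 = 0
  hasDerivAt : ∀ t ∈ Set.Icc 0 B, HasDerivAt y ((1 + q ^ 2 * y t ^ 2) / (2 * q)) t
  lt_one : ∀ t ∈ Set.Icc 0 B, y t < 1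

namespace HalfAngleFlow

variable {q B s t : ℝ} {y : ℝ → ℝ}

lemma monotoneOn (Y : HalfAngleFlow q B y) : MonotoneOn y (Set.Icc 0 B) := by
  have hq := Y.pos
  exact monotoneOn_of_hasDerivAt_nonneg (convex_Icc 0 B) Y.hasDerivAt fun t _ => by positivity

lemma nonneg (Y : HalfAngleFlow q B y) (ht : t ∈ Set.Icc 0 B) : 0 ≤ y t :=
  Y.zero ▸ Y.monotoneOn (Set.left_mem_Icc.2 (ht.1.trans ht.2)) ht ht.1

lemma one_sub_sq_pos (Y : HalfAngleFlow q B y) (ht : t ∈ Set.Icc 0 B) : 0 < 1 - y t ^ 2 := by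
  nlinarith [Y.nonneg ht, Y.lt_one t ht]

lemma sq_le_sq (Y : HalfAngleFlow q B y) (hs : s ∈ Set.Icc 0 B) (ht : t ∈ Set.Icc 0 B)
    (hst : s ≤ t) : y s ^ 2 ≤ y t ^ 2 :=
  pow_le_pow_left₀ (Y.nonneg hs) (Y.monotoneOn hs ht hst) 2

lemma hasDerivAt_sq (Y : HalfAngleFlow q B y) (ht : t ∈ Set.Icc 0 B) :
    HasDerivAt (fun t => y t ^ 2) (y t * (1 + q ^ 2 * y t ^ 2) / q) t := by
  refine ((Y.hasDerivAt t ht).pow 2).congr_deriv ?_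
  norm_num
  ring

lemma hasDerivAt_flowWeight (Y : HalfAngleFlow q B y) (ht : t ∈ Set.Icc 0 B) :
    HasDerivAt (fun t => flowWeight q (y t)) (flowLogDeriv q (y t) * flowWeight q (y t)) t := by
  have hq := Y.pos
  have hsq := Y.hasDerivAt_sq ht
  have hy := Y.one_sub_sq_pos ht
  refine HasDerivAt.congr_deriv (f := fun t => flowWeight q (y t))
    (((hsq.const_mul (q ^ 2)).const_add 1).div ((hsq.const_sub 1).pow 2)
      (pow_ne_zero 2 hy.ne')) ?_
  simp only [flowLogDeriv, flowWeight]
  field_simp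
  ring

lemma hasDerivAt_flowWeightPrimitive (Y : HalfAngleFlow q B y) (ht : t ∈ Set.Icc 0 B) :
    HasDerivAt (fun t => flowWeightPrimitive q (y t))
      (y t * (1 + q ^ 2 * y t ^ 2) / q * flowWeight q (y t)) t := by
  have hq := Y.pos
  have hsq := Y.hasDerivAt_sq ht
  have hy := Y.one_sub_sq_pos ht
  refine HasDerivAt.congr_deriv (f := fun t => flowWeightPrimitive q (y t))
    (((hsq.const_mul (1 + q ^ 2)).div (hsq.const_sub 1) hy.ne').add
      (((hsq.const_sub 1).log hy.ne').const_mul (q ^ 2))) ?_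
  simp only [flowWeight]
  field_simp
  ring

lemma hasDerivAt_flowComparison (Y : HalfAngleFlow q B y) (Z : ℝ) (ht : t ∈ Set.Icc 0 B) :
    HasDerivAt (fun t => flowComparison Z q (y t)) (flowComparisonDeriv Z q (y t)) t := by
  have hq := Y.pos
  have hy := Y.one_sub_sq_pos ht
  refine HasDerivAt.congr_deriv (f := fun t => flowComparison Z q (y t))
    (((Y.hasDerivAt_sq ht).const_sub Z).mul (Y.hasDerivAt_flowWeight ht)) ?_
  simp only [flowComparisonDeriv, flowFactor, flowLogDeriv, flowWeight]
  field_simp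
  ring

lemma hasDerivAt_flowComparisonDeriv (Y : HalfAngleFlow q B y) (Z : ℝ) (ht : t ∈ Set.Icc 0 B) :
    HasDerivAt (fun t => flowComparisonDeriv Z q (y t)) (flowComparisonDeriv₂ Z q (y t)) t := by
  have hq := Y.pos
  have hsq := Y.hasDerivAt_sq ht
  have hy := Y.one_sub_sq_pos ht
  have hfactor : HasDerivAt (fun t => flowFactor Z q (y t)) _ t :=
    (hsq.const_mul (1 + q ^ 2 * (2 - Z))).const_sub (2 * Z - 1 + q ^ 2 * Z)
  refine HasDerivAt.congr_deriv (f := fun t => flowComparisonDeriv Z q (y t))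
    ((((Y.hasDerivAt t ht).mul hfactor).mul ((hsq.const_mul (q ^ 2)).const_add 1)).div
      (((hsq.const_sub 1).pow 3).const_mul q) (mul_ne_zero hq.ne' (pow_ne_zero 3 hy.ne'))) ?_
  simp only [flowComparisonDeriv₂, flowFactor, Pi.mul_apply]
  field_simp
  ring

lemma hasDerivAt_flowPrimitive (Y : HalfAngleFlow q B y) (Z : ℝ) (ht : t ∈ Set.Icc 0 B) :
    HasDerivAt (fun t => flowPrimitive Z q (y t)) (flowComparison Z q (y t)) t := by
  have hq := Y.pos
  have hy := Y.one_sub_sq_pos ht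
  have hadd : 1 + y t ≠ 0 := by linarith [Y.nonneg ht]
  have hsub : 1 - y t ≠ 0 := by linarith [Y.lt_one t ht]
  have hd := Y.hasDerivAt t ht
  refine HasDerivAt.congr_deriv (f := fun t => flowPrimitive Z q (y t))
    ((((hd.const_mul (Z - 1)).div ((Y.hasDerivAt_sq ht).const_sub 1) hy.ne').add
      ((((hd.const_add 1).log hadd).sub ((hd.const_sub 1).log hsub)).const_mul
        ((Z + 1) / 2))).const_mul q) ?_
  simp only [flowComparison, flowWeight]
  rw [show 1 - y t ^ 2 = (1 + y t) * (1 - y t) by ring]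
  field_simp
  ring

lemma flowLogDeriv_nonneg (Y : HalfAngleFlow q B y) (ht : t ∈ Set.Icc 0 B) :
    0 ≤ flowLogDeriv q (y t) := by
  have hq := Y.pos
  have hy := Y.one_sub_sq_pos ht
  have hy₀ := Y.nonneg ht
  unfold flowLogDeriv
  positivity

lemma flowLogDeriv_monotoneOn (Y : HalfAngleFlow q B y) :
    MonotoneOn (fun t => flowLogDeriv q (y t)) (Set.Icc 0 B) := by
  intro s hs t ht hst
  have hq := Y.pos
  have hy₀ := Y.nonneg hs
  have hy₁ := Y.nonneg ht
  have hy := Y.one_sub_sq_pos ht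
  have hle := Y.monotoneOn hs ht hst
  simp only [flowLogDeriv]
  gcongr

lemma flowWeight_monotoneOn (Y : HalfAngleFlow q B y) :
    MonotoneOn (fun t => flowWeight q (y t)) (Set.Icc 0 B) :=
  monotoneOn_of_hasDerivAt_nonneg (convex_Icc 0 B) (fun _ => Y.hasDerivAt_flowWeight) fun _ ht =>
    mul_nonneg (Y.flowLogDeriv_nonneg ht) (flowWeight_pos (Y.one_sub_sq_pos ht)).le

lemma convexOn_flowWeightPrimitive (Y : HalfAngleFlow q B y) :
    ConvexOn ℝ (Set.Icc 0 B) fun t => flowWeightPrimitive q (y t) := by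
  refine convexOn_of_hasDerivAt_of_monotoneOn (convex_Icc 0 B)
    (fun _ => Y.hasDerivAt_flowWeightPrimitive) fun s hs t ht hst => ?_
  have hq := Y.pos
  have hy₀ := Y.nonneg hs
  have hy₁ := Y.nonneg ht
  have hle := Y.monotoneOn hs ht hst
  have hweight := Y.flowWeight_monotoneOn hs ht hst
  have hpos := (flowWeight_pos (q := q) (Y.one_sub_sq_pos hs)).le
  dsimp only at hweight ⊢
  gcongr

lemma flowWeightPrimitive_sub_le (Y : HalfAngleFlow q B y) (hs : s ∈ Set.Icc 0 B)
    (ht : t ∈ Set.Icc 0 B) (hst : s ≤ t) :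
    flowWeightPrimitive q (y t) - flowWeightPrimitive q (y s) ≤
      (y t ^ 2 - y s ^ 2) * flowWeight q (y t) := by
  have hsub : Set.Icc s t ⊆ Set.Icc 0 B := Set.Icc_subset_Icc hs.1 ht.2
  have hq := Y.pos
  have hends := monotoneOn_of_hasDerivAt_nonneg (convex_Icc s t)
    (fun r hr => ((Y.hasDerivAt_sq (hsub hr)).mul_const (flowWeight q (y t))).sub
      (Y.hasDerivAt_flowWeightPrimitive (hsub hr)))
    (fun r hr => by
      have hy := Y.nonneg (hsub hr)
      rw [← mul_sub]
      exact mul_nonneg (by positivity)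
        (sub_nonneg.2 (Y.flowWeight_monotoneOn (hsub hr) ht hr.2)))
    (Set.left_mem_Icc.2 hst) (Set.right_mem_Icc.2 hst) hst
  simp only [Pi.sub_apply] at hends
  linarith

lemma exists_flowLogDeriv_eq (Y : HalfAngleFlow q B y) {κ : ℝ} (hκ : 0 ≤ κ) (hB : 0 ≤ B)
    (hle : κ ≤ flowLogDeriv q (y B)) : ∃ t ∈ Set.Icc 0 B, flowLogDeriv q (y t) = κ := by
  have hcont : ContinuousOn (fun t => flowLogDeriv q (y t)) (Set.Icc 0 B) := by
    intro t ht
    have hy := (Y.hasDerivAt t ht).continuousAt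
    exact ((hy.mul (continuousAt_const.add (continuousAt_const.mul (hy.pow 2)))).div
      (continuousAt_const.mul (continuousAt_const.sub (hy.pow 2)))
      (mul_ne_zero Y.pos.ne' (Y.one_sub_sq_pos ht).ne')).continuousWithinAt
  have hzero : flowLogDeriv q (y 0) = 0 := by simp [flowLogDeriv, Y.zero]
  exact intermediate_value_Icc hB hcont ⟨hzero.trans_le hκ, hle⟩

end HalfAngleFlow

lemma le_two_mul_sum_of_convexOn {B h : ℝ} {J : ℝ → ℝ} (hh : 0 ≤ h)
    (hconv : ConvexOn ℝ (Set.Icc 0 B) J) (hJ0 : J 0 = 0) (hJh : 0 ≤ J h) (k : ℕ)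
    (hB : flushAngle h 0 k + h ≤ B) :
    J (flushAngle h 0 k + h) ≤
      2 * ∑ i ∈ range (k + 1), (J (flushAngle h 0 i + h) - J (flushAngle h 0 i)) := by
  induction k with
  | zero =>
    simp only [flushAngle_zero_zero, zero_add, range_one, sum_singleton, hJ0]
    linarith
  | succ k ih =>
    have hnext := flushAngle_add_one h 0 k
    have hk := flushAngle_nonneg hh 0 k
    have hmid := add_le_add_of_convexOn hconv (h := h) (s := flushAngle h 0 k + h)
      (t := flushAngle h 0 (k + 1)) ⟨by linarith, by linarith⟩ ⟨by linarith, hB⟩ (by linarith) hh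
    rw [show flushAngle h 0 k + h + h = flushAngle h 0 (k + 1) by linarith] at hmid
    rw [sum_range_succ]
    linarith [ih (by linarith)]

namespace HalfAngleFlow

variable {q B h ρ : ℝ} {y : ℝ → ℝ} {k : ℕ}

lemma flushAngle_mem (hh : 0 ≤ h) (hB : flushAngle h 0 k + h = B) {i : ℕ} (hi : i < k + 1) :
    flushAngle h 0 i ∈ Set.Icc 0 B ∧ flushAngle h 0 i + h ∈ Set.Icc 0 B := by
  have hle := flushAngle_mono hh 0 (Nat.lt_succ_iff.1 hi)
  have hnonneg := flushAngle_nonneg hh 0 i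
  exact ⟨⟨hnonneg, by linarith⟩, by linarith, by linarith⟩

lemma pairSum_le_of_le_flowWeightPrimitive (Y : HalfAngleFlow q B y)
    (hB : flushAngle h 0 k + h = B) (hh : 0 ≤ h) (hρ : 0 ≤ ρ)
    (htail : ∀ j < k + 1,
      pairSum ρ h (fun t => flowWeight q (y t)) (flushAngle h 0) j (k + 1) ≤ 0)
    (hJ : 2 * q ^ 2 ≤ flowWeightPrimitive q (y B)) :
    pairSum ρ h (fun t => (1 + y t ^ 2) * flowWeight q (y t)) (flushAngle h 0) 0 (k + 1) ≤
      -(ρ * q ^ 2) := by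
  have hmem : ∀ i < k + 1, _ := fun i => flushAngle_mem hh hB (i := i)
  have hhB : h ∈ Set.Icc 0 B := by simpa using (hmem 0 k.succ_pos).2
  have hJ0 : flowWeightPrimitive q (y 0) = 0 := by simp [flowWeightPrimitive, Y.zero]
  have hJh : 0 ≤ flowWeightPrimitive q (y h) := by
    have hslope := monotoneOn_of_hasDerivAt_nonneg (convex_Icc 0 B)
      (fun _ => Y.hasDerivAt_flowWeightPrimitive) (fun t ht => by
        have := Y.nonneg ht
        have := Y.pos
        have := (flowWeight_pos (q := q) (Y.one_sub_sq_pos ht)).le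
        positivity) (Set.left_mem_Icc.2 (hhB.1.trans hhB.2)) hhB hh
    simpa only [hJ0] using hslope
  have hprimitive := le_two_mul_sum_of_convexOn hh Y.convexOn_flowWeightPrimitive hJ0 hJh k hB.le
  rw [hB] at hprimitive
  have hgain : q ^ 2 ≤ ∑ i ∈ range (k + 1), (y (flushAngle h 0 i + h) ^ 2 -
      y (flushAngle h 0 i) ^ 2) * flowWeight q (y (flushAngle h 0 i + h)) := by
    have := sum_le_sum fun i hi => Y.flowWeightPrimitive_sub_le (hmem i (mem_range.1 hi)).1
      (hmem i (mem_range.1 hi)).2 (le_add_of_nonneg_right hh)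
    linarith
  have hweighted : ∑ i ∈ range (k + 1), (1 + y (flushAngle h 0 i) ^ 2) *
      (flowWeight q (y (flushAngle h 0 i)) - ρ * flowWeight q (y (flushAngle h 0 i + h))) ≤ 0 := by
    refine sum_mul_nonpos_of_sum_Ico_nonpos (fun i _ => by positivity) (fun i hi => ?_) htail
    have := Y.sq_le_sq (hmem i (by omega)).1 (hmem (i + 1) hi).1 (flushAngle_mono hh 0 i.le_succ)
    linarith
  have hsplit : pairSum ρ h (fun t => (1 + y t ^ 2) * flowWeight q (y t)) (flushAngle h 0) 0
        (k + 1) =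
      ∑ i ∈ range (k + 1), (1 + y (flushAngle h 0 i) ^ 2) *
        (flowWeight q (y (flushAngle h 0 i)) - ρ * flowWeight q (y (flushAngle h 0 i + h))) -
      ρ * ∑ i ∈ range (k + 1), (y (flushAngle h 0 i + h) ^ 2 - y (flushAngle h 0 i) ^ 2) *
        flowWeight q (y (flushAngle h 0 i + h)) := by
    rw [pairSum, ← range_eq_Ico, mul_sum, ← sum_sub_distrib]
    exact sum_congr rfl fun i _ => by ring
  linarith [mul_le_mul_of_nonneg_left hgain hρ]

/- The constants `21 / 25` and `87 / 100` balance the two requirements on `Z`: the value at the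
balance point must reach `2 q²`, while `F = (Z - y²) V` must satisfy a differential inequality on
the whole region where the primitive of the weight stays below `2 q²`. -/
lemma exists_flowComparison (Y : HalfAngleFlow q B y) (hB : flushAngle h 0 k + h = B)
    (hh : 0 ≤ h) (hρ : 0 ≤ ρ) (hρκ : ρ * exp (√(3 + 4 * q ^ 2) * h) ≤ 1)
    (hregion : ∀ t ∈ Set.Icc 0 B,
      y t ^ 2 * (2 + q ^ 2 * y t ^ 2) ≤ 4 * q ^ 2 * (1 - y t ^ 2)) :
    ∃ Z : ℝ, (Z = 21 / 25 ∨ Z = 87 / 100) ∧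
      (∀ t ∈ Set.Icc 0 B,
        flowComparisonDeriv Z q (y t) ≤ √(3 + 4 * q ^ 2) * flowComparison Z q (y t)) ∧
      ρ * (√(3 + 4 * q ^ 2) * flowPrimitive Z q (y B) + Z - flowComparison Z q (y B)) ≤
        2 * pairSum ρ h (fun t => flowComparison Z q (y t)) (flushAngle h 0) 0 (k + 1) := by
  have hκ := sqrt_nonneg (3 + 4 * q ^ 2)
  have hprimitive₀ : ∀ Z, flowPrimitive Z q (y 0) = 0 := fun Z => by simp [flowPrimitive, Y.zero]
  have hcomparison₀ : ∀ Z, flowComparison Z q (y 0) = Z := fun Z => by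
    simp [flowComparison, flowWeight, Y.zero]
  have hderiv₀ : ∀ Z, flowComparisonDeriv Z q (y 0) = 0 := fun Z => by
    simp [flowComparisonDeriv, Y.zero]
  have hnonneg : ∀ Z, (∀ t ∈ Set.Icc 0 B, y t ^ 2 ≤ Z) →
      ∀ t ∈ Set.Icc 0 B, 0 ≤ flowComparison Z q (y t) := fun Z hZ t ht =>
    mul_nonneg (sub_nonneg.2 (hZ t ht)) (flowWeight_pos (Y.one_sub_sq_pos ht)).le
  rcases le_total (7 / 10) (q ^ 2) with hc | hc
  · have hz : ∀ t ∈ Set.Icc 0 B, y t ^ 2 ≤ 83 / 100 := fun t ht =>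
      le_of_region_large hc (hregion t ht)
    have hle : ∀ t ∈ Set.Icc 0 B, flowComparisonDeriv₂ (21 / 25) q (y t) ≤
        √(3 + 4 * q ^ 2) ^ 2 * flowComparison (21 / 25) q (y t) := fun t ht =>
      flowComparisonDeriv₂_le_large Y.pos hc (hz t ht)
    refine ⟨21 / 25, Or.inl rfl, deriv_le_mul_of_deriv2_le hκ
      (fun _ => Y.hasDerivAt_flowComparison _) (fun _ => Y.hasDerivAt_flowComparisonDeriv _) hle
      (by norm_num [hcomparison₀]) (hderiv₀ _), ?_⟩
    have hsum := mul_le_two_mul_pairSum_of_deriv2_le hκ hρ hh hρκ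
      (fun _ => Y.hasDerivAt_flowPrimitive _) (fun _ => Y.hasDerivAt_flowComparison _)
      (fun _ => Y.hasDerivAt_flowComparisonDeriv _) hle
      (hnonneg _ fun t ht => (hz t ht).trans (by norm_num)) (hprimitive₀ _) (hderiv₀ _) k hB.le
    rwa [hcomparison₀, hB] at hsum
  · have hz : ∀ t ∈ Set.Icc 0 B, y t ^ 2 ≤ 542 / 1000 := fun t ht =>
      le_of_region_small (sq_nonneg q) hc (hregion t ht)
    have hle : ∀ t ∈ Set.Icc 0 B, flowComparisonDeriv (87 / 100) q (y t) ≤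
        √(3 + 4 * q ^ 2) * flowComparison (87 / 100) q (y t) := fun t ht =>
      flowComparisonDeriv_le_small Y.pos (hz t ht) (hregion t ht)
    refine ⟨87 / 100, Or.inr rfl, hle, ?_⟩
    have hsum := mul_le_two_mul_pairSum_of_le_deriv2 hκ hρ hh hρκ
      (fun _ => Y.hasDerivAt_flowPrimitive _) (fun _ => Y.hasDerivAt_flowComparison _)
      (fun _ => Y.hasDerivAt_flowComparisonDeriv _) hle
      (fun t ht => sqrt_mul_flowComparisonDeriv_le_small Y.pos (Y.nonneg ht) hc (hz t ht))
      (hnonneg _ fun t ht => (hz t ht).trans (by norm_num)) (hprimitive₀ _) k hB.le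
    rwa [hcomparison₀, hB] at hsum

lemma sqrt_le_flowLogDeriv (Y : HalfAngleFlow q B y) (hB : flushAngle h 0 k + h = B)
    (hh : 0 < h) (hρ : 0 < ρ) (hρκ : ρ * exp (√(3 + 4 * q ^ 2) * h) ≤ 1)
    (hlast : pairSum ρ h (fun t => flowWeight q (y t)) (flushAngle h 0) k (k + 1) ≤ 0) :
    √(3 + 4 * q ^ 2) ≤ flowLogDeriv q (y B) := by
  by_contra! hlt
  obtain ⟨hk, hk'⟩ := flushAngle_mem hh.le hB k.lt_succ_self
  have hgrowth := le_exp_mul_of_hasDerivAt_le (convex_Icc 0 B)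
    (fun _ => Y.hasDerivAt_flowWeight) (fun t ht => mul_le_mul_of_nonneg_right
      (Y.flowLogDeriv_monotoneOn ht (hB ▸ hk') ht.2) (flowWeight_pos (Y.one_sub_sq_pos ht)).le)
    hk hk' (le_add_of_nonneg_right hh.le)
  rw [add_sub_cancel_left] at hgrowth
  simp only [pairSum, Nat.Ico_succ_singleton, sum_singleton] at hlast
  have hpos := flowWeight_pos (q := q) (Y.one_sub_sq_pos hk)
  have hrate : ρ * exp (flowLogDeriv q (y B) * h) < 1 :=
    (mul_lt_mul_of_pos_left (exp_lt_exp.2 (mul_lt_mul_of_pos_right hlt hh)) hρ).trans_le hρκ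
  have hupper := mul_le_mul_of_nonneg_left hgrowth hρ.le
  have hstrict := mul_lt_mul_of_pos_right hrate hpos
  linarith

lemma two_mul_sq_le_of_le_flowLogDeriv (Y : HalfAngleFlow q B y) (hB : 0 ≤ B) {Z : ℝ}
    (hZ : Z = 21 / 25 ∨ Z = 87 / 100)
    (hderiv : ∀ t ∈ Set.Icc 0 B,
      flowComparisonDeriv Z q (y t) ≤ √(3 + 4 * q ^ 2) * flowComparison Z q (y t))
    (hrate : √(3 + 4 * q ^ 2) ≤ flowLogDeriv q (y B)) :
    2 * q ^ 2 ≤ √(3 + 4 * q ^ 2) * flowPrimitive Z q (y B) + Z - flowComparison Z q (y B) := by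
  obtain ⟨t, ht, hbalance⟩ := Y.exists_flowLogDeriv_eq (sqrt_nonneg _) hB hrate
  have hvalue := two_mul_sq_le_of_flowLogDeriv_eq hZ Y.pos (Y.nonneg ht) (Y.lt_one t ht) hbalance
  have hmono := monotoneOn_of_hasDerivAt_nonneg (convex_Icc 0 B)
    (fun t ht => ((Y.hasDerivAt_flowPrimitive Z ht).const_mul √(3 + 4 * q ^ 2)).sub
      (Y.hasDerivAt_flowComparison Z ht))
    (fun t ht => sub_nonneg.2 (hderiv t ht)) ht (Set.right_mem_Icc.2 hB) ht.2
  simp only [Pi.sub_apply] at hmono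
  linarith

lemma pairSum_le (Y : HalfAngleFlow q B y) (hB : flushAngle h 0 k + h = B)
    (hh : 0 < h) (hρ : 0 < ρ) (hρκ : ρ * exp (√(3 + 4 * q ^ 2) * h) ≤ 1)
    (htail : ∀ j < k + 1,
      pairSum ρ h (fun t => flowWeight q (y t)) (flushAngle h 0) j (k + 1) ≤ 0) :
    pairSum ρ h (fun t => (1 + y t ^ 2) * flowWeight q (y t)) (flushAngle h 0) 0 (k + 1) ≤
      -(ρ * q ^ 2) := by
  rcases le_total (2 * q ^ 2) (flowWeightPrimitive q (y B)) with hJ | hJ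
  · exact Y.pairSum_le_of_le_flowWeightPrimitive hB hh.le hρ.le htail hJ
  have hBmem : B ∈ Set.Icc 0 B := hB ▸ (flushAngle_mem hh.le hB k.lt_succ_self).2
  have hregion : ∀ t ∈ Set.Icc 0 B,
      y t ^ 2 * (2 + q ^ 2 * y t ^ 2) ≤ 4 * q ^ 2 * (1 - y t ^ 2) := fun t ht => by
    have hsq := Y.sq_le_sq ht hBmem ht.2
    calc y t ^ 2 * (2 + q ^ 2 * y t ^ 2) ≤ y B ^ 2 * (2 + q ^ 2 * y B ^ 2) := by gcongr
      _ ≤ 4 * q ^ 2 * (1 - y B ^ 2) :=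
        region_of_flowWeightPrimitive_le (Y.one_sub_sq_pos hBmem) hJ
      _ ≤ 4 * q ^ 2 * (1 - y t ^ 2) := by gcongr
  obtain ⟨Z, hZ, hderiv, hsum⟩ := Y.exists_flowComparison hB hh.le hρ.le hρκ hregion
  have hvalue := Y.two_mul_sq_le_of_le_flowLogDeriv hBmem.1 hZ hderiv
    (Y.sqrt_le_flowLogDeriv hB hh hρ hρκ (htail k k.lt_succ_self))
  have hsplit : pairSum ρ h (fun t => (1 + y t ^ 2) * flowWeight q (y t)) (flushAngle h 0) 0
        (k + 1) =
      (1 + Z) * pairSum ρ h (fun t => flowWeight q (y t)) (flushAngle h 0) 0 (k + 1) +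
        -1 * pairSum ρ h (fun t => flowComparison Z q (y t)) (flushAngle h 0) 0 (k + 1) := by
    rw [← pairSum_add_mul]
    exact congrArg (pairSum ρ h · _ _ _) (funext fun t => by rw [flowComparison]; ring)
  have hZ1 : 0 ≤ 1 + Z := by rcases hZ with rfl | rfl <;> norm_num
  linarith [mul_nonpos_of_nonneg_of_nonpos hZ1 (htail 0 k.succ_pos),
    mul_le_mul_of_nonneg_left hvalue hρ.le]

end HalfAngleFlow

/-- The half-angle tangent `tan (t / 2)`, scaled by `1 / q`. -/
noncomputable def scaledTanHalf (q t : ℝ) : ℝ := sin t / ((1 + cos t) * q)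

section ScaledTanHalf

variable {q x t : ℝ}

lemma hasDerivAt_scaledTanHalf (hq : q ≠ 0) (ht : 1 + cos t ≠ 0) :
    HasDerivAt (scaledTanHalf q) ((1 + q ^ 2 * scaledTanHalf q t ^ 2) / (2 * q)) t := by
  refine ((hasDerivAt_sin t).div (((hasDerivAt_cos t).const_add 1).mul_const q)
    (mul_ne_zero ht hq)).congr_deriv ?_
  rw [scaledTanHalf]
  field_simp
  linear_combination sin_sq_add_cos_sq t

lemma scaledTanHalf_sq (hx : -1 < x) (hq : q ^ 2 = (1 - x) / (1 + x)) (ht : t ∈ visibleArc x) :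
    scaledTanHalf q t ^ 2 = (1 - cos t) * (1 + x) / ((1 + cos t) * (1 - x)) := by
  have hcos : 1 + cos t ≠ 0 := by linarith [ht.2]
  have hadd : 1 + x ≠ 0 := by linarith
  have hsub : 1 - x ≠ 0 := by linarith [ht.2, cos_le_one t]
  rw [scaledTanHalf, div_pow, mul_pow, sin_sq, hq]
  field_simp
  ring

lemma one_sub_scaledTanHalf_sq (hx : -1 < x) (hq : q ^ 2 = (1 - x) / (1 + x))
    (ht : t ∈ visibleArc x) :
    1 - scaledTanHalf q t ^ 2 = 2 * (cos t - x) / ((1 + cos t) * (1 - x)) := by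
  have hcos : 1 + cos t ≠ 0 := by linarith [ht.2]
  have hsub : 1 - x ≠ 0 := by linarith [ht.2, cos_le_one t]
  rw [scaledTanHalf_sq hx hq ht]
  field_simp
  ring

lemma flowWeight_scaledTanHalf (hx : -1 < x) (hq : q ^ 2 = (1 - x) / (1 + x))
    (ht : t ∈ visibleArc x) :
    flowWeight q (scaledTanHalf q t) = (1 - x) ^ 2 / 2 * linWeightDeriv x t := by
  have hcos : 1 + cos t ≠ 0 := by linarith [ht.2]
  have hden : cos t - x ≠ 0 := (sub_pos.2 ht.2).ne'
  have hadd : 1 + x ≠ 0 := by linarith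
  have hsub : 1 - x ≠ 0 := by linarith [ht.2, cos_le_one t]
  rw [flowWeight, one_sub_scaledTanHalf_sq hx hq ht, scaledTanHalf_sq hx hq ht, linWeightDeriv, hq]
  field_simp
  ring

lemma one_add_sq_mul_flowWeight_scaledTanHalf (hx : -1 < x) (hq : q ^ 2 = (1 - x) / (1 + x))
    (ht : t ∈ visibleArc x) :
    (1 + scaledTanHalf q t ^ 2) * flowWeight q (scaledTanHalf q t) =
      (1 - x) * sqrtWeightDeriv x t := by
  have hcos : 1 + cos t ≠ 0 := by linarith [ht.2]
  have hsub : 1 - x ≠ 0 := by linarith [ht.2, cos_le_one t]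
  rw [flowWeight_scaledTanHalf hx hq ht, scaledTanHalf_sq hx hq ht, linWeightDeriv,
    sqrtWeightDeriv]
  field_simp
  ring

lemma halfAngleFlow_scaledTanHalf {B : ℝ} (hx : -1 < x) (hq₀ : 0 < q)
    (hq : q ^ 2 = (1 - x) / (1 + x)) (hB : B ∈ visibleArc x) :
    HalfAngleFlow q B (scaledTanHalf q) where
  pos := hq₀
  zero := by simp [scaledTanHalf]
  hasDerivAt t ht := hasDerivAt_scaledTanHalf hq₀.ne'
    (by linarith [(mem_visibleArc_of_le hB ht.1 ht.2).2])
  lt_one t ht := by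
    have hvis := mem_visibleArc_of_le hB ht.1 ht.2
    have hpos : 0 < 1 - scaledTanHalf q t ^ 2 := by
      rw [one_sub_scaledTanHalf_sq hx hq hvis]
      have := hvis.2
      exact div_pos (by linarith) (mul_pos (by linarith) (by linarith [cos_le_one t]))
    nlinarith

end ScaledTanHalf

namespace PairConfig

variable {h x ρ : ℝ} {σ m : ℕ} {a : ℕ → ℝ}

lemma pairSum_tail_nonpos (A : PairConfig h x σ m a) (hh : 0 < h) (hρ : 0 ≤ ρ) {w : ℝ → ℝ}
    (hw : ∀ t ∈ visibleArc x, 0 < w t) (hlog : ConvexOn ℝ (visibleArc x) fun t => log (w t))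
    (hsum : pairSum ρ h w a 0 m ≤ 0) {j : ℕ} (hj : j < m) : pairSum ρ h w a j m ≤ 0 := by
  rw [pairSum, ← range_eq_Ico] at hsum
  obtain ⟨t, -, hpos, hneg⟩ := exists_pos_of_lt_of_nonpos_of_le
    (f := fun i => w (a i)) (g := fun i => w (a i + h)) (fun i hi => hw _ (A.outer_mem hh hi)) hρ
    (fun i j hij hj => mul_le_mul_of_convexOn_log hlog hw (A.outer_mem hh (hij.trans hj))
      (A.inner_mem hh hj) (by linarith [A.add_two_mul_le hh i j hij hj]) hh.le)
    (j.zero_le.trans_lt hj) hsum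
  exact sum_Ico_nonpos_of_sum_range_nonpos hpos hneg hsum hj.le

lemma pairSum_sqrtWeightDeriv_flush_le (A : PairConfig h x 0 m (flushAngle h 0)) (hm : 1 ≤ m)
    (hh : 0 < h) (hx : -1 < x) (hρ : 0 < ρ)
    (hρκ : ρ * exp (√(3 + 4 * ((1 - x) / (1 + x))) * h) ≤ 1)
    (hlin : pairSum ρ h (linWeightDeriv x) (flushAngle h 0) 0 m ≤ 0) :
    pairSum ρ h (sqrtWeightDeriv x) (flushAngle h 0) 0 m ≤ -(ρ * nodeWeight (-x) 0) := by
  obtain ⟨k, rfl⟩ := Nat.exists_eq_add_of_le' hm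
  have hsub : 0 < 1 - x := sub_pos.2 A.lt_one
  have hadd : 0 < 1 + x := by linarith
  have hq : √((1 - x) / (1 + x)) ^ 2 = (1 - x) / (1 + x) := sq_sqrt (by positivity)
  set q := √((1 - x) / (1 + x))
  have Y := halfAngleFlow_scaledTanHalf hx (sqrt_pos.2 (div_pos hsub hadd)) hq
    (A.inner_mem hh k.lt_succ_self)
  have htail : ∀ j < k + 1, pairSum ρ h (fun t => flowWeight q (scaledTanHalf q t))
      (flushAngle h 0) j (k + 1) ≤ 0 := fun j hj => by
    rw [A.pairSum_congr hh (fun t => flowWeight_scaledTanHalf hx hq), pairSum_const_mul]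
    exact mul_nonpos_of_nonneg_of_nonpos (by positivity) (A.pairSum_tail_nonpos hh hρ.le
      (fun t => linWeightDeriv_pos hx) (convexOn_log_linWeightDeriv hx) hlin hj)
  have hflow := Y.pairSum_le rfl hh hρ (by rwa [hq]) htail
  rw [A.pairSum_congr hh (fun t => one_add_sq_mul_flowWeight_scaledTanHalf hx hq),
    pairSum_const_mul, hq] at hflow
  have hweight : (1 - x) * -(ρ * nodeWeight (-x) 0) = -(ρ * ((1 - x) / (1 + x))) := by
    rw [nodeWeight, cos_zero, sub_neg_eq_add]
    field_simp
  exact le_of_mul_le_mul_left (hflow.trans_eq hweight.symm) hsub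

end PairConfig

/-! ### First-order conditions at an optimal configuration -/

open scoped Topology

/-- An optimal configuration: pairs `a` to the right and, mirrored, pairs `b` to the left of `x`,
for which the total value is zero, while it is nonpositive for every other configuration with the
same numbers of pairs and lone nodes. -/
structure IsOptimal (ρ h : ℝ) (σ τ m p : ℕ) (x : ℝ) (a b : ℕ → ℝ) : Prop where
  right : PairConfig h x σ m a
  left : PairConfig h (-x) τ p b
  zero : sideValue ρ h x σ m a + sideValue ρ h (-x) τ p b = 0
  le_zero : ∀ x' a' b', PairConfig h x' σ m a' → PairConfig h (-x') τ p b' →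
    sideValue ρ h x' σ m a' + sideValue ρ h (-x') τ p b' ≤ 0

lemma nonpos_of_hasDerivAt_of_eventually_le {f : ℝ → ℝ} {f' s : ℝ} (hf : HasDerivAt f f' s)
    (hle : ∀ᶠ t in 𝓝[>] s, f t ≤ f s) : f' ≤ 0 := by
  refine le_of_tendsto ((hasDerivWithinAt_iff_tendsto_slope' Set.self_notMem_Ioi).1
    (hf.hasDerivWithinAt (s := Set.Ioi s))) ?_
  filter_upwards [hle, self_mem_nhdsWithin] with t ht (hst : s < t)
  rw [slope_def_field]
  exact div_nonpos_of_nonpos_of_nonneg (sub_nonpos.2 ht) (sub_pos.2 hst).le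

lemma nonneg_of_hasDerivAt_of_eventually_le {f : ℝ → ℝ} {f' s : ℝ} (hf : HasDerivAt f f' s)
    (hle : ∀ᶠ t in 𝓝[<] s, f t ≤ f s) : 0 ≤ f' := by
  refine ge_of_tendsto ((hasDerivWithinAt_iff_tendsto_slope' Set.self_notMem_Iio).1
    (hf.hasDerivWithinAt (s := Set.Iio s))) ?_
  filter_upwards [hle, self_mem_nhdsWithin] with t ht (hts : t < s)
  rw [slope_def_field]
  exact div_nonneg_of_nonpos (sub_nonpos.2 ht) (sub_neg.2 hts).le

/-- The configuration `a` with the pairs of index at least `j` moved by `t` towards `x`. -/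
noncomputable def shiftTail (a : ℕ → ℝ) (j : ℕ) (t : ℝ) (i : ℕ) : ℝ :=
  if j ≤ i then a i + t else a i

lemma shiftTail_zero (a : ℕ → ℝ) (j : ℕ) : shiftTail a j 0 = a := by
  ext i
  simp [shiftTail]

lemma shiftTail_of_le {j i : ℕ} (hji : j ≤ i) (a : ℕ → ℝ) (t : ℝ) :
    shiftTail a j t i = a i + t :=
  if_pos hji

lemma shiftTail_of_lt {j i : ℕ} (hij : i < j) (a : ℕ → ℝ) (t : ℝ) : shiftTail a j t i = a i :=
  if_neg hij.not_ge

lemma hasDerivAt_nodeWeight_left {x α : ℝ} (hx : x < cos α) :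
    HasDerivAt (fun y => nodeWeight y α) (nodeWeight x α ^ 2) x := by
  refine (((hasDerivAt_id' x).const_sub (cos α)).inv (sub_pos.2 hx).ne').congr_deriv ?_
  rw [neg_neg, one_div, nodeWeight, inv_pow]

namespace PairConfig

variable {ρ h x : ℝ} {σ m j : ℕ} {a a' : ℕ → ℝ}

lemma of_le (A : PairConfig h x σ m a) (hh : 0 ≤ h) (hstart : 0 < m → σ * h ≤ a' 0)
    (hgap : ∀ i, i + 1 < m → a' i + 2 * h ≤ a' (i + 1)) (hle : ∀ i < m, a' i ≤ a i) :
    PairConfig h x σ m a' := by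
  have hstart' : ∀ i < m, σ * h ≤ a' i := by
    intro i
    induction i with
    | zero => exact hstart
    | succ i ih => exact fun hi => by linarith [hgap i hi, ih (by omega)]
  refine ⟨hstart', hgap, fun i hi => by linarith [A.le_pi i hi, hle i hi], fun i hi => ?_,
    A.lt_one⟩
  have hnonneg : 0 ≤ a' i := le_trans (by positivity) (hstart' i hi)
  exact (A.lt_cos i hi).trans_le
    (cos_le_cos_of_nonneg_of_le_pi (by linarith) (A.le_pi i hi) (by linarith [hle i hi]))

lemma hasDerivAt_sideValue_shiftTail (A : PairConfig h x σ m a) (hh : 0 < h) (j : ℕ) :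
    HasDerivAt (fun t => sideValue ρ h x σ m (shiftTail a j t))
      (pairSum ρ h (nodeWeightDeriv x) a j m) 0 := by
  have hsum : HasDerivAt (fun t => sideValue ρ h x σ m (shiftTail a j t))
      (∑ i ∈ Ico 0 m,
        if j ≤ i then nodeWeightDeriv x (a i) - ρ * nodeWeightDeriv x (a i + h) else 0) 0 := by
    refine HasDerivAt.sub_const _ (HasDerivAt.fun_sum fun i hi => ?_)
    have him := (mem_Ico.1 hi).2
    split_ifs with hji
    · simp only [shiftTail_of_le hji, add_right_comm _ _ h]
      exact (HasDerivAt.comp_const_add _ _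
        (by simpa using hasDerivAt_nodeWeight (A.outer_mem hh him).2.ne')).sub
        ((HasDerivAt.comp_const_add _ _
          (by simpa using hasDerivAt_nodeWeight (A.lt_cos i him).ne')).const_mul ρ)
    · simp only [shiftTail_of_lt (not_le.1 hji)]
      exact hasDerivAt_const _ _
  refine hsum.congr_deriv ?_
  rw [← sum_filter, pairSum]
  congr 1
  ext i
  simp only [mem_filter, mem_Ico]
  omega

lemma eventually_shiftTail (A : PairConfig h x σ m a) (hx : -1 < x) (j : ℕ) :
    ∀ᶠ t in 𝓝[>] (0 : ℝ), PairConfig h x σ m (shiftTail a j t) := by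
  have hroom : ∀ i ∈ range m, ∀ᶠ t in 𝓝 (0 : ℝ), x < cos (a i + t + h) ∧ a i + t + h < π := by
    intro i hi
    have hi' := mem_range.1 hi
    have hcos : ContinuousAt (fun t => cos (a i + t + h)) 0 := by fun_prop
    have hadd : ContinuousAt (fun t => a i + t + h) 0 := by fun_prop
    exact (hcos.eventually_const_lt (by simpa using A.lt_cos i hi')).and
      (hadd.eventually_lt_const (by simpa using A.lt_pi hx hi'))
  filter_upwards [self_mem_nhdsWithin,
    ((Filter.eventually_all_finset (range m)).2 hroom).filter_mono nhdsWithin_le_nhds]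
    with t (ht : 0 < t) hroom
  refine ⟨fun i hi => ?_, fun i hi => ?_, fun i hi => ?_, fun i hi => ?_, A.lt_one⟩
  · have := A.start i hi
    unfold shiftTail
    split_ifs <;> linarith
  · have := A.gap i hi
    unfold shiftTail
    split_ifs <;> first | omega | linarith
  · have := A.le_pi i hi
    have := (hroom i (mem_range.2 hi)).2
    unfold shiftTail
    split_ifs <;> linarith
  · have := A.lt_cos i hi
    have := (hroom i (mem_range.2 hi)).1
    unfold shiftTail
    split_ifs <;> assumption

lemma shiftTail_of_nonpos (A : PairConfig h x σ m a) (hh : 0 ≤ h) {t : ℝ} (ht : t ≤ 0)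
    (hfirst : j = 0 → σ * h ≤ a j + t) (hprev : ∀ k, k + 1 = j → a k + 2 * h ≤ a j + t) :
    PairConfig h x σ m (shiftTail a j t) := by
  refine A.of_le hh (fun hm => ?_) (fun i hi => ?_) fun i _ => ?_
  · rcases Nat.eq_zero_or_pos j with rfl | hj
    · simpa [shiftTail] using hfirst rfl
    · simpa [shiftTail_of_lt hj] using A.start 0 hm
  · have hgap := A.gap i hi
    rcases lt_trichotomy j (i + 1) with hij | rfl | hij
    · rw [shiftTail_of_le (by omega), shiftTail_of_le (by omega)]
      linarith
    · rw [shiftTail_of_lt (by omega), shiftTail_of_le le_rfl]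
      exact hprev i rfl
    · rwa [shiftTail_of_lt (by omega), shiftTail_of_lt hij]
  · unfold shiftTail
    split_ifs <;> linarith

lemma eventually_shiftTail_of_lt (A : PairConfig h x σ m a) (hh : 0 ≤ h)
    (hfirst : j = 0 → σ * h < a j) (hprev : ∀ k, k + 1 = j → a k + 2 * h < a j) :
    ∀ᶠ t in 𝓝[<] (0 : ℝ), PairConfig h x σ m (shiftTail a j t) := by
  have hcont : ContinuousAt (fun t => a j + t) 0 := by fun_prop
  have hslack : ∀ᶠ t in 𝓝 (0 : ℝ),
      (j = 0 → σ * h ≤ a j + t) ∧ ∀ k, k + 1 = j → a k + 2 * h ≤ a j + t := by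
    rcases j with _ | k
    · filter_upwards [hcont.eventually_const_lt (u := σ * h) (by simpa using hfirst rfl)] with t ht
      exact ⟨fun _ => ht.le, fun k hk => by omega⟩
    · filter_upwards [hcont.eventually_const_lt (u := a k + 2 * h) (by simpa using hprev k rfl)]
        with t ht
      refine ⟨fun h0 => by omega, fun i hi => ?_⟩
      obtain rfl : i = k := by omega
      exact ht.le
  filter_upwards [self_mem_nhdsWithin, hslack.filter_mono nhdsWithin_le_nhds]
    with t (ht : t < 0) hslack
  exact A.shiftTail_of_nonpos hh ht.le hslack.1 hslack.2

lemma hasDerivAt_sideValue_left (A : PairConfig h x σ m a) (hh : 0 < h) :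
    HasDerivAt (fun y => sideValue ρ h y σ m a)
      (pairSum ρ h (fun t => nodeWeight x t ^ 2) a 0 m - σ * (ρ * nodeWeight x 0 ^ 2)) x := by
  refine HasDerivAt.sub (HasDerivAt.fun_sum fun i hi => ?_) ?_
  · have him := (mem_Ico.1 hi).2
    exact (hasDerivAt_nodeWeight_left (A.outer_mem hh him).2).sub
      ((hasDerivAt_nodeWeight_left (A.lt_cos i him)).const_mul ρ)
  · exact ((hasDerivAt_nodeWeight_left (by simpa using A.lt_one)).const_mul ρ).const_mul _

lemma eventually_left (A : PairConfig h x σ m a) : ∀ᶠ y in 𝓝 x, PairConfig h y σ m a := by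
  have hvis : ∀ i ∈ range m, ∀ᶠ y in 𝓝 x, y < cos (a i + h) := fun i hi =>
    continuousAt_id.eventually_lt_const (A.lt_cos i (mem_range.1 hi))
  filter_upwards [(Filter.eventually_all_finset (range m)).2 hvis,
    continuousAt_id.eventually_lt_const A.lt_one] with y hy hy1
  exact ⟨A.start, A.gap, A.le_pi, fun i hi => hy i (mem_range.2 hi), hy1⟩

lemma pairSum_sqrtWeightDeriv_sub (A : PairConfig h x σ m a) (hh : 0 < h) :
    pairSum ρ h (sqrtWeightDeriv x) a 0 m - σ * (ρ * nodeWeight x 0) =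
      (1 - x ^ 2) *
          (pairSum ρ h (fun t => nodeWeight x t ^ 2) a 0 m - σ * (ρ * nodeWeight x 0 ^ 2)) -
        x * sideValue ρ h x σ m a := by
  have hsplit : ∀ t ∈ visibleArc x,
      sqrtWeightDeriv x t = (1 - x ^ 2) * nodeWeight x t ^ 2 + (-x) * nodeWeight x t := by
    intro t ht
    have hne := (sub_pos.2 ht.2).ne'
    rw [sqrtWeightDeriv, nodeWeight]
    field_simp
    ring
  have hlone : nodeWeight x 0 = (1 - x ^ 2) * nodeWeight x 0 ^ 2 + (-x) * nodeWeight x 0 := by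
    have hne := (sub_pos.2 A.lt_one).ne'
    rw [nodeWeight, cos_zero]
    field_simp
    ring
  rw [A.pairSum_congr hh hsplit, pairSum_add_mul, sideValue]
  linear_combination (-(σ : ℝ) * ρ) * hlone

end PairConfig

namespace IsOptimal

variable {ρ h : ℝ} {σ τ m p : ℕ} {x : ℝ} {a b : ℕ → ℝ}

lemma mirror (O : IsOptimal ρ h σ τ m p x a b) : IsOptimal ρ h τ σ p m (-x) b a where
  right := O.left
  left := by simpa using O.right
  zero := by simpa [add_comm] using O.zero
  le_zero x' a' b' ha hb := by simpa [add_comm] using O.le_zero (-x') b' a' hb (by simpa using ha)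

lemma neg_one_lt (O : IsOptimal ρ h σ τ m p x a b) : -1 < x :=
  neg_lt.1 O.left.lt_one

lemma sideValue_le (O : IsOptimal ρ h σ τ m p x a b) {a' : ℕ → ℝ}
    (A' : PairConfig h x σ m a') : sideValue ρ h x σ m a' ≤ sideValue ρ h x σ m a := by
  linarith [O.le_zero x a' b A' O.left, O.zero]

lemma tail_nonpos (O : IsOptimal ρ h σ τ m p x a b) (hh : 0 < h) (j : ℕ) :
    pairSum ρ h (nodeWeightDeriv x) a j m ≤ 0 := by
  refine nonpos_of_hasDerivAt_of_eventually_le (O.right.hasDerivAt_sideValue_shiftTail hh j) ?_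
  filter_upwards [O.right.eventually_shiftTail O.neg_one_lt j] with t ht
  rw [shiftTail_zero]
  exact O.sideValue_le ht

lemma tail_nonneg (O : IsOptimal ρ h σ τ m p x a b) (hh : 0 < h) {j : ℕ}
    (hfirst : j = 0 → σ * h < a j) (hprev : ∀ k, k + 1 = j → a k + 2 * h < a j) :
    0 ≤ pairSum ρ h (nodeWeightDeriv x) a j m := by
  refine nonneg_of_hasDerivAt_of_eventually_le (O.right.hasDerivAt_sideValue_shiftTail hh j) ?_
  filter_upwards [O.right.eventually_shiftTail_of_lt hh.le hfirst hprev] with t ht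
  rw [shiftTail_zero]
  exact O.sideValue_le ht

lemma balance (O : IsOptimal ρ h σ τ m p x a b) (hh : 0 < h) :
    pairSum ρ h (sqrtWeightDeriv x) a 0 m - σ * (ρ * nodeWeight x 0) =
      pairSum ρ h (sqrtWeightDeriv (-x)) b 0 p - τ * (ρ * nodeWeight (-x) 0) := by
  have hderiv := (O.right.hasDerivAt_sideValue_left (ρ := ρ) hh).add
    ((O.left.hasDerivAt_sideValue_left (ρ := ρ) hh).scomp x (hasDerivAt_neg x))
  have hmax : IsLocalMax (fun y => sideValue ρ h y σ m a + sideValue ρ h (-y) τ p b) x := by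
    filter_upwards [O.right.eventually_left,
      (continuous_neg.tendsto x).eventually O.left.eventually_left] with y hya hyb
    rw [O.zero]
    exact O.le_zero y a b hya hyb
  have hcrit := hmax.hasDerivAt_eq_zero hderiv
  rw [smul_eq_mul] at hcrit
  rw [O.right.pairSum_sqrtWeightDeriv_sub hh, O.left.pairSum_sqrtWeightDeriv_sub hh]
  linear_combination (1 - x ^ 2) * hcrit - x * O.zero

lemma eq_flushAngle_of_tail_neg (O : IsOptimal ρ h σ τ m p x a b) (hh : 0 < h)
    (htail : ∀ j < m, pairSum ρ h (nodeWeightDeriv x) a j m < 0) :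
    ∀ i < m, a i = flushAngle h σ i := by
  intro i
  induction i with
  | zero =>
    intro hi
    by_contra hne
    have hlt : σ * h < a 0 :=
      (O.right.start 0 hi).lt_of_ne fun heq => hne (by simpa [flushAngle] using heq.symm)
    exact (htail 0 hi).not_ge (O.tail_nonneg hh (fun _ => hlt) fun k hk => by omega)
  | succ i ih =>
    intro hi
    by_contra hne
    have hlt : a i + 2 * h < a (i + 1) := (O.right.gap i hi).lt_of_ne fun heq =>
      hne (by rw [← heq, ih (by omega), flushAngle_add_one])
    refine (htail _ hi).not_ge (O.tail_nonneg hh (fun h0 => by omega) fun k hk => ?_)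
    obtain rfl : k = i := by omega
    exact hlt

lemma eq_flushAngle_of_pairSum_nonpos (O : IsOptimal ρ h σ τ m p x a b) (hh : 0 < h) (hρ : 0 < ρ)
    (hsum : pairSum ρ h (sqrtWeightDeriv x) a 0 m ≤ 0) : ∀ i < m, a i = flushAngle h σ i :=
  O.eq_flushAngle_of_tail_neg hh fun _ hj =>
    O.right.nodeWeightDeriv_tail_neg_of_sqrt hh O.neg_one_lt hρ hsum hj

lemma eq_flushAngle_even_even (O : IsOptimal ρ h 0 0 m p x a b) (hh : 0 < h) (hρ : 0 < ρ) :
    (∀ i < m, a i = flushAngle h 0 i) ∧ ∀ i < p, b i = flushAngle h 0 i := by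
  have hzero := O.zero
  have hbal := O.balance hh
  simp only [sideValue, Nat.cast_zero, zero_mul, sub_zero] at hzero hbal
  have hsqrt : ∀ {x : ℝ} {m : ℕ} {a : ℕ → ℝ}, PairConfig h x 0 m a → -1 < x →
      pairSum ρ h (nodeWeight x) a 0 m ≤ 0 → pairSum ρ h (sqrtWeightDeriv x) a 0 m ≤ 0 := by
    intro x m a A hx hsum
    rcases Nat.eq_zero_or_pos m with rfl | hm
    · simp [pairSum]
    · exact (A.sqrtWeightDeriv_tail_neg hh hx hρ hsum hm).le
  have hneg : pairSum ρ h (sqrtWeightDeriv x) a 0 m ≤ 0 := by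
    rcases le_total (pairSum ρ h (nodeWeight x) a 0 m) 0 with hle | hle
    · exact hsqrt O.right O.neg_one_lt hle
    · rw [hbal]
      exact hsqrt O.left O.mirror.neg_one_lt (by linarith)
  exact ⟨O.eq_flushAngle_of_pairSum_nonpos hh hρ hneg,
    O.mirror.eq_flushAngle_of_pairSum_nonpos hh hρ (hbal ▸ hneg)⟩

end IsOptimal

/-! ### Optimal configurations with one lone node -/

lemma strictMonoOn_sin_div_one_add_cos :
    StrictMonoOn (fun t => sin t / (1 + cos t)) (Set.Ico 0 π) := by
  have hpos : ∀ t ∈ Set.Ico 0 π, 0 < 1 + cos t := fun t ht => by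
    linarith [cos_pi ▸ cos_lt_cos_of_nonneg_of_le_pi ht.1 le_rfl ht.2]
  exact strictMonoOn_of_hasDerivAt_pos (convex_Ico 0 π)
    (fun t ht => hasDerivAt_sin_div_one_add_cos (hpos t ht).ne') fun t ht => inv_pos.2 (hpos t ht)

lemma exp_mul_le_of_le_hasDerivAt {D : Set ℝ} (hD : Convex ℝ D) {κ : ℝ} {f f' : ℝ → ℝ}
    (hf : ∀ t ∈ D, HasDerivAt f (f' t) t) (hle : ∀ t ∈ D, κ * f t ≤ f' t) {s t : ℝ}
    (hs : s ∈ D) (ht : t ∈ D) (hst : s ≤ t) : exp (κ * (t - s)) * f s ≤ f t := by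
  have hneg := le_exp_mul_of_hasDerivAt_le hD (κ := κ) (fun t ht => (hf t ht).neg)
    (fun t ht => by simpa using hle t ht) hs ht hst
  simpa using hneg

lemma sqrt_three_add_four_mul_le {c t : ℝ} (hc : 0 ≤ c) (ht : 0 < t) :
    √(3 + 4 * c) ≤ 1 / (2 * t) + (3 / 2 + 2 * c) * t := by
  rw [sqrt_le_left (by positivity)]
  have hsq : (1 / (2 * t) + (3 / 2 + 2 * c) * t) ^ 2 =
      3 + 4 * c + (1 / (2 * t) - (3 / 2 + 2 * c) * t) ^ 2 := by
    field_simp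
    ring
  rw [hsq]
  exact le_add_of_nonneg_right (sq_nonneg _)

section LogDeriv

variable {x t : ℝ}

lemma cos_div_sin_eq (ht : 0 < sin t) :
    cos t / sin t = 1 / (2 * (sin t / (1 + cos t))) - sin t / (1 + cos t) / 2 := by
  have hcos : 1 + cos t ≠ 0 := fun h0 => by nlinarith [sin_sq_add_cos_sq t]
  field_simp
  linear_combination sin_sq_add_cos_sq t

lemma one_add_div_mul_le_sin_div_cos_sub (hx : -1 < x) (ht : t ∈ visibleArc x) :
    (1 + (1 + x) / (1 - x)) * (sin t / (1 + cos t)) ≤ sin t / (cos t - x) := by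
  have hsub : 0 < 1 - x := by linarith [ht.2, cos_le_one t]
  have hcos : 0 < 1 + cos t := by linarith [ht.2]
  rw [show 1 + (1 + x) / (1 - x) = 2 / (1 - x) by field_simp; ring, div_mul_div_comm,
    div_le_div_iff₀ (mul_pos hsub hcos) (sub_pos.2 ht.2)]
  have hsin := sin_nonneg_of_nonneg_of_le_pi ht.1.1 ht.1.2
  have hle : 2 * (cos t - x) ≤ (1 - x) * (1 + cos t) := by nlinarith [cos_le_one t]
  linarith [mul_le_mul_of_nonneg_left hle hsin]

lemma sqrt_le_cos_div_sin_add (hx : -1 < x) (ht : t ∈ visibleArc x) (hsin : 0 < sin t) :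
    √(3 + 4 * ((1 + x) / (1 - x))) ≤ cos t / sin t + 2 * (sin t / (cos t - x)) := by
  have hsub : 0 < 1 - x := by linarith [ht.2, cos_le_one t]
  have hadd : 0 < 1 + x := by linarith
  have hcos : 0 < 1 + cos t := by linarith [ht.2]
  rw [cos_div_sin_eq hsin]
  linarith [sqrt_three_add_four_mul_le (div_pos hadd hsub).le (div_pos hsin hcos),
    one_add_div_mul_le_sin_div_cos_sub hx ht]

lemma hasDerivAt_nodeWeightDeriv (ht : cos t ≠ x) (hsin : sin t ≠ 0) :
    HasDerivAt (nodeWeightDeriv x)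
      ((cos t / sin t + 2 * (sin t / (cos t - x))) * nodeWeightDeriv x t) t := by
  have hne := sub_ne_zero.2 ht
  refine ((hasDerivAt_sin t).div ((hasDerivAt_cos_sub x t).fun_pow 2)
    (pow_ne_zero 2 hne)).congr_deriv ?_
  rw [nodeWeightDeriv]
  field_simp
  ring

lemma nodeWeightDeriv_pos (ht : x < cos t) (hsin : 0 < sin t) : 0 < nodeWeightDeriv x t :=
  div_pos hsin (pow_pos (sub_pos.2 ht) 2)

lemma exp_mul_nodeWeightDeriv_le {h : ℝ} (hx : -1 < x) (ht : 0 < t) (hh : 0 ≤ h)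
    (hth : t + h ∈ visibleArc x) (hπ : t + h < π) :
    exp (√(3 + 4 * ((1 + x) / (1 - x))) * h) * nodeWeightDeriv x t ≤
      nodeWeightDeriv x (t + h) := by
  have hvis : ∀ s ∈ Set.Icc t (t + h), s ∈ visibleArc x := fun s hs =>
    mem_visibleArc_of_le hth (ht.le.trans hs.1) hs.2
  have hsin : ∀ s ∈ Set.Icc t (t + h), 0 < sin s := fun s hs =>
    sin_pos_of_pos_of_lt_pi (ht.trans_le hs.1) (hs.2.trans_lt hπ)
  have hle : t ≤ t + h := le_add_of_nonneg_right hh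
  simpa using exp_mul_le_of_le_hasDerivAt (convex_Icc t (t + h))
    (fun s hs => hasDerivAt_nodeWeightDeriv (hvis s hs).2.ne' (hsin s hs).ne')
    (fun s hs => mul_le_mul_of_nonneg_right (sqrt_le_cos_div_sin_add hx (hvis s hs) (hsin s hs))
      (nodeWeightDeriv_pos (hvis s hs).2 (hsin s hs)).le)
    (Set.left_mem_Icc.2 hle) (Set.right_mem_Icc.2 hle) hle

end LogDeriv

namespace PairConfig

variable {ρ h x : ℝ} {σ m : ℕ} {a : ℕ → ℝ}

lemma pairSum_sqrtWeightDeriv_add_nodeWeight (A : PairConfig h x σ m a) (hh : 0 < h) :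
    pairSum ρ h (sqrtWeightDeriv x) a 0 m + pairSum ρ h (nodeWeight x) a 0 m =
      (1 - x) * pairSum ρ h (linWeightDeriv x) a 0 m := by
  have hadd := pairSum_add_mul ρ h 1 1 (sqrtWeightDeriv x) (nodeWeight x) a 0 m
  rw [one_mul, one_mul] at hadd
  rw [← hadd, ← pairSum_const_mul]
  refine A.pairSum_congr hh (fun t ht => ?_) 0
  have hne := (sub_pos.2 ht.2).ne'
  rw [sqrtWeightDeriv, nodeWeight, linWeightDeriv]
  field_simp
  ring

lemma pairSum_sqrtWeightDeriv_sub_nodeWeight (A : PairConfig h x σ m a) (hh : 0 < h)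
    (hx : -1 < x) :
    pairSum ρ h (sqrtWeightDeriv x) a 0 m - pairSum ρ h (nodeWeight x) a 0 m =
      (1 + x) * pairSum ρ h (fun t => sin t / (1 + cos t) * nodeWeightDeriv x t) a 0 m := by
  have hsub := pairSum_add_mul ρ h 1 (-1) (sqrtWeightDeriv x) (nodeWeight x) a 0 m
  rw [one_mul, neg_one_mul, ← sub_eq_add_neg] at hsub
  rw [← hsub, ← pairSum_const_mul]
  refine A.pairSum_congr hh (fun t ht => ?_) 0
  have hne := (sub_pos.2 ht.2).ne'
  have hcos : 1 + cos t ≠ 0 := by linarith [ht.2]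
  rw [sqrtWeightDeriv, nodeWeight, nodeWeightDeriv]
  field_simp
  linear_combination -(1 + x) * sin_sq_add_cos_sq t

lemma pairSum_sin_div_mul_nodeWeightDeriv_neg (A : PairConfig h x σ m a) (hh : 0 < h)
    (hρ : 0 < ρ) (hx : -1 < x) (hm : 1 ≤ m)
    (htail : ∀ j, pairSum ρ h (nodeWeightDeriv x) a j m ≤ 0) :
    pairSum ρ h (fun t => sin t / (1 + cos t) * nodeWeightDeriv x t) a 0 m < 0 := by
  set l : ℝ → ℝ := fun t => sin t / (1 + cos t)
  have hnonneg : ∀ i < m, 0 ≤ a i := fun i => A.nonneg hh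
  have hinner : ∀ i < m, a i + h ∈ Set.Ico 0 π := fun i hi =>
    ⟨by linarith [hnonneg i hi], A.lt_pi hx hi⟩
  have houter : ∀ i < m, a i ∈ Set.Ico 0 π := fun i hi =>
    ⟨hnonneg i hi, by linarith [(hinner i hi).2]⟩
  have hl := strictMonoOn_sin_div_one_add_cos
  calc pairSum ρ h (fun t => l t * nodeWeightDeriv x t) a 0 m
      < ∑ i ∈ range m, l (a i) * (nodeWeightDeriv x (a i) - ρ * nodeWeightDeriv x (a i + h)) := by
        rw [pairSum, ← range_eq_Ico]
        refine sum_lt_sum_of_nonempty (nonempty_range_iff.2 (by omega)) fun i hi => ?_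
        have hi := mem_range.1 hi
        have hlt : l (a i) < l (a i + h) := hl (houter i hi) (hinner i hi) (by linarith)
        have hpos : 0 < nodeWeightDeriv x (a i + h) := nodeWeightDeriv_pos (A.lt_cos i hi)
          (sin_pos_of_pos_of_lt_pi (by linarith [hnonneg i hi]) (hinner i hi).2)
        nlinarith [mul_pos hρ hpos]
    _ ≤ 0 := by
        refine sum_mul_nonpos_of_sum_Ico_nonpos (fun i hi => ?_) (fun i hi => ?_)
          fun j _ => htail j
        · simpa [l] using hl.monotoneOn (Set.left_mem_Ico.2 pi_pos) (houter i hi) (hnonneg i hi)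
        · exact hl.monotoneOn (houter i (by omega)) (houter _ hi) (by linarith [A.gap i hi])

lemma mul_exp_le_one_of_tail_nonneg (A : PairConfig h x 1 m a) (hh : 0 < h) (hρ : 0 < ρ)
    (hx : -1 < x) {j : ℕ} (hj : j < m)
    (htail : 0 ≤ pairSum ρ h (nodeWeightDeriv x) a j m) :
    ρ * exp (√(3 + 4 * ((1 + x) / (1 - x))) * h) ≤ 1 := by
  obtain ⟨i, hi, hle⟩ : ∃ i < m, ρ * nodeWeightDeriv x (a i + h) ≤ nodeWeightDeriv x (a i) := by
    by_contra! hlt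
    exact htail.not_gt (sum_neg (fun i hi => sub_neg.2 (hlt i (mem_Ico.1 hi).2))
      (nonempty_Ico.2 hj))
  have hai : 0 < a i := by simpa using hh.trans_le (by simpa using A.start i hi)
  have hπ := A.lt_pi hx hi
  have hpos : 0 < nodeWeightDeriv x (a i) := nodeWeightDeriv_pos (A.outer_mem hh hi).2
    (sin_pos_of_pos_of_lt_pi hai (by linarith))
  have hexp := exp_mul_nodeWeightDeriv_le hx hai hh.le (A.inner_mem hh hi) hπ
  refine le_of_mul_le_mul_right (?_ : _ ≤ 1 * nodeWeightDeriv x (a i)) hpos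
  rw [mul_assoc, one_mul]
  exact (mul_le_mul_of_nonneg_left hexp hρ.le).trans hle

end PairConfig

namespace IsOptimal

variable {ρ h : ℝ} {m p : ℕ} {x : ℝ} {a b : ℕ → ℝ}

lemma pairSum_linWeightDeriv_nonpos (O : IsOptimal ρ h 0 1 m p x a b) (hh : 0 < h) (hρ : 0 < ρ) :
    pairSum ρ h (linWeightDeriv x) a 0 m ≤ 0 ∧
      (1 ≤ p → pairSum ρ h (linWeightDeriv x) a 0 m < 0) := by
  have hsub : 0 < 1 - x := sub_pos.2 O.right.lt_one
  have hleft : (1 - x) * pairSum ρ h (linWeightDeriv x) a 0 m =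
      (1 - x) * pairSum ρ h (fun t => sin t / (1 + cos t) * nodeWeightDeriv (-x) t) b 0 p := by
    have hzero := O.zero
    have hbal := O.balance hh
    simp only [sideValue, Nat.cast_zero, zero_mul, sub_zero, Nat.cast_one, one_mul] at hzero hbal
    have hsqrt := O.left.pairSum_sqrtWeightDeriv_sub_nodeWeight (ρ := ρ) hh O.mirror.neg_one_lt
    rw [← sub_eq_add_neg] at hsqrt
    rw [← hsqrt, ← O.right.pairSum_sqrtWeightDeriv_add_nodeWeight hh]
    linarith
  rw [mul_left_cancel₀ hsub.ne' hleft]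
  have hneg := O.left.pairSum_sin_div_mul_nodeWeightDeriv_neg hh hρ O.mirror.neg_one_lt
    (htail := O.mirror.tail_nonpos hh)
  refine ⟨?_, hneg⟩
  rcases Nat.eq_zero_or_pos p with rfl | hp
  · simp [pairSum]
  · exact (hneg hp).le

lemma eq_flushAngle_even_odd (O : IsOptimal ρ h 0 1 m p x a b) (hh : 0 < h) (hρ : 0 < ρ) :
    (∀ i < m, a i = flushAngle h 0 i) ∧ ∀ i < p, b i = flushAngle h 1 i := by
  obtain ⟨hlin, hlin_neg⟩ := O.pairSum_linWeightDeriv_nonpos hh hρ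
  have hright : ∀ i < m, a i = flushAngle h 0 i := O.eq_flushAngle_of_tail_neg hh fun j hj =>
    O.right.nodeWeightDeriv_tail_neg_of_lin hh O.neg_one_lt hρ hlin hj
  refine ⟨hright, fun i hi => ?_⟩
  by_contra hne
  have hm : 1 ≤ m := Nat.one_le_iff_ne_zero.2 fun hm => by
    subst hm
    simpa [pairSum] using hlin_neg (by omega)
  have hsqrt : 0 < pairSum ρ h (sqrtWeightDeriv (-x)) b 0 p := by
    by_contra! hle
    exact hne (O.mirror.eq_flushAngle_of_pairSum_nonpos hh hρ hle i hi)
  obtain ⟨j, hj, htail⟩ : ∃ j < p, 0 ≤ pairSum ρ h (nodeWeightDeriv (-x)) b j p := by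
    by_contra! hneg
    exact hne (O.mirror.eq_flushAngle_of_tail_neg hh hneg i hi)
  have hκ := O.left.mul_exp_le_one_of_tail_nonneg hh hρ O.mirror.neg_one_lt hj htail
  rw [← sub_eq_add_neg, sub_neg_eq_add] at hκ
  have hflush := (O.right.congr_angle hright).pairSum_sqrtWeightDeriv_flush_le hm hh O.neg_one_lt
    hρ hκ (pairSum_congr_angle hright _ _ _ _ ▸ hlin)
  have hbal := O.balance hh
  rw [pairSum_congr_angle hright] at hbal
  push_cast at hbal
  linarith

end IsOptimal

/-! ### Existence of optimal configurations -/

/-- The sum of the inner weights of a configuration, lone nodes included. -/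
noncomputable def innerSum (h x : ℝ) (σ m : ℕ) (a : ℕ → ℝ) : ℝ :=
  ∑ i ∈ range m, nodeWeight x (a i + h) + σ * nodeWeight x 0

/-- The sum of the outer weights of a configuration. -/
noncomputable def outerSum (x : ℝ) (m : ℕ) (a : ℕ → ℝ) : ℝ :=
  ∑ i ∈ range m, nodeWeight x (a i)

/-- A closed version of `PairConfig`: the inner and the lone nodes keep distance at least `δ`
from `x`. -/
structure SeparatedConfig (δ h x : ℝ) (σ m : ℕ) (a : ℕ → ℝ) : Prop where
  start : ∀ i < m, σ * h ≤ a i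
  gap : ∀ i, i + 1 < m → a i + 2 * h ≤ a (i + 1)
  le_pi : ∀ i < m, a i + h ≤ π
  le_cos_sub : ∀ i < m, δ ≤ cos (a i + h) - x
  le_one_sub : 1 ≤ σ → δ ≤ 1 - x

/-- Sets the entries of `a` with index at least `m`, which no configuration of `m` pairs sees,
to `0`. -/
noncomputable def truncate (m : ℕ) (a : ℕ → ℝ) (i : ℕ) : ℝ := if i < m then a i else 0

/-- The triples `(x, a, b)` that are `δ`-separated on both sides of `x`, with all angles in
`[0, π]`. -/
def separatedConfigs (δ h : ℝ) (σ τ m p : ℕ) : Set (ℝ × (ℕ → ℝ) × (ℕ → ℝ)) :=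
  (Set.Icc (-1) 1 ×ˢ (Set.univ.pi fun _ => Set.Icc 0 π) ×ˢ (Set.univ.pi fun _ => Set.Icc 0 π)) ∩
    ({q | SeparatedConfig δ h q.1 σ m q.2.1} ∩ {q | SeparatedConfig δ h (-q.1) τ p q.2.2})

/-- The sum of the outer weights on both sides of `x` for `q = (x, a, b)`. -/
noncomputable def outerTotal (m p : ℕ) (q : ℝ × (ℕ → ℝ) × (ℕ → ℝ)) : ℝ :=
  outerSum q.1 m q.2.1 + outerSum (-q.1) p q.2.2

/-- The sum of the inner weights on both sides of `x` for `q = (x, a, b)`. -/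
noncomputable def innerTotal (h : ℝ) (σ τ m p : ℕ) (q : ℝ × (ℕ → ℝ) × (ℕ → ℝ)) : ℝ :=
  innerSum h q.1 σ m q.2.1 + innerSum h (-q.1) τ p q.2.2

lemma sideValue_eq_sub (ρ h x : ℝ) (σ m : ℕ) (a : ℕ → ℝ) :
    sideValue ρ h x σ m a = outerSum x m a - ρ * innerSum h x σ m a := by
  rw [sideValue, pairSum, outerSum, innerSum, ← range_eq_Ico, sum_sub_distrib, ← mul_sum]
  ring

lemma sideValue_add_sideValue (ρ h x : ℝ) (σ τ m p : ℕ) (a b : ℕ → ℝ) :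
    sideValue ρ h x σ m a + sideValue ρ h (-x) τ p b =
      outerTotal m p (x, a, b) - ρ * innerTotal h σ τ m p (x, a, b) := by
  rw [sideValue_eq_sub, sideValue_eq_sub, outerTotal, innerTotal]
  ring

lemma one_sub_cos_le {h t : ℝ} (ht : 0 ≤ t) (hh : 0 ≤ h) (hth : t + h ≤ π) :
    1 - cos h ≤ cos t - cos (t + h) := by
  have hleft : 1 - cos h = 2 * sin (h / 2) * sin (h / 2) := by
    nth_rw 1 [show h = 2 * (h / 2) by ring]
    rw [cos_two_mul]
    linarith [sin_sq_add_cos_sq (h / 2), pow_two (sin (h / 2))]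
  have hright : cos t - cos (t + h) = 2 * sin (t + h / 2) * sin (h / 2) := by
    rw [cos_sub_cos, show (t + (t + h)) / 2 = t + h / 2 by ring,
      show (t - (t + h)) / 2 = -(h / 2) by ring, sin_neg]
    ring
  have hsin : sin (h / 2) ≤ sin (t + h / 2) := by
    have hdiff : sin (t + h / 2) - sin (h / 2) = 2 * sin (t / 2) * cos ((t + h) / 2) := by
      rw [sin_sub_sin]
      ring_nf
    have hsin0 : 0 ≤ sin (t / 2) := sin_nonneg_of_nonneg_of_le_pi (by linarith) (by linarith)
    have hcos0 : 0 ≤ cos ((t + h) / 2) :=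
      cos_nonneg_of_neg_pi_div_two_le_of_le (by linarith) (by linarith)
    exact sub_nonneg.1 (hdiff ▸ by positivity)
  have hsin0 : 0 ≤ sin (h / 2) := sin_nonneg_of_nonneg_of_le_pi (by linarith) (by linarith)
  rw [hleft, hright]
  gcongr

lemma one_sub_cos_pos {h : ℝ} (hh : 0 < h) (hπ : h ≤ π) : 0 < 1 - cos h :=
  sub_pos.2 (cos_zero ▸ cos_lt_cos_of_nonneg_of_le_pi le_rfl hπ hh)

section

variable {h x ρ δ : ℝ} {σ τ m p : ℕ} {a b : ℕ → ℝ}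

namespace PairConfig

lemma outerSum_le (A : PairConfig h x σ m a) (hh : 0 < h) (hπ : h ≤ π) :
    outerSum x m a ≤ m / (1 - cos h) := by
  refine (sum_le_card_nsmul _ _ (1 / (1 - cos h)) fun i hi => ?_).trans_eq ?_
  · have hi := mem_range.1 hi
    rw [nodeWeight, ← one_div]
    exact one_div_le_one_div_of_le (one_sub_cos_pos hh hπ)
      (by linarith [one_sub_cos_le (A.nonneg hh hi) hh.le (A.le_pi i hi), A.lt_cos i hi])
  · rw [card_range, nsmul_eq_mul, mul_one_div]

lemma nodeWeight_zero_pos (A : PairConfig h x σ m a) : 0 < nodeWeight x 0 :=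
  inv_pos.2 (by linarith [A.lt_one, cos_zero])

lemma nodeWeight_inner_pos (A : PairConfig h x σ m a) {i : ℕ} (hi : i < m) :
    0 < nodeWeight x (a i + h) :=
  inv_pos.2 (sub_pos.2 (A.lt_cos i hi))

lemma sum_nodeWeight_inner_nonneg (A : PairConfig h x σ m a) :
    0 ≤ ∑ i ∈ range m, nodeWeight x (a i + h) :=
  sum_nonneg fun _ hi => (A.nodeWeight_inner_pos (mem_range.1 hi)).le

lemma innerSum_nonneg (A : PairConfig h x σ m a) : 0 ≤ innerSum h x σ m a :=
  add_nonneg A.sum_nodeWeight_inner_nonneg (mul_nonneg (by positivity) A.nodeWeight_zero_pos.le)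

lemma nodeWeight_inner_le (A : PairConfig h x σ m a) {i : ℕ} (hi : i < m) :
    nodeWeight x (a i + h) ≤ innerSum h x σ m a :=
  le_add_of_le_of_nonneg
    (single_le_sum (f := fun i => nodeWeight x (a i + h))
      (fun _ hj => (A.nodeWeight_inner_pos (mem_range.1 hj)).le) (mem_range.2 hi))
    (mul_nonneg (by positivity) A.nodeWeight_zero_pos.le)

lemma nodeWeight_zero_le (A : PairConfig h x σ m a) (hσ : 1 ≤ σ) :
    nodeWeight x 0 ≤ innerSum h x σ m a :=
  le_add_of_nonneg_of_le A.sum_nodeWeight_inner_nonneg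
    (le_mul_of_one_le_left A.nodeWeight_zero_pos.le (by exact_mod_cast hσ))

lemma innerSum_pos (A : PairConfig h x σ m a) (hmσ : 1 ≤ m + σ) : 0 < innerSum h x σ m a := by
  rcases Nat.eq_zero_or_pos m with hm | hm
  · exact A.nodeWeight_zero_pos.trans_le (A.nodeWeight_zero_le (by omega))
  · exact (A.nodeWeight_inner_pos hm).trans_le (A.nodeWeight_inner_le hm)

lemma separatedConfig (A : PairConfig h x σ m a) (hδ : 0 < δ)
    (hinner : innerSum h x σ m a ≤ δ⁻¹) : SeparatedConfig δ h x σ m a where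
  start := A.start
  gap := A.gap
  le_pi := A.le_pi
  le_cos_sub i hi :=
    (inv_le_inv₀ (sub_pos.2 (A.lt_cos i hi)) hδ).1 ((A.nodeWeight_inner_le hi).trans hinner)
  le_one_sub hσ := by
    have hle := (A.nodeWeight_zero_le hσ).trans hinner
    rw [nodeWeight, cos_zero] at hle
    exact (inv_le_inv₀ (sub_pos.2 A.lt_one) hδ).1 hle

end PairConfig

lemma SeparatedConfig.pairConfig (A : SeparatedConfig δ h x σ m a) (hδ : 0 < δ)
    (hmσ : 1 ≤ m + σ) : PairConfig h x σ m a where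
  start := A.start
  gap := A.gap
  le_pi := A.le_pi
  lt_cos i hi := by linarith [A.le_cos_sub i hi]
  lt_one := by
    rcases Nat.eq_zero_or_pos m with hm | hm
    · linarith [A.le_one_sub (by omega)]
    · linarith [A.le_cos_sub 0 hm, cos_le_one (a 0 + h)]

lemma truncate_of_lt (a : ℕ → ℝ) {i m : ℕ} (hi : i < m) : truncate m a i = a i := if_pos hi

lemma PairConfig.truncate_mem_Icc (A : PairConfig h x σ m a) (hh : 0 < h) (i : ℕ) :
    truncate m a i ∈ Set.Icc 0 π := by
  unfold truncate
  split_ifs with hi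
  · exact ⟨A.nonneg hh hi, by linarith [A.le_pi i hi]⟩
  · exact ⟨le_rfl, pi_pos.le⟩

lemma outerSum_truncate : outerSum x m (truncate m a) = outerSum x m a :=
  sum_congr rfl fun i hi => by rw [truncate_of_lt a (mem_range.1 hi)]

lemma innerSum_truncate : innerSum h x σ m (truncate m a) = innerSum h x σ m a :=
  congrArg (· + _) (sum_congr rfl fun i hi => by rw [truncate_of_lt a (mem_range.1 hi)])

lemma isClosed_setOf_separatedConfig {X : Type*} [TopologicalSpace X] {f : X → ℝ}
    {g : X → ℕ → ℝ} (hf : Continuous f) (hg : Continuous g) :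
    IsClosed {q : X | SeparatedConfig δ h (f q) σ m (g q)} := by
  have hgi (i : ℕ) : Continuous fun q => g q i := (continuous_apply i).comp hg
  have hinter : {q : X | SeparatedConfig δ h (f q) σ m (g q)} =
      {q | ∀ i < m, σ * h ≤ g q i} ∩ {q | ∀ i, i + 1 < m → g q i + 2 * h ≤ g q (i + 1)} ∩
      {q | ∀ i < m, g q i + h ≤ π} ∩ {q | ∀ i < m, δ ≤ cos (g q i + h) - f q} ∩
      {q | 1 ≤ σ → δ ≤ 1 - f q} :=
    Set.ext fun q => ⟨fun A => ⟨⟨⟨⟨A.start, A.gap⟩, A.le_pi⟩, A.le_cos_sub⟩, A.le_one_sub⟩,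
      fun ⟨⟨⟨⟨hstart, hgap⟩, hle⟩, hcos⟩, hone⟩ => ⟨hstart, hgap, hle, hcos, hone⟩⟩
  rw [hinter]
  refine ((((?_ : IsClosed _).inter ?_).inter ?_).inter ?_).inter ?_
  all_goals
    simp only [Set.ofPred_forall]
    repeat refine isClosed_iInter fun _ => ?_
    exact isClosed_le (by fun_prop) (by fun_prop)

lemma isCompact_separatedConfigs (δ h : ℝ) (σ τ m p : ℕ) :
    IsCompact (separatedConfigs δ h σ τ m p) :=
  (isCompact_Icc.prod ((isCompact_univ_pi fun _ => isCompact_Icc).prod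
    (isCompact_univ_pi fun _ => isCompact_Icc))).inter_right
    ((isClosed_setOf_separatedConfig (by fun_prop) (by fun_prop)).inter
      (isClosed_setOf_separatedConfig (by fun_prop) (by fun_prop)))

lemma continuousOn_outerSum {X : Type*} [TopologicalSpace X] {f : X → ℝ} {g : X → ℕ → ℝ}
    {K : Set X} (hf : Continuous f) (hg : Continuous g) (hh : 0 < h)
    (hK : ∀ q ∈ K, PairConfig h (f q) σ m (g q)) :
    ContinuousOn (fun q => outerSum (f q) m (g q)) K :=
  continuousOn_finsetSum _ fun i hi => ContinuousOn.inv₀ (by fun_prop) fun q hq =>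
    sub_ne_zero.2 ((hK q hq).outer_mem hh (mem_range.1 hi)).2.ne'

lemma continuousOn_innerSum {X : Type*} [TopologicalSpace X] {f : X → ℝ} {g : X → ℕ → ℝ}
    {K : Set X} (hf : Continuous f) (hg : Continuous g)
    (hK : ∀ q ∈ K, PairConfig h (f q) σ m (g q)) :
    ContinuousOn (fun q => innerSum h (f q) σ m (g q)) K := by
  refine (continuousOn_finsetSum _ fun i hi => ContinuousOn.inv₀ (by fun_prop) fun q hq =>
    sub_ne_zero.2 ((hK q hq).lt_cos i (mem_range.1 hi)).ne').add
    (continuousOn_const.mul (ContinuousOn.inv₀ (by fun_prop) fun q hq => ?_))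
  rw [cos_zero]
  exact (sub_pos.2 (hK q hq).lt_one).ne'

lemma mem_separatedConfigs {ρ₀ : ℝ} (hρ : 0 < ρ₀) (hh : 0 < h) (hπ : h ≤ π)
    (hδ : δ = ρ₀ / ((m + p) / (1 - cos h) + 1)) (A : PairConfig h x σ m a)
    (B : PairConfig h (-x) τ p b)
    (hvalue : 0 ≤ sideValue ρ₀ h x σ m a + sideValue ρ₀ h (-x) τ p b) :
    (x, truncate m a, truncate p b) ∈ separatedConfigs δ h σ τ m p := by
  have hcos := one_sub_cos_pos hh hπ
  have hδ0 : 0 < δ := hδ ▸ by positivity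
  have hinner : innerSum h x σ m a + innerSum h (-x) τ p b ≤ δ⁻¹ := by
    rw [hδ, inv_div, le_div_iff₀ hρ, add_div]
    rw [sideValue_eq_sub, sideValue_eq_sub] at hvalue
    linarith [A.outerSum_le hh hπ, B.outerSum_le hh hπ]
  refine ⟨⟨⟨by linarith [B.lt_one], A.lt_one.le⟩, fun i _ => A.truncate_mem_Icc hh i,
    fun i _ => B.truncate_mem_Icc hh i⟩, ?_, ?_⟩
  · exact (A.congr_angle fun i hi => (truncate_of_lt a hi).symm).separatedConfig hδ0
      (by rw [innerSum_truncate]; linarith [B.innerSum_nonneg])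
  · exact (B.congr_angle fun i hi => (truncate_of_lt b hi).symm).separatedConfig hδ0
      (by rw [innerSum_truncate]; linarith [A.innerSum_nonneg])

lemma continuousOn_outerTotal_div_innerTotal (hδ : 0 < δ) (hh : 0 < h) (hmσ : 1 ≤ m + σ)
    (hpτ : 1 ≤ p + τ) :
    ContinuousOn (fun q => outerTotal m p q / innerTotal h σ τ m p q)
      (separatedConfigs δ h σ τ m p) := by
  have hright (q) (hq : q ∈ separatedConfigs δ h σ τ m p) : PairConfig h q.1 σ m q.2.1 :=
    hq.2.1.pairConfig hδ hmσ
  have hleft (q) (hq : q ∈ separatedConfigs δ h σ τ m p) : PairConfig h (-q.1) τ p q.2.2 :=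
    hq.2.2.pairConfig hδ hpτ
  exact ((continuousOn_outerSum (by fun_prop) (by fun_prop) hh hright).add
    (continuousOn_outerSum (by fun_prop) (by fun_prop) hh hleft)).div
    ((continuousOn_innerSum (by fun_prop) (by fun_prop) hright).add
      (continuousOn_innerSum (by fun_prop) (by fun_prop) hleft))
    fun q hq => (add_pos ((hright q hq).innerSum_pos hmσ) ((hleft q hq).innerSum_pos hpτ)).ne'

/- The configurations with nonnegative value for `ρ₀` stay in a compact set, on which the quotient
of the outer total by the inner total attains its maximum `ρ`. -/
lemma exists_isOptimal {ρ₀ : ℝ} (hρ : 0 < ρ₀) (hh : 0 < h) (hπ : h ≤ π) (hmσ : 1 ≤ m + σ)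
    (hpτ : 1 ≤ p + τ) (A : PairConfig h x σ m a) (B : PairConfig h (-x) τ p b)
    (hvalue : 0 ≤ sideValue ρ₀ h x σ m a + sideValue ρ₀ h (-x) τ p b) :
    ∃ ρ x' a' b', ρ₀ ≤ ρ ∧ IsOptimal ρ h σ τ m p x' a' b' := by
  have hcos := one_sub_cos_pos hh hπ
  obtain ⟨δ, hδ⟩ : ∃ δ : ℝ, δ = ρ₀ / ((m + p) / (1 - cos h) + 1) := ⟨_, rfl⟩
  have hδ0 : 0 < δ := hδ ▸ by positivity
  obtain ⟨⟨x', a', b'⟩, hq, hmax⟩ := (isCompact_separatedConfigs δ h σ τ m p).exists_isMaxOn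
    ⟨_, mem_separatedConfigs hρ hh hπ hδ A B hvalue⟩
    (continuousOn_outerTotal_div_innerTotal hδ0 hh hmσ hpτ)
  obtain ⟨ρ, hρ_def⟩ : ∃ ρ, ρ = outerTotal m p (x', a', b') / innerTotal h σ τ m p (x', a', b') :=
    ⟨_, rfl⟩
  have hinner {x a b} (A : PairConfig h x σ m a) (B : PairConfig h (-x) τ p b) :
      0 < innerTotal h σ τ m p (x, a, b) := add_pos (A.innerSum_pos hmσ) (B.innerSum_pos hpτ)
  have hle {x a b} (A : PairConfig h x σ m a) (B : PairConfig h (-x) τ p b)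
      (hvalue : 0 ≤ sideValue ρ₀ h x σ m a + sideValue ρ₀ h (-x) τ p b) :
      outerTotal m p (x, a, b) / innerTotal h σ τ m p (x, a, b) ≤ ρ := by
    have hle := hmax (mem_separatedConfigs hρ hh hπ hδ A B hvalue)
    simpa only [outerTotal, innerTotal, outerSum_truncate, innerSum_truncate, hρ_def,
      Set.mem_ofPred_eq] using hle
  have hρρ : ρ₀ ≤ ρ := by
    refine le_trans ?_ (hle A B hvalue)
    rw [sideValue_add_sideValue] at hvalue
    rwa [le_div_iff₀ (hinner A B), ← sub_nonneg]
  have A' : PairConfig h x' σ m a' := hq.2.1.pairConfig hδ0 hmσ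
  have B' : PairConfig h (-x') τ p b' := hq.2.2.pairConfig hδ0 hpτ
  refine ⟨ρ, x', a', b', hρρ, A', B', ?_, fun x₁ a₁ b₁ A₁ B₁ => ?_⟩
  · rw [sideValue_add_sideValue, hρ_def, div_mul_cancel₀ _ (hinner A' B').ne', sub_self]
  · by_contra! hlt
    rw [sideValue_add_sideValue] at hlt
    refine hlt.not_ge (sub_nonpos.2 ((div_le_iff₀ (hinner A₁ B₁)).1 (hle A₁ B₁ ?_)))
    rw [sideValue_add_sideValue]
    linarith [mul_le_mul_of_nonneg_right hρρ (hinner A₁ B₁).le]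

end

/-! ### Flush configurations -/

/-- Some configuration with `T` nodes altogether, flush to the ends of the interval on both sides
and nonempty on both sides, has nonnegative value. -/
def HasFlushConfig (ρ h : ℝ) (T : ℕ) : Prop :=
  ∃ (σ τ m p : ℕ) (x : ℝ), σ ≤ 1 ∧ τ ≤ 1 ∧ 2 * m + σ + (2 * p + τ) = T ∧ 1 ≤ m + σ ∧ 1 ≤ p + τ ∧
    PairConfig h x σ m (flushAngle h σ) ∧ PairConfig h (-x) τ p (flushAngle h τ) ∧
    0 ≤ sideValue ρ h x σ m (flushAngle h σ) + sideValue ρ h (-x) τ p (flushAngle h τ)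

section

variable {h x ρ : ℝ} {σ τ m p : ℕ} {a b : ℕ → ℝ}

lemma sideValue_zero_eq_add (ρ h x : ℝ) (σ m : ℕ) (a : ℕ → ℝ) :
    sideValue ρ h x 0 m a = sideValue ρ h x σ m a + σ * (ρ * nodeWeight x 0) := by
  rw [sideValue, sideValue, Nat.cast_zero, zero_mul, sub_zero, sub_add_cancel]

namespace PairConfig

lemma forget_lone (A : PairConfig h x σ m a) (hh : 0 < h) : PairConfig h x 0 m a where
  start i hi := by simpa using A.nonneg hh hi
  gap := A.gap
  le_pi := A.le_pi
  lt_cos := A.lt_cos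
  lt_one := A.lt_one

lemma sideValue_anti (A : PairConfig h x σ m a) :
    Antitone fun ρ => sideValue ρ h x σ m a := fun ρ ρ' hρ => by
  simp only [sideValue_eq_sub]
  linarith [mul_le_mul_of_nonneg_right hρ A.innerSum_nonneg]

lemma outerSum_le_innerSum (A : PairConfig h x σ m a) (hh : 0 < h) :
    outerSum x m a ≤ innerSum h x σ m a := by
  refine le_add_of_le_of_nonneg (sum_le_sum fun i hi => ?_)
    (mul_nonneg (by positivity) A.nodeWeight_zero_pos.le)
  have hi := mem_range.1 hi
  exact inv_anti₀ (sub_pos.2 (A.lt_cos i hi)) (sub_le_sub_right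
    (cos_le_cos_of_nonneg_of_le_pi (A.nonneg hh hi) (A.le_pi i hi) (by linarith)) x)

end PairConfig

namespace IsOptimal

lemma hasFlushConfig {ρ' : ℝ} (O : IsOptimal ρ' h σ τ m p x a b) (hρ : ρ ≤ ρ') (hσ : σ ≤ 1)
    (hτ : τ ≤ 1) (hmσ : 1 ≤ m + σ) (hpτ : 1 ≤ p + τ) (ha : ∀ i < m, a i = flushAngle h σ i)
    (hb : ∀ i < p, b i = flushAngle h τ i) :
    HasFlushConfig ρ h (2 * m + σ + (2 * p + τ)) := by
  refine ⟨σ, τ, m, p, x, hσ, hτ, rfl, hmσ, hpτ, O.right.congr_angle ha, O.left.congr_angle hb, ?_⟩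
  rw [← sideValue_congr_angle ha, ← sideValue_congr_angle hb]
  exact O.zero.ge.trans (add_le_add (O.right.sideValue_anti hρ) (O.left.sideValue_anti hρ))

lemma le_one (O : IsOptimal ρ h σ τ m p x a b) (hh : 0 < h) (hmσ : 1 ≤ m + σ) : ρ ≤ 1 := by
  have hzero := O.zero
  rw [sideValue_eq_sub, sideValue_eq_sub] at hzero
  by_contra! hρ
  nlinarith [O.right.outerSum_le_innerSum hh, O.left.outerSum_le_innerSum hh,
    O.right.innerSum_pos hmσ, O.left.innerSum_nonneg]

lemma eq_flushAngle_of_lone (O : IsOptimal ρ h 1 1 0 p x a b) (hh : 0 < h) (hρ : 0 < ρ)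
    (hx : 0 ≤ x) : ∀ i < p, b i = flushAngle h 1 i := by
  have hbalance := O.balance hh
  simp only [pairSum, Ico_self, sum_empty, Nat.cast_one, one_mul] at hbalance
  have hweight : nodeWeight (-x) 0 ≤ nodeWeight x 0 := by
    rw [nodeWeight, nodeWeight, cos_zero]
    exact inv_anti₀ (sub_pos.2 O.right.lt_one) (by linarith)
  refine O.mirror.eq_flushAngle_of_pairSum_nonpos hh hρ ?_
  rw [pairSum]
  linarith [mul_le_mul_of_nonneg_left hweight hρ.le]

/- The lone node on the left of `x` is dropped, and the one on the right becomes the outer node of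
a new pair at the angles `0` and `h`. -/
lemma pairConfig_of_lone (O : IsOptimal ρ h 1 1 0 p x a b) (hh : 0 < h) (hπ : h ≤ π / 3)
    (hρ : 0 < ρ) (hx : x ≤ 0) :
    PairConfig h x 0 1 (fun _ => 0) ∧ PairConfig h (-x) 0 p b ∧
      0 ≤ sideValue ρ h x 0 1 (fun _ => 0) + sideValue ρ h (-x) 0 p b := by
  have hcos : 1 / 2 ≤ cos h := cos_pi_div_three ▸
    cos_le_cos_of_nonneg_of_le_pi hh.le (by linarith [pi_pos]) hπ
  have hx1 := O.right.lt_one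
  refine ⟨⟨by simp, by simp, fun i _ => ?_, fun i _ => ?_, hx1⟩, O.left.forget_lone hh, ?_⟩
  · linarith [pi_pos]
  · rw [zero_add]
    linarith
  have hweight : nodeWeight x h ≤ 2 * nodeWeight x 0 := by
    rw [nodeWeight, nodeWeight, cos_zero, ← div_eq_mul_inv, ← one_div,
      div_le_div_iff₀ (by linarith) (by linarith)]
    linarith
  have hzero := O.zero
  have hnew : sideValue ρ h x 0 1 (fun _ => 0) = nodeWeight x 0 - ρ * nodeWeight x h := by
    simp [sideValue, pairSum]
  have hold : sideValue ρ h x 1 0 a = -(ρ * nodeWeight x 0) := by simp [sideValue, pairSum]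
  rw [hold] at hzero
  rw [hnew, sideValue_zero_eq_add ρ h (-x) 1, Nat.cast_one, one_mul]
  linarith [mul_le_mul_of_nonneg_left hweight hρ.le,
    mul_le_mul_of_nonneg_right (O.le_one hh (by simp)) O.right.nodeWeight_zero_pos.le,
    mul_pos hρ O.left.nodeWeight_zero_pos]

end IsOptimal

lemma hasFlushConfig_even_even (hρ : 0 < ρ) (hh : 0 < h) (hπ : h ≤ π) (hm : 1 ≤ m) (hp : 1 ≤ p)
    (A : PairConfig h x 0 m a) (B : PairConfig h (-x) 0 p b)
    (hvalue : 0 ≤ sideValue ρ h x 0 m a + sideValue ρ h (-x) 0 p b) :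
    HasFlushConfig ρ h (2 * m + 2 * p) := by
  obtain ⟨ρ', x', a', b', hρρ, O⟩ := exists_isOptimal hρ hh hπ hm hp A B hvalue
  obtain ⟨ha, hb⟩ := O.eq_flushAngle_even_even hh (hρ.trans_le hρρ)
  exact O.hasFlushConfig hρρ zero_le_one zero_le_one hm hp ha hb

lemma hasFlushConfig_even_odd (hρ : 0 < ρ) (hh : 0 < h) (hπ : h ≤ π) (hm : 1 ≤ m)
    (A : PairConfig h x 0 m a) (B : PairConfig h (-x) 1 p b)
    (hvalue : 0 ≤ sideValue ρ h x 0 m a + sideValue ρ h (-x) 1 p b) :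
    HasFlushConfig ρ h (2 * m + (2 * p + 1)) := by
  obtain ⟨ρ', x', a', b', hρρ, O⟩ := exists_isOptimal hρ hh hπ hm (by omega) A B hvalue
  obtain ⟨ha, hb⟩ := O.eq_flushAngle_even_odd hh (hρ.trans_le hρρ)
  exact O.hasFlushConfig hρρ zero_le_one le_rfl hm (by omega) ha hb

lemma hasFlushConfig_lone (hρ : 0 < ρ) (hh : 0 < h) (hπ : h ≤ π / 3) (hp : 1 ≤ p)
    (A : PairConfig h x 1 0 a) (B : PairConfig h (-x) 1 p b)
    (hvalue : 0 ≤ sideValue ρ h x 1 0 a + sideValue ρ h (-x) 1 p b) :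
    HasFlushConfig ρ h (1 + (2 * p + 1)) := by
  have hπ' : h ≤ π := by linarith [pi_pos]
  obtain ⟨ρ', x', a', b', hρρ, O⟩ := exists_isOptimal hρ hh hπ' (by simp) (by omega) A B hvalue
  have hρ' := hρ.trans_le hρρ
  rcases le_total 0 x' with hx | hx
  · simpa using O.hasFlushConfig hρρ le_rfl le_rfl (by simp) (by omega) (by simp)
      (O.eq_flushAngle_of_lone hh hρ' hx)
  · obtain ⟨A', B', hvalue'⟩ := O.pairConfig_of_lone hh hπ hρ' hx
    convert hasFlushConfig_even_even hρ hh hπ' le_rfl hp A' B'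
      (hvalue'.trans (add_le_add (A'.sideValue_anti hρρ) (B'.sideValue_anti hρρ))) using 1
    omega

end

/-! ### Filling a hole between flush nodes -/

section

variable {h y ρ t β : ℝ}

lemma two_mul_nodeWeight_le (hy : -1 < y) (ht : 0 ≤ t) (hh : 0 < h)
    (hth : t + 2 * h ∈ visibleArc y) :
    2 * nodeWeight y (t + h) ≤ nodeWeight y t + nodeWeight y (t + 2 * h) := by
  have hmem : t ∈ visibleArc y := mem_visibleArc_of_le hth ht (by linarith)
  have hlog : nodeWeight y (t + h) ^ 2 ≤ nodeWeight y (t + 2 * h) * nodeWeight y t := by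
    have hadd : t + h + h = t + 2 * h := by ring
    have hle := mul_le_mul_of_convexOn_log (convexOn_log_nodeWeight hy) (fun _ => nodeWeight_pos)
      hmem (t := t + h) (hadd ▸ hth) (by linarith) hh.le
    rwa [hadd, ← pow_two] at hle
  refine abs_le_of_sq_le_sq' ?_ (add_pos (nodeWeight_pos hmem) (nodeWeight_pos hth)).le |>.2
  nlinarith [sq_nonneg (nodeWeight y t - nodeWeight y (t + 2 * h))]

lemma flushAngle_one (h : ℝ) (i : ℕ) : flushAngle h 1 i = flushAngle h 0 i + h := by
  simp only [flushAngle, Nat.cast_one, Nat.cast_zero]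
  ring

/- The left side is what remains after the convexity bound `2 w (t + h) ≤ w t + w (t + 2 h)` has
been applied at every second of the nodes that change sign. -/
lemma le_sideValue_flush_sub (hρ : 0 < ρ) (hh : 0 < h) (hy : -1 < y) (j : ℕ)
    (hj : flushAngle h 1 j ∈ visibleArc y) :
    (1 + ρ) / 2 * (nodeWeight y 0 + nodeWeight y (flushAngle h 0 j)) -
        ρ * nodeWeight y (flushAngle h 1 j) ≤
      sideValue ρ h y 0 (j + 1) (flushAngle h 0) - sideValue ρ h y 1 j (flushAngle h 1) := by
  induction j with
  | zero =>
    simp only [sideValue, pairSum, flushAngle_one, flushAngle_zero_zero, zero_add,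
      Nat.Ico_zero_eq_range, sum_range_succ, range_zero, sum_empty, Nat.cast_zero, Nat.cast_one]
    linarith
  | succ j ih =>
    have hnonneg := flushAngle_nonneg hh.le 0 j
    have hsucc := flushAngle_add_one h 0 j
    have hle : flushAngle h 0 j + 2 * h ∈ visibleArc y :=
      mem_visibleArc_of_le hj (by positivity) (by rw [flushAngle_one, hsucc]; linarith)
    have hprev : flushAngle h 1 j ∈ visibleArc y :=
      mem_visibleArc_of_le hle (flushAngle_nonneg hh.le 1 j) (by rw [flushAngle_one]; linarith)
    have hconvex := two_mul_nodeWeight_le hy hnonneg hh hle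
    have ih := ih hprev
    rw [sideValue, sideValue] at ih ⊢
    rw [pairSum_add_one, pairSum_add_one _ _ _ (flushAngle h 1), flushAngle_one h (j + 1), hsucc,
      flushAngle_one, show flushAngle h 0 j + h + h = flushAngle h 0 j + 2 * h by ring]
    rw [flushAngle_one] at ih
    linarith [mul_le_mul_of_nonneg_left hconvex (by positivity : 0 ≤ (1 + ρ) / 2)]

lemma nodeWeight_sub_nodeWeight_sub {s : ℝ} (hs : s ∈ visibleArc y) (hsh : s - h ∈ visibleArc y) :
    nodeWeight y s - nodeWeight y (s - h) =
      2 * sin (h / 2) * sin (s - h / 2) * (nodeWeight y s * nodeWeight y (s - h)) := by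
  have hcos : cos (s - h) - cos s = 2 * sin (h / 2) * sin (s - h / 2) := by
    rw [cos_sub_cos, show (s - h + s) / 2 = s - h / 2 by ring,
      show (s - h - s) / 2 = -(h / 2) by ring, sin_neg]
    ring
  rw [← hcos, nodeWeight, nodeWeight, inv_sub_inv (sub_pos.2 hs.2).ne' (sub_pos.2 hsh.2).ne',
    div_eq_mul_inv, mul_inv]
  ring

lemma sq_nodeWeight_mul_le (hy : -1 < y) (hh : 0 < h) (ht : 0 ≤ t) (htβ : t + 2 * h ≤ β)
    (hβ : β + h ∈ visibleArc y) :
    nodeWeight y (t + h) ^ 2 * nodeWeight y (β - h) ≤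
      nodeWeight y t ^ 2 * nodeWeight y (β + h) := by
  have hmem {s : ℝ} (hs0 : 0 ≤ s) (hsβ : s ≤ β + h) : s ∈ visibleArc y :=
    mem_visibleArc_of_le hβ hs0 hsβ
  have hlog {s : ℝ} (hts : t ≤ s) (hsβ : s ≤ β) :=
    mul_le_mul_of_convexOn_log (convexOn_log_nodeWeight hy) (fun _ => nodeWeight_pos)
      (hmem ht (by linarith)) (hmem (by linarith : 0 ≤ s + h) (by linarith)) hts hh.le
  have hlog₁ := hlog (s := β - h) (by linarith) (by linarith)
  have hlog₂ := hlog (s := β) (by linarith) le_rfl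
  rw [sub_add_cancel] at hlog₁
  have hpos {s : ℝ} (hs0 : 0 ≤ s) (hsβ : s ≤ β + h) := (nodeWeight_pos (hmem hs0 hsβ)).le
  calc nodeWeight y (t + h) ^ 2 * nodeWeight y (β - h)
      = nodeWeight y (t + h) * (nodeWeight y (t + h) * nodeWeight y (β - h)) := by ring
    _ ≤ nodeWeight y (t + h) * (nodeWeight y β * nodeWeight y t) :=
        mul_le_mul_of_nonneg_left hlog₁ (hpos (by linarith) (by linarith))
    _ = nodeWeight y (t + h) * nodeWeight y β * nodeWeight y t := by ring
    _ ≤ nodeWeight y (β + h) * nodeWeight y t * nodeWeight y t :=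
        mul_le_mul_of_nonneg_right hlog₂ (hpos ht (by linarith))
    _ = nodeWeight y t ^ 2 * nodeWeight y (β + h) := by ring

lemma mul_sin_mul_sq_nodeWeight_le (hy : -1 < y) (hh : 0 < h) (ht : 0 ≤ t)
    (htβ : t + 2 * h ≤ β) (hβ : β + h ∈ visibleArc y)
    (hshift : nodeWeight y (β - h) - ρ * nodeWeight y β <
      nodeWeight y β - ρ * nodeWeight y (β + h)) :
    ρ * sin (β + h / 2) * nodeWeight y (t + h) ^ 2 ≤ sin (β - h / 2) * nodeWeight y t ^ 2 := by
  have hβ0 : β ∈ visibleArc y := mem_visibleArc_of_le hβ (by linarith) (by linarith)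
  have hβh : β - h ∈ visibleArc y := mem_visibleArc_of_le hβ (by linarith) (by linarith)
  have hβπ := hβ.1.2
  have hsin : 0 < sin (h / 2) := sin_pos_of_pos_of_lt_pi (by linarith) (by linarith)
  have hD : 0 ≤ sin (β - h / 2) := sin_nonneg_of_nonneg_of_le_pi (by linarith) (by linarith)
  have hpair : ρ * sin (β + h / 2) * nodeWeight y (β + h) ≤
      sin (β - h / 2) * nodeWeight y (β - h) := by
    have hnext := nodeWeight_sub_nodeWeight_sub (h := h) hβ (by rwa [add_sub_cancel_right])
    have hprev := nodeWeight_sub_nodeWeight_sub hβ0 hβh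
    rw [add_sub_cancel_right, show β + h - h / 2 = β + h / 2 by ring] at hnext
    refine le_of_mul_le_mul_left ?_
      (mul_pos (mul_pos two_pos hsin) (nodeWeight_pos hβ0))
    linarith [congrArg (ρ * ·) hnext]
  refine le_of_mul_le_mul_right ?_ (nodeWeight_pos hβ)
  calc ρ * sin (β + h / 2) * nodeWeight y (t + h) ^ 2 * nodeWeight y (β + h)
      = ρ * sin (β + h / 2) * nodeWeight y (β + h) * nodeWeight y (t + h) ^ 2 := by ring
    _ ≤ sin (β - h / 2) * nodeWeight y (β - h) * nodeWeight y (t + h) ^ 2 := by gcongr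
    _ = sin (β - h / 2) * (nodeWeight y (t + h) ^ 2 * nodeWeight y (β - h)) := by ring
    _ ≤ sin (β - h / 2) * (nodeWeight y t ^ 2 * nodeWeight y (β + h)) :=
        mul_le_mul_of_nonneg_left (sq_nodeWeight_mul_le hy hh ht htβ hβ) hD
    _ = sin (β - h / 2) * nodeWeight y t ^ 2 * nodeWeight y (β + h) := by ring

lemma one_add_mul_sin_sub_sin_le (hh : 0 < h) (hπ : h ≤ π / 3)
    (hFD : sin (β + h / 2) ≤ sin (β - h / 2)) (hβ : β + h ∈ visibleArc y) (ht : 0 ≤ t)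
    (htβ : t ≤ β - h) :
    (1 + y) * (sin (β - h / 2) - sin (β + h / 2)) ≤ sin (β - h / 2) * (cos t - y) := by
  have hβπ := hβ.1.2
  have hsinβ : 0 ≤ sin β := sin_nonneg_of_nonneg_of_le_pi (by linarith) (by linarith)
  have hsin : 0 < sin (h / 2) := sin_pos_of_pos_of_lt_pi (by linarith) (by linarith)
  have hcos : 1 / 2 ≤ cos (h / 2) := cos_pi_div_three ▸
    cos_le_cos_of_nonneg_of_le_pi (by linarith) (by linarith) (by linarith)
  have hy : 1 + y ≤ 1 + cos β := by
    linarith [hβ.2, cos_le_cos_of_nonneg_of_le_pi (x := β) (y := β + h) (by linarith) hβπ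
      (by linarith)]
  have hdiff : sin (β - h / 2) - sin (β + h / 2) = -cos β * (2 * sin (h / 2)) := by
    rw [sin_sub, sin_add]
    ring
  have hcosβ : cos β ≤ 0 := nonpos_of_mul_nonpos_left (b := sin (h / 2)) (by linarith) hsin
  have hD0 : 0 ≤ sin (β - h / 2) := sin_nonneg_of_nonneg_of_le_pi (by linarith) (by linarith)
  have hD : sin β * cos (h / 2) ≤ sin (β - h / 2) := by
    rw [sin_sub]
    linarith [mul_nonneg (neg_nonneg.2 hcosβ) hsin.le]
  have hgap : 4 * sin β * sin (h / 2) * cos (h / 2) ≤ cos t - y := by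
    have hle := cos_le_cos_of_nonneg_of_le_pi ht (by linarith) htβ
    have hsub : cos (β - h) - cos (β + h) = 2 * sin β * sin h := by
      rw [cos_sub, cos_add]
      ring
    have hdouble : sin h = 2 * sin (h / 2) * cos (h / 2) := by
      rw [← sin_two_mul, mul_div_cancel₀ h two_ne_zero]
    rw [hdouble] at hsub
    linarith [hβ.2]
  calc (1 + y) * (sin (β - h / 2) - sin (β + h / 2))
      ≤ (1 + cos β) * (-cos β * (2 * sin (h / 2))) := by
        rw [hdiff]
        exact mul_le_mul_of_nonneg_right hy (mul_nonneg (neg_nonneg.2 hcosβ) (by positivity))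
    _ ≤ (1 + cos β) * ((1 - cos β) * sin (h / 2)) := by
        have := neg_one_le_cos β
        refine mul_le_mul_of_nonneg_left ?_ (by linarith)
        nlinarith
    _ = sin β ^ 2 * sin (h / 2) := by rw [sin_sq]; ring
    _ ≤ sin β ^ 2 * sin (h / 2) * (4 * cos (h / 2) ^ 2) :=
        le_mul_of_one_le_right (by positivity) (by nlinarith)
    _ = sin β * cos (h / 2) * (4 * sin β * sin (h / 2) * cos (h / 2)) := by ring
    _ ≤ sin (β - h / 2) * (cos t - y) := by gcongr

lemma two_mul_mul_le_of_mul_sq_le {D F V u q : ℝ} (hρ : 0 < ρ) (hD : 0 < D) (hF : 0 < F)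
    (hq : 0 < q) (hFD : F ≤ D) (hsq : ρ * F * V ^ 2 ≤ D * q ^ 2) (hu : V * (D - F) ≤ u * D) :
    2 * ρ * V ≤ 2 * ρ * u + (1 + ρ) * q := by
  have hVF : 2 * ρ * V * F ≤ (1 + ρ) * q * D := by
    refine abs_le_of_sq_le_sq' ?_ (by positivity) |>.2
    calc (2 * ρ * V * F) ^ 2 = 4 * ρ * F * (ρ * F * V ^ 2) := by ring
      _ ≤ 4 * ρ * F * (D * q ^ 2) := by gcongr
      _ ≤ 4 * ρ * D * (D * q ^ 2) := by gcongr
      _ ≤ 4 * ρ * D * (D * q ^ 2) + ((1 - ρ) * q * D) ^ 2 :=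
          le_add_of_nonneg_right (sq_nonneg _)
      _ = ((1 + ρ) * q * D) ^ 2 := by ring
  refine le_of_mul_le_mul_right ?_ hD
  linarith [mul_le_mul_of_nonneg_left hu hρ.le]

/- `hshift` says that moving the pair at `β` towards the end of the interval does not pay off. -/
lemma two_mul_nodeWeight_le_of_shift_lt (hρ : 0 < ρ) (hy : -1 < y) (hh : 0 < h) (hπ : h ≤ π / 3)
    (ht : 0 ≤ t) (htβ : t + 2 * h ≤ β) (hβ : β + h ∈ visibleArc y)
    (hshift : nodeWeight y (β - h) - ρ * nodeWeight y β <
      nodeWeight y β - ρ * nodeWeight y (β + h)) :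
    2 * ρ * nodeWeight y (t + h) ≤ 2 * ρ * nodeWeight (-y) 0 + (1 + ρ) * nodeWeight y t := by
  have hβπ := hβ.1.2
  have hD : 0 < sin (β - h / 2) := sin_pos_of_pos_of_lt_pi (by linarith) (by linarith)
  have hF : 0 < sin (β + h / 2) := sin_pos_of_pos_of_lt_pi (by linarith) (by linarith)
  have htpos := nodeWeight_pos (mem_visibleArc_of_le hβ ht (by linarith))
  have hth : t + h ∈ visibleArc y := mem_visibleArc_of_le hβ (by linarith) (by linarith)
  have hsq := mul_sin_mul_sq_nodeWeight_le hy hh ht htβ hβ hshift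
  have hu : nodeWeight (-y) 0 = (1 + y)⁻¹ := by rw [nodeWeight, cos_zero, sub_neg_eq_add]
  have hy0 : 0 < 1 + y := by linarith
  have hupos : 0 < nodeWeight (-y) 0 := hu ▸ inv_pos.2 hy0
  rcases le_total (sin (β - h / 2)) (sin (β + h / 2)) with hDF | hFD
  · refine two_mul_mul_le_of_mul_sq_le hρ hD hD htpos le_rfl (le_trans ?_ hsq) ?_
    · gcongr
    · rw [sub_self, mul_zero]
      positivity
  · refine two_mul_mul_le_of_mul_sq_le hρ hD hF htpos hFD hsq ?_
    rw [hu, nodeWeight, inv_mul_eq_div, inv_mul_eq_div,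
      div_le_div_iff₀ (sub_pos.2 hth.2) hy0]
    linarith [one_add_mul_sin_sub_sin_le hh hπ hFD hβ hth.1.1 (by linarith)]

end

/-! ### Two lone nodes -/

/-- The angles of the nodes with indices `β i` in the grid of step `h`. -/
noncomputable def gridAngle (h : ℝ) (β : ℕ → ℕ) (i : ℕ) : ℝ := β i * h

/-- Moves the entries of `β` with index at least `j` down by one. -/
def shiftDown (j : ℕ) (β : ℕ → ℕ) (i : ℕ) : ℕ := if j ≤ i then β i - 1 else β i

/-- If the lone node and the first `j` pairs of `b` are flush and the next node is free, then
filling the hole behind them and regrouping turns these `2 j + 2` nodes into `j + 1` pairs. -/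
noncomputable def fillHole (h : ℝ) (j : ℕ) (b : ℕ → ℝ) (i : ℕ) : ℝ :=
  if i ≤ j then flushAngle h 0 i else b (i - 1)

section

variable {h x y ρ : ℝ} {σ τ m p j : ℕ} {a b : ℕ → ℝ} {α β : ℕ → ℕ}

lemma pairConfig_fillHole (B : PairConfig h y τ p b) (hh : 0 < h) (hj : j < p)
    (hhole : flushAngle h 1 j + h ≤ b j) : PairConfig h y 0 (p + 1) (fillHole h j b) := by
  have hle {i : ℕ} (hi : i ≤ j) : flushAngle h 0 i + 2 * h ≤ b j := by
    linarith [flushAngle_mono hh.le 0 hi, flushAngle_one h j]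
  refine ⟨fun i hi => ?_, fun i hi => ?_, fun i hi => ?_, fun i hi => ?_, B.lt_one⟩
  · rw [Nat.cast_zero, zero_mul, fillHole]
    split_ifs with hij
    · exact flushAngle_nonneg hh.le 0 i
    · exact B.nonneg hh (by omega)
  · unfold fillHole
    split_ifs with hij hij' hij'
    · exact (flushAngle_add_one h 0 i).ge
    · obtain rfl : i = j := by omega
      exact hle le_rfl
    · omega
    · obtain ⟨k, rfl⟩ : ∃ k, i = k + 1 := ⟨i - 1, by omega⟩
      exact B.gap k (by omega)
  · unfold fillHole
    split_ifs with hij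
    · linarith [hle hij, B.le_pi j hj]
    · exact B.le_pi _ (by omega)
  · unfold fillHole
    split_ifs with hij
    · exact (mem_visibleArc_of_le (B.inner_mem hh hj)
        (by linarith [flushAngle_nonneg hh.le 0 i]) (by linarith [hle hij])).2
    · exact B.lt_cos _ (by omega)

lemma sideValue_fillHole_sub (hj : j ≤ p) (hflush : ∀ i < j, b i = flushAngle h 1 i) :
    sideValue ρ h y 0 (p + 1) (fillHole h j b) - sideValue ρ h y 1 p b =
      sideValue ρ h y 0 (j + 1) (flushAngle h 0) - sideValue ρ h y 1 j (flushAngle h 1) := by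
  have hhead : pairSum ρ h (nodeWeight y) (fillHole h j b) 0 (j + 1) =
      pairSum ρ h (nodeWeight y) (flushAngle h 0) 0 (j + 1) :=
    pairSum_congr_angle (fun i hi => if_pos (Nat.lt_succ_iff.1 hi)) ..
  have htail : pairSum ρ h (nodeWeight y) (fillHole h j b) (j + 1) (p + 1) =
      pairSum ρ h (nodeWeight y) b j p := by
    rw [pairSum, ← sum_Ico_add']
    exact sum_congr rfl fun i hi => by
      rw [fillHole, if_neg (by have := (mem_Ico.1 hi).1; omega), Nat.add_sub_cancel]
  have hsplit (a : ℕ → ℝ) {k n : ℕ} (hkn : k ≤ n) : pairSum ρ h (nodeWeight y) a 0 n =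
      pairSum ρ h (nodeWeight y) a 0 k + pairSum ρ h (nodeWeight y) a k n :=
    (sum_Ico_consecutive _ k.zero_le hkn).symm
  simp only [sideValue]
  rw [hsplit _ (Nat.add_le_add_right hj 1), hsplit b hj, hhead, htail,
    pairSum_congr_angle hflush]
  ring

lemma hasFlushConfig_of_hole (hρ : 0 < ρ) (hh : 0 < h) (hπ : h ≤ π) (hm : 1 ≤ m)
    (A : PairConfig h x 1 m a) (B : PairConfig h (-x) 1 p b) (hj : j < p)
    (hflush : ∀ i < j, b i = flushAngle h 1 i) (hhole : flushAngle h 1 j + h ≤ b j)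
    (hvalue : 0 ≤ sideValue ρ h x 1 m a + sideValue ρ h (-x) 1 p b)
    (hweight : 2 * ρ * nodeWeight (-x) (flushAngle h 1 j) ≤
      2 * ρ * nodeWeight x 0 + (1 + ρ) * nodeWeight (-x) (flushAngle h 0 j)) :
    HasFlushConfig ρ h (2 * m + 1 + (2 * p + 1)) := by
  have hmem : flushAngle h 1 j ∈ visibleArc (-x) :=
    mem_visibleArc_of_le (B.inner_mem hh hj) (flushAngle_nonneg hh.le 1 j) (by linarith)
  have hregroup := le_sideValue_flush_sub hρ hh (by linarith [A.lt_one]) j hmem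
  rw [← sideValue_fillHole_sub hj.le hflush] at hregroup
  have hlone := sideValue_zero_eq_add ρ h x 1 m a
  have hpos : 0 < (1 + ρ) * nodeWeight (-x) 0 := mul_pos (by linarith) B.nodeWeight_zero_pos
  rw [Nat.cast_one, one_mul] at hlone
  convert hasFlushConfig_even_even hρ hh hπ hm (by omega) (A.forget_lone hh)
    (pairConfig_fillHole B hh hj hhole) (by linarith) using 1
  omega

namespace PairConfig

lemma add_two_mul_le_grid (B : PairConfig h y τ p (gridAngle h β)) (hh : 0 < h) {i : ℕ}
    (hi : i < p) : τ + 2 * i ≤ β i := by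
  exact_mod_cast le_of_mul_le_mul_right (B.index_mul_le i hi) hh

lemma grid_add_two_le (B : PairConfig h y τ p (gridAngle h β)) (hh : 0 < h) {i k : ℕ}
    (hik : i < k) (hk : k < p) : β i + 2 ≤ β k := by
  have hle := B.add_two_mul_le hh i k hik hk
  rw [gridAngle, gridAngle, ← add_mul] at hle
  exact_mod_cast le_of_mul_le_mul_right hle hh

lemma eq_or_exists_hole (B : PairConfig h y τ p (gridAngle h β)) (hh : 0 < h) :
    (∀ i < p, β i = τ + 2 * i) ∨ ∃ j < p, (∀ i < j, β i = τ + 2 * i) ∧ τ + 2 * j < β j := by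
  classical
  refine or_iff_not_imp_left.2 fun hne => ?_
  push Not at hne
  obtain ⟨hj, hjne⟩ := Nat.find_spec hne
  refine ⟨_, hj, fun i hi => ?_, lt_of_le_of_ne (B.add_two_mul_le_grid hh hj) hjne.symm⟩
  by_contra hine
  exact Nat.find_min hne hi ⟨hi.trans hj, hine⟩

lemma lt_grid_of_le (B : PairConfig h y τ p (gridAngle h β)) (hh : 0 < h)
    (hhole : τ + 2 * j < β j) {i : ℕ} (hji : j ≤ i) (hi : i < p) : τ + 2 * j < β i := by
  rcases hji.eq_or_lt with rfl | hji
  · exact hhole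
  · have := B.grid_add_two_le hh hji hi
    omega

end PairConfig

lemma shiftDown_le (j : ℕ) (β : ℕ → ℕ) (i : ℕ) : shiftDown j β i ≤ β i := by
  unfold shiftDown
  split_ifs <;> omega

lemma pairConfig_shiftDown (B : PairConfig h y τ p (gridAngle h β)) (hh : 0 < h)
    (hflush : ∀ i < j, β i = τ + 2 * i) (hhole : τ + 2 * j < β j) :
    PairConfig h y τ p (gridAngle h (shiftDown j β)) := by
  have htail {i : ℕ} (hji : j ≤ i) (hi : i < p) := B.lt_grid_of_le hh hhole hji hi
  refine B.of_le hh.le (fun hp => ?_) (fun i hi => ?_) fun i _ => ?_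
  · refine mul_le_mul_of_nonneg_right (Nat.cast_le.2 ?_) hh.le
    have := B.add_two_mul_le_grid hh hp
    unfold shiftDown
    split_ifs with hj
    · have := htail hj hp
      omega
    · omega
  · have hnat : shiftDown j β i + 2 ≤ shiftDown j β (i + 1) := by
      have := B.grid_add_two_le hh i.lt_succ_self hi
      have := fun hj : j ≤ i + 1 => htail hj hi
      have := hflush i
      unfold shiftDown
      split_ifs <;> grind
    rw [gridAngle, gridAngle, ← add_mul]
    exact mul_le_mul_of_nonneg_right (by exact_mod_cast hnat) hh.le
  · exact mul_le_mul_of_nonneg_right (Nat.cast_le.2 (shiftDown_le j β i)) hh.le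

lemma exists_shift_lt (hβ : ∀ i, j ≤ i → i < p → 0 < β i)
    (hlt : sideValue ρ h y τ p (gridAngle h (shiftDown j β)) <
      sideValue ρ h y τ p (gridAngle h β)) :
    ∃ i, j ≤ i ∧ i < p ∧
      nodeWeight y (gridAngle h β i - h) - ρ * nodeWeight y (gridAngle h β i) <
        nodeWeight y (gridAngle h β i) - ρ * nodeWeight y (gridAngle h β i + h) := by
  obtain ⟨i, hi, hlt⟩ := exists_lt_of_sum_lt ((sub_lt_sub_iff_right _).1 hlt)
  have hip := (mem_Ico.1 hi).2
  have hji : j ≤ i := by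
    by_contra hij
    rw [gridAngle, gridAngle, shiftDown, if_neg hij] at hlt
    exact lt_irrefl _ hlt
  have hshift : gridAngle h (shiftDown j β) i = gridAngle h β i - h := by
    rw [gridAngle, gridAngle, shiftDown, if_pos hji, Nat.cast_sub (hβ i hji hip)]
    ring
  rw [hshift, sub_add_cancel] at hlt
  exact ⟨i, hji, hip, hlt⟩

lemma gridAngle_eq_flushAngle {i : ℕ} (hi : β i = σ + 2 * i) (h : ℝ) :
    gridAngle h β i = flushAngle h σ i := by
  rw [gridAngle, flushAngle, hi]
  push_cast
  ring

/- As long as moving the nodes beyond the first hole towards the end of the interval pays off, it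
is repeated; once it does not, the hole gets filled. -/
lemma hasFlushConfig_or_flush_left (hρ : 0 < ρ) (hh : 0 < h) (hπ : h ≤ π / 3) (hm : 1 ≤ m)
    (A : PairConfig h x 1 m a) (β : ℕ → ℕ) (B : PairConfig h (-x) 1 p (gridAngle h β))
    (hvalue : 0 ≤ sideValue ρ h x 1 m a + sideValue ρ h (-x) 1 p (gridAngle h β)) :
    HasFlushConfig ρ h (2 * m + 1 + (2 * p + 1)) ∨
      (PairConfig h (-x) 1 p (flushAngle h 1) ∧
        0 ≤ sideValue ρ h x 1 m a + sideValue ρ h (-x) 1 p (flushAngle h 1)) := by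
  induction hn : ∑ i ∈ range p, β i using Nat.strong_induction_on generalizing β with
  | _ n ih =>
  rcases B.eq_or_exists_hole hh with hall | ⟨j, hj, hflush, hhole⟩
  · have heq (i) (hi : i < p) := gridAngle_eq_flushAngle (hall i hi) h
    exact .inr ⟨B.congr_angle heq, by rwa [← sideValue_congr_angle heq]⟩
  have htail {i : ℕ} (hji : j ≤ i) (hi : i < p) := B.lt_grid_of_le hh hhole hji hi
  rcases le_or_gt (sideValue ρ h (-x) 1 p (gridAngle h β))
    (sideValue ρ h (-x) 1 p (gridAngle h (shiftDown j β))) with hle | hlt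
  · refine ih _ ?_ _ (pairConfig_shiftDown B hh hflush hhole) (by linarith) rfl
    rw [← hn]
    refine sum_lt_sum (fun i _ => shiftDown_le j β i) ⟨j, mem_range.2 hj, ?_⟩
    rw [shiftDown, if_pos le_rfl]
    omega
  · left
    obtain ⟨i, hji, hi, hshift⟩ := exists_shift_lt (fun i hji hi => by have := htail hji hi; omega)
      hlt
    have hgrid {i : ℕ} (hji : j ≤ i) (hi : i < p) : flushAngle h 1 j + h ≤ gridAngle h β i := by
      have hle : ((1 + 2 * j + 1 : ℕ) : ℝ) ≤ β i := Nat.cast_le.2 (htail hji hi)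
      push_cast at hle
      calc flushAngle h 1 j + h = (1 + 2 * j + 1) * h := by
            rw [flushAngle, Nat.cast_one]
            ring
        _ ≤ gridAngle h β i := mul_le_mul_of_nonneg_right hle hh.le
    refine hasFlushConfig_of_hole hρ hh (by linarith [pi_pos]) hm A B hj
      (fun i hi => gridAngle_eq_flushAngle (hflush i hi) h) (hgrid le_rfl hj) hvalue ?_
    have hfill := two_mul_nodeWeight_le_of_shift_lt hρ (by linarith [A.lt_one]) hh hπ
      (flushAngle_nonneg hh.le 0 j) (by linarith [hgrid hji hi, flushAngle_one h j])
      (B.inner_mem hh hi) hshift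
    rwa [neg_neg, ← flushAngle_one] at hfill

lemma hasFlushConfig_odd_odd (hρ : 0 < ρ) (hh : 0 < h) (hπ : h ≤ π / 3) (hmp : 1 ≤ m + p)
    (A : PairConfig h x 1 m (gridAngle h α)) (B : PairConfig h (-x) 1 p (gridAngle h β))
    (hvalue : 0 ≤ sideValue ρ h x 1 m (gridAngle h α) + sideValue ρ h (-x) 1 p (gridAngle h β)) :
    HasFlushConfig ρ h (2 * m + 1 + (2 * p + 1)) := by
  rcases Nat.eq_zero_or_pos m with rfl | hm
  · simpa using hasFlushConfig_lone hρ hh hπ (by omega) A B hvalue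
  rcases Nat.eq_zero_or_pos p with rfl | hp
  · convert hasFlushConfig_lone hρ hh hπ hm B (by rwa [neg_neg])
      (by rwa [neg_neg, add_comm]) using 1
    omega
  rcases hasFlushConfig_or_flush_left hρ hh hπ hm A β B hvalue with hflush | ⟨B', hvalue'⟩
  · exact hflush
  rcases hasFlushConfig_or_flush_left (x := -x) hρ hh hπ hp B' α (by rwa [neg_neg])
    (by rwa [neg_neg, add_comm]) with hflush | ⟨A', hvalue''⟩
  · rwa [add_comm] at hflush
  rw [neg_neg] at A' hvalue''
  exact ⟨1, 1, m, p, x, le_rfl, le_rfl, rfl, by omega, by omega, A', B', by rwa [add_comm]⟩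

lemma hasFlushConfig_of_grid (hρ : 0 < ρ) (hh : 0 < h) (hπ : h ≤ π / 3) (hσ : σ ≤ 1) (hτ : τ ≤ 1)
    (hmσ : 1 ≤ m + σ) (hpτ : 1 ≤ p + τ) (hmp : 1 ≤ m + p)
    (A : PairConfig h x σ m (gridAngle h α)) (B : PairConfig h (-x) τ p (gridAngle h β))
    (hvalue : 0 ≤ sideValue ρ h x σ m (gridAngle h α) + sideValue ρ h (-x) τ p (gridAngle h β)) :
    HasFlushConfig ρ h (2 * m + σ + (2 * p + τ)) := by
  have hπ' : h ≤ π := by linarith [pi_pos]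
  interval_cases σ <;> interval_cases τ
  · exact hasFlushConfig_even_even hρ hh hπ' hmσ hpτ A B hvalue
  · exact hasFlushConfig_even_odd hρ hh hπ' hmσ A B hvalue
  · rw [add_comm]
    exact hasFlushConfig_even_odd (x := -x) hρ hh hπ' hpτ B (by rwa [neg_neg])
      (by rwa [neg_neg, add_comm])
  · exact hasFlushConfig_odd_odd hρ hh hπ hmp A B hvalue

end

/-! ### From nodes to configurations -/

/-- The sum of the inner weights at the nodes `k i` on one side of `x`, numbered from the outside;
the lone node `k 0`, if there is one, counts as inner. -/
noncomputable def innerNodeSum (h x : ℝ) (σ m : ℕ) (k : ℕ → ℕ) : ℝ :=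
  ∑ i ∈ range m, nodeWeight x (gridAngle h k (2 * i + σ + 1)) + σ * nodeWeight x (gridAngle h k 0)

/-- The sum of the outer weights at the nodes `k i` on one side of `x`. -/
noncomputable def outerNodeSum (h x : ℝ) (σ m : ℕ) (k : ℕ → ℕ) : ℝ :=
  ∑ i ∈ range m, nodeWeight x (gridAngle h k (2 * i + σ))

/-- The `L` nodes at the angles `k i * h` are numbered from the outside and lie on the right
of `x`. The nodes on the left of `x` are described by their reflections, with `-x` for `x`. -/
structure NodeSide (h x : ℝ) (L : ℕ) (k : ℕ → ℕ) : Prop where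
  lt : ∀ i j, i < j → j < L → k i < k j
  mem_visibleArc : ∀ i < L, gridAngle h k i ∈ visibleArc x

/-- Moves the inner node of each pair to its outer neighbour on the grid: the outer angles of the
closest pairs with the same inner nodes. -/
def pairIndex (σ : ℕ) (k : ℕ → ℕ) (i : ℕ) : ℕ := k (2 * i + σ + 1) - 1

lemma sum_range_pow_mul {s : ℝ} (hs : s ^ 2 = 1) {σ : ℕ} (hσ : σ ≤ 1) (e : ℕ → ℝ) (m : ℕ) :
    ∑ j ∈ range (2 * m + σ), s ^ (j + σ) * e j =
      ∑ i ∈ range m, e (2 * i + σ) + s * (∑ i ∈ range m, e (2 * i + σ + 1) + σ * e 0) := by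
  induction m with
  | zero => interval_cases σ <;> simp
  | succ m ih =>
    have hpow : s ^ (2 * m + σ + σ) = 1 := by
      rw [show 2 * m + σ + σ = 2 * (m + σ) by ring, pow_mul, hs, one_pow]
    rw [show 2 * (m + 1) + σ = 2 * m + σ + 1 + 1 by ring, sum_range_succ, sum_range_succ, ih,
      sum_range_succ _ m, sum_range_succ _ m, show 2 * m + σ + 1 + σ = 2 * m + σ + σ + 1 by ring,
      pow_succ, hpow]
    ring

lemma sum_range_eq_add_reflect {l r n : ℕ} (hn : l + r = n + 1) (f : ℕ → ℝ) :
    ∑ i ∈ range (n + 1), f i = ∑ i ∈ range l, f i + ∑ i ∈ range r, f (n - i) := by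
  rw [← hn, sum_range_add, ← sum_range_reflect _ r]
  congr 1
  refine sum_congr rfl fun i hi => ?_
  have := mem_range.1 hi
  congr 1
  omega

section

variable {h x : ℝ} {σ τ m p n : ℕ} {k k' : ℕ → ℕ} {c : ℕ → ℝ}

lemma sum_nodeWeight_eq (hσ : σ ≤ 1) :
    ∑ j ∈ range (2 * m + σ), nodeWeight x (gridAngle h k j) =
      innerNodeSum h x σ m k + outerNodeSum h x σ m k := by
  have hsum := sum_range_pow_mul (one_pow 2) hσ (fun j => nodeWeight x (gridAngle h k j)) m
  simp only [one_pow, one_mul] at hsum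
  rw [hsum, add_comm, innerNodeSum, outerNodeSum]

lemma sum_neg_one_pow_mul_nodeWeight_eq (hσ : σ ≤ 1) :
    ∑ j ∈ range (2 * m + σ), (-1) ^ (j + σ) * nodeWeight x (gridAngle h k j) =
      outerNodeSum h x σ m k - innerNodeSum h x σ m k := by
  rw [sum_range_pow_mul (by norm_num) hσ, innerNodeSum, outerNodeSum]
  ring

lemma sum_one_div_abs_eq (hσ : σ ≤ 1) (hτ : τ ≤ 1) (hn : 2 * m + σ + (2 * p + τ) = n + 1)
    (A : NodeSide h x (2 * m + σ) k) (B : NodeSide h (-x) (2 * p + τ) k')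
    (hright : ∀ i < 2 * m + σ, c i = cos (gridAngle h k i))
    (hleft : ∀ i < 2 * p + τ, c (n - i) = -cos (gridAngle h k' i)) :
    ∑ i ∈ range (n + 1), 1 / |x - c i| =
      (innerNodeSum h x σ m k + innerNodeSum h (-x) τ p k') +
        (outerNodeSum h x σ m k + outerNodeSum h (-x) τ p k') := by
  have hr : ∑ i ∈ range (2 * m + σ), 1 / |x - c i| =
      ∑ i ∈ range (2 * m + σ), nodeWeight x (gridAngle h k i) := by
    refine sum_congr rfl fun i hi => ?_
    have hi := mem_range.1 hi
    rw [hright i hi, abs_of_neg (sub_neg.2 (A.mem_visibleArc i hi).2), nodeWeight, one_div, neg_sub]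
  have hl : ∑ i ∈ range (2 * p + τ), 1 / |x - c (n - i)| =
      ∑ i ∈ range (2 * p + τ), nodeWeight (-x) (gridAngle h k' i) := by
    refine sum_congr rfl fun i hi => ?_
    have hi := mem_range.1 hi
    have hcos := (B.mem_visibleArc i hi).2
    rw [hleft i hi, sub_neg_eq_add, abs_of_pos (by linarith), nodeWeight, one_div,
      sub_neg_eq_add, add_comm]
  rw [sum_range_eq_add_reflect hn, hr, hl, sum_nodeWeight_eq hσ, sum_nodeWeight_eq hτ]
  ring

lemma abs_sum_neg_one_pow_div_eq (hσ : σ ≤ 1) (hτ : τ ≤ 1)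
    (hn : 2 * m + σ + (2 * p + τ) = n + 1)
    (hright : ∀ i < 2 * m + σ, c i = cos (gridAngle h k i))
    (hleft : ∀ i < 2 * p + τ, c (n - i) = -cos (gridAngle h k' i)) :
    |∑ j ∈ range (n + 1), (-1 : ℝ) ^ j / (x - c j)| =
      |(innerNodeSum h x σ m k + innerNodeSum h (-x) τ p k') -
        (outerNodeSum h x σ m k + outerNodeSum h (-x) τ p k')| := by
  have hr : ∑ j ∈ range (2 * m + σ), (-1 : ℝ) ^ j / (x - c j) =
      (-1) ^ (σ + 1) * (outerNodeSum h x σ m k - innerNodeSum h x σ m k) := by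
    rw [← sum_neg_one_pow_mul_nodeWeight_eq hσ, mul_sum]
    refine sum_congr rfl fun i hi => ?_
    have hsign : (-1 : ℝ) ^ (σ + 1) * (-1) ^ (i + σ) = (-1) ^ (i + 1) := by
      rw [← pow_add]
      exact neg_one_pow_congr (by rw [Nat.even_iff, Nat.even_iff]; omega)
    rw [hright i (mem_range.1 hi), ← mul_assoc, hsign, nodeWeight, ← neg_sub, div_neg,
      div_eq_mul_inv, pow_succ, mul_neg_one, neg_mul]
  have hl : ∑ j ∈ range (2 * p + τ), (-1 : ℝ) ^ (n - j) / (x - c (n - j)) =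
      (-1) ^ (σ + 1) * (outerNodeSum h (-x) τ p k' - innerNodeSum h (-x) τ p k') := by
    rw [← sum_neg_one_pow_mul_nodeWeight_eq hτ, mul_sum]
    refine sum_congr rfl fun i hi => ?_
    have hi := mem_range.1 hi
    have hsign : (-1 : ℝ) ^ (σ + 1) * (-1) ^ (i + τ) = (-1) ^ (n - i) := by
      rw [← pow_add]
      exact neg_one_pow_congr (by rw [Nat.even_iff, Nat.even_iff]; omega)
    rw [hleft i hi, ← mul_assoc, hsign, nodeWeight, div_eq_mul_inv, sub_neg_eq_add,
      sub_neg_eq_add, add_comm x]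
  rw [sum_range_eq_add_reflect hn, hr, hl, ← mul_add, abs_mul, abs_neg_one_pow, one_mul,
    ← abs_neg]
  congr 1
  ring

end

lemma nodeWeight_le_nodeWeight {x s t : ℝ} (ht : t ∈ visibleArc x) (h0 : 0 ≤ s) (hst : s ≤ t) :
    nodeWeight x s ≤ nodeWeight x t :=
  inv_anti₀ (sub_pos.2 ht.2) (sub_le_sub_right (cos_le_cos_of_nonneg_of_le_pi h0 ht.1.2 hst) x)

lemma nodeWeight_le_mul_nodeWeight {h x s t : ℝ} (hx : -1 ≤ x) (hh : 0 ≤ h) (h0 : 0 ≤ s)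
    (hst : s + h ≤ t) (ht : t ∈ visibleArc x) :
    nodeWeight x s ≤ (1 + cos h) / 2 * nodeWeight x t := by
  have hgap := one_sub_cos_le h0 hh (hst.trans ht.1.2)
  have hle := cos_le_cos_of_nonneg_of_le_pi (by linarith) ht.1.2 hst
  have hpos : 0 < cos t - x := sub_pos.2 ht.2
  have hcos := cos_le_one h
  rw [nodeWeight, nodeWeight, ← div_eq_mul_inv, le_div_iff₀ hpos,
    inv_mul_le_iff₀ (by linarith)]
  nlinarith [cos_le_one s]

namespace NodeSide

variable {h x : ℝ} {L σ m : ℕ} {k : ℕ → ℕ}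

lemma index_le (A : NodeSide h x L k) : ∀ i < L, i ≤ k i := by
  intro i
  induction i with
  | zero => exact fun _ => zero_le
  | succ i ih => exact fun hi => (ih (by omega)).trans_lt (A.lt i (i + 1) (by omega) hi)

lemma gridAngle_add_le (A : NodeSide h x L k) (hh : 0 ≤ h) {i : ℕ} (hi : i + 1 < L) :
    gridAngle h k i + h ≤ gridAngle h k (i + 1) := by
  have hlt : (k i : ℝ) + 1 ≤ k (i + 1) := by exact_mod_cast A.lt i (i + 1) (by omega) hi
  rw [gridAngle, gridAngle]
  nlinarith

lemma lt_one (A : NodeSide h x L k) (hL : 1 ≤ L) : x < 1 :=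
  (A.mem_visibleArc 0 hL).2.trans_le (cos_le_one _)

lemma gridAngle_pairIndex_add (A : NodeSide h x (2 * m + σ) k) {i : ℕ} (hi : i < m) :
    gridAngle h (pairIndex σ k) i + h = gridAngle h k (2 * i + σ + 1) := by
  have hle := A.index_le (2 * i + σ + 1) (by omega)
  rw [gridAngle, gridAngle, pairIndex, Nat.cast_sub (by omega)]
  push_cast
  ring

lemma pairConfig (A : NodeSide h x (2 * m + σ) k) (hh : 0 ≤ h) (hmσ : 1 ≤ m + σ) :
    PairConfig h x σ m (gridAngle h (pairIndex σ k)) where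
  start i hi := by
    have hle := A.index_le (2 * i + σ + 1) (by omega)
    exact mul_le_mul_of_nonneg_right (Nat.cast_le.2 (by rw [pairIndex]; omega)) hh
  gap i hi := by
    have hinner := A.gridAngle_pairIndex_add (i := i) (by omega)
    have hinner' := A.gridAngle_pairIndex_add hi
    have hgap := A.gridAngle_add_le hh (i := 2 * i + σ + 1) (by omega)
    have hgap' := A.gridAngle_add_le hh (i := 2 * i + σ + 2) (by omega)
    rw [show 2 * (i + 1) + σ + 1 = 2 * i + σ + 2 + 1 by ring] at hinner'
    linarith
  le_pi i hi := A.gridAngle_pairIndex_add hi ▸ (A.mem_visibleArc _ (by omega)).1.2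
  lt_cos i hi := A.gridAngle_pairIndex_add hi ▸ (A.mem_visibleArc _ (by omega)).2
  lt_one := A.lt_one (by omega)

lemma innerSum_le (A : NodeSide h x (2 * m + σ) k) (hh : 0 ≤ h) (hσ : σ ≤ 1) :
    innerSum h x σ m (gridAngle h (pairIndex σ k)) ≤ innerNodeSum h x σ m k := by
  refine add_le_add (sum_le_sum fun i hi => ?_) ?_
  · rw [A.gridAngle_pairIndex_add (mem_range.1 hi)]
  · interval_cases σ
    · simp
    · exact mul_le_mul_of_nonneg_left (nodeWeight_le_nodeWeight (A.mem_visibleArc 0 (by omega))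
        le_rfl (mul_nonneg (Nat.cast_nonneg _) hh)) (Nat.cast_nonneg _)

lemma outerNodeSum_le_outerSum (A : NodeSide h x (2 * m + σ) k) (hh : 0 < h) :
    outerNodeSum h x σ m k ≤ outerSum x m (gridAngle h (pairIndex σ k)) := by
  refine sum_le_sum fun i hi => ?_
  have hi := mem_range.1 hi
  have hgap := A.gridAngle_add_le hh.le (i := 2 * i + σ) (by omega)
  have hinner := A.gridAngle_pairIndex_add hi
  exact nodeWeight_le_nodeWeight ((A.pairConfig hh.le (by omega)).outer_mem hh hi)
    (mul_nonneg (Nat.cast_nonneg _) hh.le) (by linarith)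

lemma lone_nonneg (A : NodeSide h x (2 * m + σ) k) :
    0 ≤ (σ : ℝ) * nodeWeight x (gridAngle h k 0) := by
  rcases Nat.eq_zero_or_pos σ with rfl | hσ
  · simp
  · exact mul_nonneg (Nat.cast_nonneg _) (nodeWeight_pos (A.mem_visibleArc 0 (by omega))).le

lemma outerNodeSum_le_mul_innerNodeSum (A : NodeSide h x (2 * m + σ) k) (hh : 0 ≤ h)
    (hx : -1 ≤ x) : outerNodeSum h x σ m k ≤ (1 + cos h) / 2 * innerNodeSum h x σ m k := by
  have hcos := neg_one_le_cos h
  rw [innerNodeSum, mul_add, mul_sum]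
  refine le_add_of_le_of_nonneg (sum_le_sum fun i hi => ?_)
    (mul_nonneg (by linarith) A.lone_nonneg)
  have hi := mem_range.1 hi
  exact nodeWeight_le_mul_nodeWeight hx hh (mul_nonneg (Nat.cast_nonneg _) hh)
    (A.gridAngle_add_le hh (by omega)) (A.mem_visibleArc _ (by omega))

lemma outerNodeSum_nonneg (A : NodeSide h x (2 * m + σ) k) : 0 ≤ outerNodeSum h x σ m k :=
  sum_nonneg fun i hi =>
    (nodeWeight_pos (A.mem_visibleArc _ (by have := mem_range.1 hi; omega))).le

lemma outerNodeSum_pos (A : NodeSide h x (2 * m + σ) k) (hm : 1 ≤ m) :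
    0 < outerNodeSum h x σ m k :=
  sum_pos (fun i hi => nodeWeight_pos (A.mem_visibleArc _ (by have := mem_range.1 hi; omega)))
    ⟨0, mem_range.2 hm⟩

lemma innerNodeSum_pos (A : NodeSide h x (2 * m + σ) k) (hh : 0 ≤ h) (hσ : σ ≤ 1)
    (hmσ : 1 ≤ m + σ) : 0 < innerNodeSum h x σ m k :=
  ((A.pairConfig hh hmσ).innerSum_pos hmσ).trans_le (A.innerSum_le hh hσ)

end NodeSide

/-! ### The Lebesgue function in a gap between the nodes -/

/-- The Lebesgue function of Berrut's interpolant at the nodes `c 0, …, c n`. -/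
noncomputable def lebesgueFun (c : ℕ → ℝ) (n : ℕ) (x : ℝ) : ℝ :=
  (∑ i ∈ range (n + 1), 1 / |x - c i|) / |∑ j ∈ range (n + 1), (-1 : ℝ) ^ j / (x - c j)|

/-- The points over which the supremum in the Lebesgue constant is taken. -/
def NodeFree (c : ℕ → ℝ) (n : ℕ) (x : ℝ) : Prop :=
  c n < x ∧ x < c 0 ∧ ∀ i ≤ n, x ≠ c i

/-- The point `x` splits the nodes `c 0 > ⋯ > c n` into `2 * m + σ` nodes on its right, at the
angles `k i * h`, and `2 * p + τ` nodes on its left, at the angles `π - k' i * h`, both numbered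
from the outside. -/
structure NodeSplit (c : ℕ → ℝ) (n : ℕ) (h x : ℝ) (σ τ m p : ℕ) (k k' : ℕ → ℕ) : Prop where
  right_le_one : σ ≤ 1
  left_le_one : τ ≤ 1
  right_pos : 1 ≤ m + σ
  left_pos : 1 ≤ p + τ
  card_eq : 2 * m + σ + (2 * p + τ) = n + 1
  right : NodeSide h x (2 * m + σ) k
  left : NodeSide h (-x) (2 * p + τ) k'
  right_eq : ∀ i < 2 * m + σ, c i = cos (gridAngle h k i)
  left_eq : ∀ i < 2 * p + τ, c (n - i) = -cos (gridAngle h k' i)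

/-- The sum of the inner weights on both sides of `x`. -/
noncomputable def innerNodeTotal (h x : ℝ) (σ τ m p : ℕ) (k k' : ℕ → ℕ) : ℝ :=
  innerNodeSum h x σ m k + innerNodeSum h (-x) τ p k'

/-- The sum of the outer weights on both sides of `x`. -/
noncomputable def outerNodeTotal (h x : ℝ) (σ τ m p : ℕ) (k k' : ℕ → ℕ) : ℝ :=
  outerNodeSum h x σ m k + outerNodeSum h (-x) τ p k'

lemma lebesgueFun_nonneg (c : ℕ → ℝ) (n : ℕ) (x : ℝ) : 0 ≤ lebesgueFun c n x :=
  div_nonneg (sum_nonneg fun _ _ => by positivity) (abs_nonneg _)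

lemma add_div_sub_le_of_div_mul_le {I O I' O' : ℝ} (hI : 0 < I) (hO : O < I) (hO' : O' < I')
    (hratio : O / I * I' ≤ O') : (I + O) / (I - O) ≤ (I' + O') / (I' - O') := by
  rw [div_mul_eq_mul_div, div_le_iff₀ hI] at hratio
  rw [div_le_div_iff₀ (by linarith) (by linarith)]
  nlinarith

lemma add_div_sub_le {I O r : ℝ} (hI : 0 < I) (hr : r < 1) (hO : O ≤ r * I) :
    (I + O) / (I - O) ≤ 2 / (1 - r) := by
  have hpos : 0 < (1 - r) * I := mul_pos (sub_pos.2 hr) hI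
  rw [div_le_div_iff₀ (by linarith) (sub_pos.2 hr)]
  nlinarith

namespace NodeSplit

variable {h x : ℝ} {σ τ m p n : ℕ} {k k' : ℕ → ℕ} {c : ℕ → ℝ}

lemma nodeFree (P : NodeSplit c n h x σ τ m p k k') : NodeFree c n x := by
  have hright : ∀ i < 2 * m + σ, x < c i := fun i hi =>
    P.right_eq i hi ▸ (P.right.mem_visibleArc i hi).2
  have hleft : ∀ i < 2 * p + τ, c (n - i) < x := fun i hi =>
    P.left_eq i hi ▸ neg_lt.1 (P.left.mem_visibleArc i hi).2
  have hmσ := P.right_pos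
  have hpτ := P.left_pos
  have hcard := P.card_eq
  refine ⟨hleft 0 (by omega), hright 0 (by omega), fun i hi => ?_⟩
  by_cases hiL : i < 2 * m + σ
  · exact (hright i hiL).ne
  · have hlt := hleft (n - i) (by omega)
    rw [Nat.sub_sub_self hi] at hlt
    exact hlt.ne'

lemma innerNodeTotal_pos (P : NodeSplit c n h x σ τ m p k k') (hh : 0 ≤ h) :
    0 < innerNodeTotal h x σ τ m p k k' :=
  add_pos (P.right.innerNodeSum_pos hh P.right_le_one P.right_pos)
    (P.left.innerNodeSum_pos hh P.left_le_one P.left_pos)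

lemma outerNodeTotal_le (P : NodeSplit c n h x σ τ m p k k') (hh : 0 ≤ h) :
    outerNodeTotal h x σ τ m p k k' ≤ (1 + cos h) / 2 * innerNodeTotal h x σ τ m p k k' := by
  have hx := P.right.lt_one (by linarith [P.right_pos])
  have hx' := P.left.lt_one (by linarith [P.left_pos])
  rw [outerNodeTotal, innerNodeTotal, mul_add]
  exact add_le_add (P.right.outerNodeSum_le_mul_innerNodeSum hh (by linarith))
    (P.left.outerNodeSum_le_mul_innerNodeSum hh (by linarith))

lemma outerNodeTotal_lt (P : NodeSplit c n h x σ τ m p k k') (hh : 0 < h) (hπ : h ≤ π) :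
    outerNodeTotal h x σ τ m p k k' < innerNodeTotal h x σ τ m p k k' :=
  (P.outerNodeTotal_le hh.le).trans_lt
    (mul_lt_of_lt_one_left (P.innerNodeTotal_pos hh.le) (by linarith [one_sub_cos_pos hh hπ]))

lemma outerNodeTotal_pos (P : NodeSplit c n h x σ τ m p k k') (hmp : 1 ≤ m + p) :
    0 < outerNodeTotal h x σ τ m p k k' := by
  rcases Nat.eq_zero_or_pos m with hm | hm
  · exact add_pos_of_nonneg_of_pos P.right.outerNodeSum_nonneg
      (P.left.outerNodeSum_pos (by omega))
  · exact add_pos_of_pos_of_nonneg (P.right.outerNodeSum_pos hm) P.left.outerNodeSum_nonneg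

lemma lebesgueFun_eq (P : NodeSplit c n h x σ τ m p k k') (hh : 0 < h) (hπ : h ≤ π) :
    lebesgueFun c n x =
      (innerNodeTotal h x σ τ m p k k' + outerNodeTotal h x σ τ m p k k') /
        (innerNodeTotal h x σ τ m p k k' - outerNodeTotal h x σ τ m p k k') := by
  rw [lebesgueFun, sum_one_div_abs_eq P.right_le_one P.left_le_one P.card_eq P.right P.left
      P.right_eq P.left_eq,
    abs_sum_neg_one_pow_div_eq P.right_le_one P.left_le_one P.card_eq P.right_eq P.left_eq,
    ← innerNodeTotal, ← outerNodeTotal, abs_of_pos (sub_pos.2 (P.outerNodeTotal_lt hh hπ))]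

lemma lebesgueFun_le (P : NodeSplit c n h x σ τ m p k k') (hh : 0 < h) (hπ : h ≤ π) :
    lebesgueFun c n x ≤ 2 / (1 - (1 + cos h) / 2) := by
  rw [P.lebesgueFun_eq hh hπ]
  exact add_div_sub_le (P.innerNodeTotal_pos hh.le) (by linarith [one_sub_cos_pos hh hπ])
    (P.outerNodeTotal_le hh.le)

lemma hasFlushConfig (P : NodeSplit c n h x σ τ m p k k') (hh : 0 < h) (hπ : h ≤ π / 3)
    (hmp : 1 ≤ m + p) :
    HasFlushConfig (outerNodeTotal h x σ τ m p k k' / innerNodeTotal h x σ τ m p k k') h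
      (n + 1) := by
  have hI := P.innerNodeTotal_pos hh.le
  have hρ := div_pos (P.outerNodeTotal_pos hmp) hI
  rw [← P.card_eq]
  refine hasFlushConfig_of_grid hρ hh hπ P.right_le_one P.left_le_one P.right_pos P.left_pos hmp
    (P.right.pairConfig hh.le P.right_pos) (P.left.pairConfig hh.le P.left_pos) ?_
  rw [sideValue_add_sideValue, sub_nonneg]
  calc _ ≤ outerNodeTotal h x σ τ m p k k' / innerNodeTotal h x σ τ m p k k' *
          innerNodeTotal h x σ τ m p k k' :=
        mul_le_mul_of_nonneg_left (add_le_add (P.right.innerSum_le hh.le P.right_le_one)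
          (P.left.innerSum_le hh.le P.left_le_one)) hρ.le
    _ = outerNodeTotal h x σ τ m p k k' := div_mul_cancel₀ _ hI.ne'
    _ ≤ _ := add_le_add (P.right.outerNodeSum_le_outerSum hh) (P.left.outerNodeSum_le_outerSum hh)

end NodeSplit

section

variable {h x : ℝ} {σ m : ℕ}

lemma gridAngle_id_pair (h : ℝ) (σ i : ℕ) : gridAngle h id (2 * i + σ) = flushAngle h σ i := by
  rw [gridAngle, flushAngle, id]
  push_cast
  ring

lemma gridAngle_id_succ (h : ℝ) (i : ℕ) : gridAngle h id (i + 1) = gridAngle h id i + h := by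
  simp only [gridAngle, id, Nat.cast_add_one]
  ring

lemma innerNodeSum_id (h x : ℝ) (σ m : ℕ) :
    innerNodeSum h x σ m id = innerSum h x σ m (flushAngle h σ) := by
  simp only [innerNodeSum, innerSum, gridAngle_id_succ, gridAngle_id_pair]
  simp [gridAngle]

lemma outerNodeSum_id (h x : ℝ) (σ m : ℕ) :
    outerNodeSum h x σ m id = outerSum x m (flushAngle h σ) := by
  simp only [outerNodeSum, outerSum, gridAngle_id_pair]

lemma PairConfig.nodeSide_id (A : PairConfig h x σ m (flushAngle h σ)) (hh : 0 < h)
    (hσ : σ ≤ 1) : NodeSide h x (2 * m + σ) id where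
  lt i j hij _ := hij
  mem_visibleArc i hi := by
    rcases m with _ | m
    · obtain rfl : i = 0 := by omega
      exact mem_visibleArc (by simp [gridAngle]) (by simp [gridAngle, pi_pos.le])
        (by simpa [gridAngle] using A.lt_one)
    · have hlast := A.inner_mem hh (Nat.lt_succ_self m)
      rw [← gridAngle_id_pair, ← gridAngle_id_succ] at hlast
      exact mem_visibleArc_of_le hlast (mul_nonneg (Nat.cast_nonneg _) hh.le)
        (mul_le_mul_of_nonneg_right (Nat.cast_le.2 (by simp only [id]; omega)) hh.le)

end

/-! ### Chebyshev nodes -/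

/-- The index in `S` of the `i`-th node. -/
def nodeIndex (S : Finset ℕ) (i : ℕ) : ℕ := (S.sort (· ≤ ·)).getD i 0

/-- The indices of the nodes `n, n - 1, …` counted from the left endpoint. -/
def reflectIndex (N n : ℕ) (k : ℕ → ℕ) (i : ℕ) : ℕ := N - k (n - i)

/-- The index set that is left after removing the `s` consecutive indices above `k`. -/
def gapIndices (N s k : ℕ) : Finset ℕ := range (k + 1) ∪ Icc (k + s + 1) N

section

variable {x : ℝ} {i k n s N : ℕ} {S : Finset ℕ}

lemma berrutLebesgueConst_eq (N n : ℕ) (S : Finset ℕ) :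
    berrutLebesgueConst N n S =
      sSup {L | ∃ x, NodeFree (chebNode N S) n x ∧ L = lebesgueFun (chebNode N S) n x} := by
  simp only [berrutLebesgueConst, NodeFree, lebesgueFun, and_assoc]

lemma berrutLebesgueConst_nonneg (N n : ℕ) (S : Finset ℕ) : 0 ≤ berrutLebesgueConst N n S := by
  rw [berrutLebesgueConst_eq]
  refine Real.sSup_nonneg ?_
  rintro _ ⟨x, -, rfl⟩
  exact lebesgueFun_nonneg _ n x

lemma chebNode_eq (N : ℕ) (S : Finset ℕ) (i : ℕ) :
    chebNode N S i = cos (gridAngle (π / N) (nodeIndex S) i) := by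
  rw [chebNode, gridAngle, nodeIndex, mul_div_assoc]

lemma nodeIndex_eq_orderEmbOfFin (hS : S.card = n + 1) (i : Fin (n + 1)) :
    nodeIndex S i = S.orderEmbOfFin hS i := by
  have hi : (i : ℕ) < (S.sort (· ≤ ·)).length := by
    rw [length_sort, hS]
    exact i.2
  rw [nodeIndex, orderEmbOfFin_apply, List.getD_eq_getElem _ _ hi]
  rfl

lemma nodeIndex_strictMonoOn (hS : S.card = n + 1) : StrictMonoOn (nodeIndex S) (Set.Iic n) := by
  intro i hi j hj hij
  have hlt := (S.orderEmbOfFin hS).strictMono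
    (show (⟨i, Nat.lt_succ_of_le hi⟩ : Fin (n + 1)) < ⟨j, Nat.lt_succ_of_le hj⟩ from hij)
  rwa [← nodeIndex_eq_orderEmbOfFin, ← nodeIndex_eq_orderEmbOfFin] at hlt

lemma nodeIndex_le (hS : S.card = n + 1) (hSN : S ⊆ range (N + 1)) (hi : i ≤ n) :
    nodeIndex S i ≤ N := by
  have hmem := mem_range.1 (hSN (S.orderEmbOfFin_mem hS ⟨i, Nat.lt_succ_of_le hi⟩))
  rw [← nodeIndex_eq_orderEmbOfFin] at hmem
  exact Nat.lt_succ_iff.1 hmem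

lemma nodeIndex_eq_of_strictMono (hS : S.card = n + 1) {f : ℕ → ℕ} (hf : ∀ i ≤ n, f i ∈ S)
    (hmono : StrictMono f) (hi : i ≤ n) : nodeIndex S i = f i := by
  have huniq := orderEmbOfFin_unique hS (f := fun j : Fin (n + 1) => f j)
    (fun j => hf j (by omega)) fun a b hab => hmono hab
  exact (nodeIndex_eq_orderEmbOfFin hS ⟨i, Nat.lt_succ_of_le hi⟩).trans
    (congrFun huniq ⟨i, Nat.lt_succ_of_le hi⟩).symm

lemma gridAngle_le_pi {k : ℕ → ℕ} (hki : k i ≤ N) : gridAngle (π / N) k i ≤ π := by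
  rw [gridAngle, mul_div_left_comm]
  exact mul_le_of_le_one_right pi_pos.le
    (div_le_one_of_le₀ (Nat.cast_le.2 hki) (Nat.cast_nonneg _))

lemma cos_gridAngle_reflectIndex (hN : 1 ≤ N) {k : ℕ → ℕ} (hk : k (n - i) ≤ N) :
    cos (gridAngle (π / N) (reflectIndex N n k) i) = -cos (gridAngle (π / N) k (n - i)) := by
  have hN0 : (N : ℝ) ≠ 0 := by positivity
  rw [← cos_pi_sub, gridAngle, gridAngle, reflectIndex, Nat.cast_sub hk]
  congr 1
  field_simp

lemma chebNode_antitoneOn (hS : S.card = n + 1) (hSN : S ⊆ range (N + 1)) :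
    AntitoneOn (chebNode N S) (Set.Iic n) := by
  intro i hi j hj hij
  rw [chebNode_eq, chebNode_eq]
  exact cos_le_cos_of_nonneg_of_le_pi (mul_nonneg (Nat.cast_nonneg _) (by positivity))
    (gridAngle_le_pi (nodeIndex_le hS hSN hj))
    (mul_le_mul_of_nonneg_right
      (Nat.cast_le.2 ((nodeIndex_strictMonoOn hS).monotoneOn hi hj hij)) (by positivity))

lemma NodeFree.exists_split_index {c : ℕ → ℝ} (hx : NodeFree c n x)
    (hc : AntitoneOn c (Set.Iic n)) :
    ∃ L, 1 ≤ L ∧ L ≤ n ∧ (∀ i < L, x < c i) ∧ ∀ i, L ≤ i → i ≤ n → c i < x := by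
  classical
  obtain ⟨hlast, hfirst, hne⟩ := hx
  have hex : ∃ i, c i < x := ⟨n, hlast⟩
  have hle : Nat.find hex ≤ n := Nat.find_min' hex hlast
  refine ⟨Nat.find hex, ?_, hle, fun i hi => ?_, fun i hLi hi => ?_⟩
  · rw [Nat.one_le_iff_ne_zero, Ne, Nat.find_eq_zero]
    exact hfirst.not_gt
  · exact (not_lt.1 (Nat.find_min hex hi)).lt_of_ne (hne i (hi.le.trans hle))
  · exact (hc hle hi hLi).trans_lt (Nat.find_spec hex)

lemma nodeSide_nodeIndex (hS : S.card = n + 1) (hSN : S ⊆ range (N + 1)) {L : ℕ}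
    (hL : L ≤ n + 1) (hx : ∀ i < L, x < chebNode N S i) :
    NodeSide (π / N) x L (nodeIndex S) where
  lt i j hij hj := nodeIndex_strictMonoOn hS (by simp; omega) (by simp; omega) hij
  mem_visibleArc i hi := mem_visibleArc (mul_nonneg (Nat.cast_nonneg _) (by positivity))
    (gridAngle_le_pi (nodeIndex_le hS hSN (by omega))) (chebNode_eq N S i ▸ hx i hi)

lemma nodeSide_reflectIndex (hS : S.card = n + 1) (hSN : S ⊆ range (N + 1)) (hN : 1 ≤ N) {L : ℕ}
    (hL : L ≤ n + 1) (hx : ∀ i < L, chebNode N S (n - i) < x) :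
    NodeSide (π / N) (-x) L (reflectIndex N n (nodeIndex S)) where
  lt i j hij hj := by
    have hlt := nodeIndex_strictMonoOn hS (a := n - j) (b := n - i) (by simp) (by simp) (by omega)
    have hle := nodeIndex_le hS hSN (Nat.sub_le n i)
    rw [reflectIndex, reflectIndex]
    omega
  mem_visibleArc i hi := by
    refine mem_visibleArc (mul_nonneg (Nat.cast_nonneg _) (by positivity))
      (gridAngle_le_pi (Nat.sub_le _ _)) ?_
    rw [cos_gridAngle_reflectIndex hN (nodeIndex_le hS hSN (Nat.sub_le n i)), ← chebNode_eq]
    exact neg_lt_neg (hx i hi)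

lemma NodeFree.exists_nodeSplit (hx : NodeFree (chebNode N S) n x) (hS : S.card = n + 1)
    (hSN : S ⊆ range (N + 1)) (hN : 1 ≤ N) :
    ∃ σ τ m p, NodeSplit (chebNode N S) n (π / N) x σ τ m p (nodeIndex S)
      (reflectIndex N n (nodeIndex S)) := by
  obtain ⟨L, hL, hLn, hright, hleft⟩ := hx.exists_split_index (chebNode_antitoneOn hS hSN)
  have hsplit : 2 * (L / 2) + L % 2 = L := Nat.div_add_mod L 2
  have hsplit' : 2 * ((n + 1 - L) / 2) + (n + 1 - L) % 2 = n + 1 - L := Nat.div_add_mod _ 2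
  refine ⟨L % 2, (n + 1 - L) % 2, L / 2, (n + 1 - L) / 2, by omega, by omega, by omega, by omega,
    by omega, ?_, ?_, fun i _ => chebNode_eq N S i, fun i _ => ?_⟩
  · rw [hsplit]
    exact nodeSide_nodeIndex hS hSN (by omega) hright
  · rw [hsplit']
    exact nodeSide_reflectIndex hS hSN hN (by omega) fun i hi => hleft _ (by omega) (by omega)
  · rw [cos_gridAngle_reflectIndex hN (nodeIndex_le hS hSN (by omega)), neg_neg, chebNode_eq]

lemma card_gapIndices (hk : k + s ≤ N) : (gapIndices N s k).card = N - s + 1 := by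
  rw [gapIndices, card_union_of_disjoint, card_range, Nat.card_Icc]
  · omega
  · rw [disjoint_left]
    intro a ha hb
    have := mem_range.1 ha
    have := mem_Icc.1 hb
    omega

lemma gapIndices_subset (hk : k + s ≤ N) : gapIndices N s k ⊆ range (N + 1) := by
  intro a ha
  simp only [gapIndices, mem_union, mem_range, mem_Icc] at ha ⊢
  omega

lemma nodeIndex_gapIndices (hk : k + s ≤ N) (hi : i ≤ N - s) :
    nodeIndex (gapIndices N s k) i = if i ≤ k then i else i + s := by
  refine nodeIndex_eq_of_strictMono (f := fun i => if i ≤ k then i else i + s)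
    (card_gapIndices hk) (fun i hi => ?_) (fun a b hab => ?_) hi
  · simp only [gapIndices, mem_union, mem_range, mem_Icc]
    split_ifs <;> omega
  · dsimp only
    split_ifs <;> omega

lemma chebNode_gapIndices_of_le (hk : k + s ≤ N) (hi : i ≤ k) :
    chebNode N (gapIndices N s k) i = cos (gridAngle (π / N) id i) := by
  rw [chebNode_eq, gridAngle, nodeIndex_gapIndices hk (by omega), if_pos hi, gridAngle, id]

lemma chebNode_gapIndices_sub (hki : k + s + i < N) :
    chebNode N (gapIndices N s k) (N - s - i) = -cos (gridAngle (π / N) id i) := by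
  have hreflect : reflectIndex N (N - s) (nodeIndex (gapIndices N s k)) i = i := by
    rw [reflectIndex, nodeIndex_gapIndices (by omega) (by omega), if_neg (by omega)]
    omega
  rw [chebNode_eq, ← neg_eq_iff_eq_neg, ← cos_gridAngle_reflectIndex (by omega), gridAngle,
    hreflect, gridAngle, id]
  exact nodeIndex_le (card_gapIndices (by omega)) (gapIndices_subset (by omega)) (Nat.sub_le _ _)

lemma HasFlushConfig.exists_nodeSplit {ρ : ℝ} (hF : HasFlushConfig ρ (π / N) (N - s + 1))
    (hsN : s < N) :
    ∃ k < N - s, ∃ (σ τ m p : ℕ) (y : ℝ),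
      NodeSplit (chebNode N (gapIndices N s k)) (N - s) (π / N) y σ τ m p id id ∧
        ρ * innerNodeTotal (π / N) y σ τ m p id id ≤ outerNodeTotal (π / N) y σ τ m p id id := by
  obtain ⟨σ, τ, m, p, y, hσ, hτ, hcard, hmσ, hpτ, A, B, hvalue⟩ := hF
  have hh : 0 < π / N := div_pos pi_pos (Nat.cast_pos.2 (by omega))
  refine ⟨2 * m + σ - 1, by omega, σ, τ, m, p, y, ⟨hσ, hτ, hmσ, hpτ, hcard, A.nodeSide_id hh hσ,
    B.nodeSide_id hh hτ, fun i hi => chebNode_gapIndices_of_le (by omega) (by omega),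
    fun i hi => chebNode_gapIndices_sub (by omega)⟩, ?_⟩
  rw [sideValue_add_sideValue, sub_nonneg] at hvalue
  simpa only [innerNodeTotal, outerNodeTotal, innerNodeSum_id, outerNodeSum_id, innerTotal,
    outerTotal] using hvalue

lemma bddAbove_lebesgueFun (hS : S.card = n + 1) (hSN : S ⊆ range (N + 1)) (hN : 1 ≤ N) :
    BddAbove {L | ∃ x, NodeFree (chebNode N S) n x ∧ L = lebesgueFun (chebNode N S) n x} := by
  refine ⟨2 / (1 - (1 + cos (π / N)) / 2), ?_⟩
  rintro _ ⟨x, hx, rfl⟩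
  obtain ⟨σ, τ, m, p, P⟩ := hx.exists_nodeSplit hS hSN hN
  exact P.lebesgueFun_le (by positivity) (div_le_self pi_pos.le (Nat.one_le_cast.2 hN))

lemma lebesgueFun_le_berrutLebesgueConst (hS : S.card = n + 1) (hSN : S ⊆ range (N + 1))
    (hN : 1 ≤ N) (hx : NodeFree (chebNode N S) n x) :
    lebesgueFun (chebNode N S) n x ≤ berrutLebesgueConst N n S := by
  rw [berrutLebesgueConst_eq]
  exact le_csSup (bddAbove_lebesgueFun hS hSN hN) ⟨x, hx, rfl⟩

lemma exists_lebesgueFun_le_gapIndices (hN : 3 ≤ N) (hsN : s + 2 ≤ N) (hS : S.card = N - s + 1)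
    (hSN : S ⊆ range (N + 1)) (hx : NodeFree (chebNode N S) (N - s) x) :
    ∃ k < N - s, ∃ y, NodeFree (chebNode N (gapIndices N s k)) (N - s) y ∧
      lebesgueFun (chebNode N S) (N - s) x ≤
        lebesgueFun (chebNode N (gapIndices N s k)) (N - s) y := by
  have hN3 : (3 : ℝ) ≤ N := by exact_mod_cast hN
  have hh : 0 < π / N := by positivity
  have hπ3 : π / N ≤ π / 3 := div_le_div_of_nonneg_left pi_pos.le (by norm_num) hN3
  have hπ : π / N ≤ π := hπ3.trans (by linarith [pi_pos])
  obtain ⟨σ, τ, m, p, P⟩ := hx.exists_nodeSplit hS hSN (by omega)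
  have hmp : 1 ≤ m + p := by
    have := P.card_eq
    have := P.right_le_one
    have := P.left_le_one
    omega
  obtain ⟨k, hk, _, _, _, _, y, Q, hQ⟩ := (P.hasFlushConfig hh hπ3 hmp).exists_nodeSplit (by omega)
  refine ⟨k, hk, y, Q.nodeFree, ?_⟩
  rw [P.lebesgueFun_eq hh hπ, Q.lebesgueFun_eq hh hπ]
  exact add_div_sub_le_of_div_mul_le (P.innerNodeTotal_pos hh.le) (P.outerNodeTotal_lt hh hπ)
    (Q.outerNodeTotal_lt hh hπ) hQ

end

end Berrut

/-- The Lebesgue constant of Berrut's interpolant over `(n+1)`-element subsets of the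
Chebyshev points of the second kind is maximized when the `s` removed points are
consecutive. -/
theorem berrut_lebesgue_worst_case_consecutive
    (N s : ℕ) (hs1 : 1 ≤ s) (hs2 : s + 2 ≤ N) (n : ℕ) (hn : n = N - s) :
    ∀ S : Finset ℕ, S ⊆ Finset.range (N + 1) → S.card = n + 1 →
      ∃ kbar : ℕ, kbar ≤ N - s - 1 ∧
        berrutLebesgueConst N n S ≤
          berrutLebesgueConst N n (Finset.range (kbar + 1) ∪ Finset.Icc (kbar + s + 1) N) := by
  intro S hSN hS
  subst hn
  obtain ⟨kbar, hkbar, hmax⟩ := exists_max_image (range (N - s))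
    (fun k => berrutLebesgueConst N (N - s) (Berrut.gapIndices N s k))
    ⟨0, mem_range.2 (by omega)⟩
  refine ⟨kbar, Nat.le_sub_one_of_lt (mem_range.1 hkbar), ?_⟩
  rw [Berrut.berrutLebesgueConst_eq N _ S]
  refine Real.sSup_le ?_ (Berrut.berrutLebesgueConst_nonneg _ _ _)
  rintro _ ⟨x, hx, rfl⟩
  obtain ⟨k, hk, y, hy, hle⟩ :=
    Berrut.exists_lebesgueFun_le_gapIndices (by omega) hs2 hS hSN hx
  have hle' := Berrut.lebesgueFun_le_berrutLebesgueConst (Berrut.card_gapIndices (by omega))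
    (Berrut.gapIndices_subset (by omega)) (by omega) hy
  exact hle.trans (hle'.trans (hmax k (mem_range.2 hk)))
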